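/- Let S ⊂ P⁴_ℚ be the quartic del Pezzo surface defined by x₀² + x₀x₃ + x₂x₄ = 0 and x₁x₃ − x₂² = 0, and let U be the complement in S of the three lines {x₀=x₁=x₂=0}, {x₀+x₃=x₁=x₂=0}, {x₀=x₂=x₃=0}. For x ∈ U(ℚ) let H(x) = max{|x₀|,…,|x₄|} where (x₀,…,x₄) are coprime integer coordinates of x, and for B ≥ 3 let N(B) = #{x ∈ U(ℚ) : H(x) ≤ B}. Then N(B) = (1/8640)·(∏_p (1−1/p)⁶·(1 + 6/p + 1/p²))·ω_∞·B·(log B)⁵ + O(B·(log B)⁴·(log log B)²) as B → ∞, where the product runs over all primes p and ω_∞ = ∫ 1/(x₁|x₂|) dx₀dx₁dx₂ over {(x₀,x₁,x₂) ∈ ℝ³ : 0 ≤ x₁ ≤ 1, |x₀| ≤ 1, |x₂| ≤ 1, x₂² ≤ x₁, |x₀²x₁ + x₀x₂²| ≤ x₁|x₂|}. -/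

import Mathlib

/-!
The points of `U` are counted on a universal torsor. The involution `x₂ ↦ -x₂`, `x₄ ↦ -x₄` reduces
the count to twice the count of points with `x₁, x₂ > 0` (`NUH_eq`), since `x₁` and `x₂` do not
vanish on `U`. Such points correspond bijectively (`torMap_bij`) to positive integers
`s, t, u, a₁, a₂, b₁, b₂`, the entries `n 0, …, n 6` of a vector, and integers `y, z` subject to
coprimality conditions and to the torsor equation `a₁ y + a₂ z + s u² b₁ b₂³ = 0`, through
`x₁ = s² t³ u a₁² a₂²`, `x₂ = s² t² u² a₁ a₂ b₁ b₂²`, `x₃ = s² t u³ b₁² b₂⁴`,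
`x₀ = a₁ y s t u b₁ b₂`, `x₄ = b₁ y z`.

For fixed `n`, the torsor equation is a congruence condition on `y`, and the height condition
restricts `x₀` to a set of length `B · phi2 (x₃ / B) (x₂ / B)`. Sieving the coprimality conditions
gives the number of `y` with an error that is bounded in terms of the prime factors of `n`
(`count_y`), and these errors add up to `O(B (log B)⁴)` (`error_sum`).

In the main term `MT`, the local conditions at each prime are expanded by Möbius inversion over the
sets of variables divisible by that prime (`MT_expand`). What remains are sums `SD B d` of an
archimedean weight over multiples of `d`, and these are asymptotically independent of `d`, up to a factor
`1 + log ∏ d i` in the error (`SD_asymp`). In terms of `σ = √(x₁ / B)` and `τ = √(x₃ / B)`, the sums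
over one of `a₁, a₂`, which enters `σ` linearly, and over `b₁`, which enters `τ` linearly, are
Riemann sums for a double integral `Wc` (`riemann`, `inner_four`), and the remaining five variables
contribute `(log B)⁵ / 4320`, from the integral of a polynomial over a polytope (`triple_sum`, `rr_asymp`). Summing the Möbius coefficients at `p` gives the Euler
factor (`hloc_local`), and the truncation of the Euler product is harmless (`euler_tail`).

Finally `omegaInf = 4 * Wc` by Tonelli and the substitution `x₁ = σ²`, `x₂ = ± σ τ`
(`omegaInf_Wc`), so that the constant is `2 · (1 / 4320) · (1 / 4) = 1 / 8640`. The
error obtained is `O(B (log B)⁴)`; since `log log B` is bounded below by a positive constant for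
`B ≥ 3`, this is stronger than the bound to be shown.
-/

open MeasureTheory

/-- `v` is a primitive integral vector: the gcd of its coordinates is `1`. -/
def Primitive (v : Fin 5 → ℤ) : Prop := Finset.univ.gcd v = 1

/-- `v` satisfies the equations of the quartic del Pezzo surface
`x₀² + x₀x₃ + x₂x₄ = x₁x₃ − x₂² = 0` and lies on none of its three lines. -/
def OnU (v : Fin 5 → ℤ) : Prop :=
  v 0 ^ 2 + v 0 * v 3 + v 2 * v 4 = 0 ∧ v 1 * v 3 - v 2 ^ 2 = 0 ∧
  ¬(v 0 = 0 ∧ v 1 = 0 ∧ v 2 = 0) ∧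
  ¬(v 0 + v 3 = 0 ∧ v 1 = 0 ∧ v 2 = 0) ∧
  ¬(v 0 = 0 ∧ v 2 = 0 ∧ v 3 = 0)

/-- Identifying an integral vector with its negative; a rational point of `P⁴` corresponds to a
primitive integral vector, unique up to sign. -/
def signSetoid : Setoid (Fin 5 → ℤ) where
  r v w := v = w ∨ v = -w
  iseqv := by
    constructor
    · exact fun v => Or.inl rfl
    · rintro v w (h | h)
      · exact Or.inl h.symm
      · exact Or.inr (by rw [h, neg_neg])
    · rintro u v w (h₁ | h₁) (h₂ | h₂) <;> simp [h₁, h₂]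

/-- The primitive integral vectors representing rational points of height at most `B` on the
complement `U` of the lines on the surface. -/
def countSet (B : ℝ) : Set (Fin 5 → ℤ) :=
  {v | Primitive v ∧ OnU v ∧ ∀ j : Fin 5, (|v j| : ℝ) ≤ B}

/-- `N(B)`, the number of rational points of height at most `B` on `U`: primitive
integral vectors in `countSet B`, counted up to sign. -/
noncomputable def NUH (B : ℝ) : ℕ :=
  Nat.card (Quotient.mk signSetoid '' countSet B : Set (Quotient signSetoid))

/-- The domain of integration of the archimedean density `ω_∞`. -/
def omegaSet : Set (Fin 3 → ℝ) :=
  {x | 0 ≤ x 1 ∧ x 1 ≤ 1 ∧ |x 0| ≤ 1 ∧ |x 2| ≤ 1 ∧ x 2 ^ 2 ≤ x 1 ∧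
    |x 0 ^ 2 * x 1 + x 0 * x 2 ^ 2| ≤ x 1 * |x 2|}

/-- The archimedean density `ω_∞ = ∫ 1/(x₁|x₂|) dx₀ dx₁ dx₂`. -/
noncomputable def omegaInf : ℝ := ∫ x in omegaSet, (x 1 * |x 2|)⁻¹


/-! ### The torsor: parametrising solutions of the equations -/

lemma gcd_split (m n : ℤ) (hm : 0 < m) :
    ∃ d m' n' : ℤ, 0 < d ∧ 0 < m' ∧ m = d * m' ∧ n = d * n' ∧ IsCoprime m' n' := by
  have hg : 0 < m.gcd n := Int.gcd_pos_of_ne_zero_left _ hm.ne'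
  obtain ⟨m', n', h1, h2, h3⟩ := Int.exists_gcd_one hg
  have hg' : (0:ℤ) < (m.gcd n : ℤ) := by exact_mod_cast hg
  refine ⟨(m.gcd n : ℤ), m', n', hg', ?_, by rw [mul_comm]; exact h2, by rw [mul_comm]; exact h3,
    Int.isCoprime_iff_gcd_eq_one.2 h1⟩
  rw [h2] at hm
  exact pos_of_mul_pos_left hm hg'.le

/-- A rational root `x / n` of a monic integral quadratic polynomial is an integer. -/
lemma dvd_of_quadratic (n x c e : ℤ) (hn : 0 < n) (h : x ^ 2 + n * x * c + n ^ 2 * e = 0) :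
    n ∣ x := by
  obtain ⟨d, m, k, hd, hm, rfl, rfl, hc⟩ := gcd_split n x hn
  have h1 : d ^ 2 * (k ^ 2 + m * k * c + m ^ 2 * e) = 0 := by linear_combination h
  have h2 : k ^ 2 + m * k * c + m ^ 2 * e = 0 := by
    rcases mul_eq_zero.1 h1 with h | h
    · exact absurd h (by positivity)
    · exact h
  have h3 : m ∣ k ^ 2 := ⟨-(k * c + m * e), by linear_combination h2⟩
  have h4 : IsUnit m := hc.pow_right.isUnit_of_dvd' dvd_rfl h3
  have h5 : m = 1 := by
    rcases Int.isUnit_iff.1 h4 with h | h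
    · exact h
    · omega
  subst h5; simp

lemma sq_of_coprime_pos {a b c : ℤ} (ha : 0 < a) (h : IsCoprime a b) (he : a * b = c ^ 2) :
    ∃ s : ℤ, 0 < s ∧ a = s ^ 2 := by
  obtain ⟨s, hs | hs⟩ := Int.sq_of_isCoprime h he
  · refine ⟨|s|, ?_, by rw [sq_abs]; exact hs⟩
    rw [abs_pos]; rintro rfl; simp at hs; omega
  · nlinarith [sq_nonneg s]

/-- The coprimality conditions among the seven torsor variables. -/
def Cop7 (s t u a₁ a₂ b₁ b₂ : ℤ) : Prop :=
  (IsCoprime s a₁ ∧ IsCoprime s a₂ ∧ IsCoprime s b₁ ∧ IsCoprime s b₂) ∧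
  (IsCoprime t u ∧ IsCoprime t b₁ ∧ IsCoprime t b₂) ∧
  (IsCoprime u a₁ ∧ IsCoprime u a₂ ∧ IsCoprime u b₁) ∧
  (IsCoprime a₁ a₂ ∧ IsCoprime a₁ b₁ ∧ IsCoprime a₁ b₂) ∧
  (IsCoprime a₂ b₁ ∧ IsCoprime a₂ b₂)

/-- Every primitive integral point with `x₁, x₂, x₃ > 0` lifts to the universal torsor. -/
lemma torsor_exists (x₀ x₁ x₂ x₃ x₄ : ℤ) (h1 : 0 < x₁) (h2 : 0 < x₂) (h3 : 0 < x₃)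
    (e1 : x₀ ^ 2 + x₀ * x₃ + x₂ * x₄ = 0) (e2 : x₁ * x₃ = x₂ ^ 2)
    (hp : ∀ p : ℤ, Prime p → p ∣ x₀ → p ∣ x₁ → p ∣ x₂ → p ∣ x₃ → p ∣ x₄ → False) :
    ∃ s t u a₁ a₂ b₁ b₂ y z : ℤ, (0 < s ∧ 0 < t ∧ 0 < u ∧ 0 < a₁ ∧ 0 < a₂ ∧ 0 < b₁ ∧ 0 < b₂) ∧
      x₀ = a₁ * y * (s * t * u * b₁ * b₂) ∧ x₁ = s ^ 2 * t ^ 3 * u * a₁ ^ 2 * a₂ ^ 2 ∧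
      x₂ = s ^ 2 * t ^ 2 * u ^ 2 * a₁ * a₂ * b₁ * b₂ ^ 2 ∧
      x₃ = s ^ 2 * t * u ^ 3 * b₁ ^ 2 * b₂ ^ 4 ∧ x₄ = b₁ * y * z ∧
      a₁ * y + a₂ * z + s * u ^ 2 * b₁ * b₂ ^ 3 = 0 ∧
      Cop7 s t u a₁ a₂ b₁ b₂ ∧ IsCoprime y s ∧ IsCoprime y t ∧ IsCoprime y u ∧ IsCoprime y b₂ ∧
      IsCoprime z t := by
  obtain ⟨g, A, C, hg, hA, rfl, rfl, hAC⟩ := gcd_split x₁ x₃ h1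
  have hC : 0 < C := pos_of_mul_pos_right h3 hg.le
  obtain ⟨k, rfl⟩ : g ∣ x₂ :=
    (Int.pow_dvd_pow_iff two_ne_zero).1 ⟨A * C, by linear_combination -e2⟩
  have hk : 0 < k := pos_of_mul_pos_right h2 hg.le
  have hk2 : A * C = k ^ 2 := by
    have : g ^ 2 * (A * C) = g ^ 2 * k ^ 2 := by linear_combination e2
    exact mul_left_cancel₀ (by positivity) this
  obtain ⟨a, ha, rfl⟩ := sq_of_coprime_pos hA hAC hk2
  obtain ⟨b, hb, rfl⟩ := sq_of_coprime_pos hC hAC.symm (by rw [mul_comm]; exact hk2)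
  have hkab : k = a * b := by
    have : (k - a * b) * (k + a * b) = 0 := by linear_combination -hk2
    rcases mul_eq_zero.1 this with h | h
    · linarith
    · have := mul_pos ha hb; omega
  subst hkab
  have hab : IsCoprime a b := by
    exact (IsCoprime.pow_iff (by norm_num) (by norm_num)).1 hAC
  obtain ⟨t, g', a', ht, hg', rfl, rfl, c1⟩ := gcd_split g a hg
  obtain ⟨u, r, b', hu, hr, rfl, rfl, c2⟩ := gcd_split g' b hg'
  have ha' : 0 < a' := pos_of_mul_pos_right ha ht.le
  have hb' : 0 < b' := pos_of_mul_pos_right hb hu.le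
  have hcu : IsCoprime u a' := c1.of_mul_left_left
  have hcr : IsCoprime r a' := c1.of_mul_left_right
  have htu : IsCoprime t u := hab.of_mul_left_left.of_mul_right_left
  have htb : IsCoprime t b' := hab.of_mul_left_left.of_mul_right_right
  have hab' : IsCoprime a' b' := hab.of_mul_left_right.of_mul_right_right
  obtain ⟨x, rfl⟩ : t * u ∣ x₀ := by
    apply dvd_of_quadratic (t * u) x₀ (u ^ 2 * r * b' ^ 2) (r * a' * b' * x₄) (by positivity)
    linear_combination e1
  have e3 : x ^ 2 + x * (u ^ 2 * r * b' ^ 2) + r * a' * b' * x₄ = 0 := by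
    have : (t * u) ^ 2 * (x ^ 2 + x * (u ^ 2 * r * b' ^ 2) + r * a' * b' * x₄) = 0 := by
      linear_combination e1
    rcases mul_eq_zero.1 this with h | h
    · exact absurd h (by positivity)
    · exact h
  have hrw : r * (-(a' * b' * x₄ + u ^ 2 * b' ^ 2 * x)) = x ^ 2 := by linear_combination -e3
  have hcop : IsCoprime r (-(a' * b' * x₄ + u ^ 2 * b' ^ 2 * x)) := by
    apply isCoprime_of_prime_dvd
    · rintro ⟨h, -⟩; omega
    · intro p pp hpr hpw
      have hpx : p ∣ x := pp.dvd_of_dvd_pow (hrw ▸ Dvd.dvd.mul_right hpr _)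
      have h5 : p ∣ a' * b' * x₄ := by
        have h6 : p ∣ u ^ 2 * b' ^ 2 * x := Dvd.dvd.mul_left hpx _
        have := (dvd_neg.1 hpw)
        exact (dvd_add_left h6).1 this
      rcases pp.dvd_or_dvd h5 with h6 | h6
      · rcases pp.dvd_or_dvd h6 with h7 | h7
        · exact pp.not_isUnit (hcr.isUnit_of_dvd' hpr h7)
        · exact pp.not_isUnit (c2.isUnit_of_dvd' hpr h7)
      · have hpg : p ∣ t * (u * r) := by rw [← mul_assoc]; exact Dvd.dvd.mul_left hpr _
        exact hp p pp (Dvd.dvd.mul_left hpx _) (Dvd.dvd.mul_right hpg _) (Dvd.dvd.mul_right hpg _)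
          (Dvd.dvd.mul_right hpg _) h6
  obtain ⟨s, hs, rfl⟩ := sq_of_coprime_pos hr hcop hrw
  obtain ⟨x', rfl⟩ : s ∣ x := (Int.pow_dvd_pow_iff two_ne_zero).1 ⟨_, hrw.symm⟩
  have e4 : x' ^ 2 + x' * (u ^ 2 * s * b' ^ 2) + a' * b' * x₄ = 0 := by
    have : s ^ 2 * (x' ^ 2 + x' * (u ^ 2 * s * b' ^ 2) + a' * b' * x₄) = 0 := by
      linear_combination e3
    rcases mul_eq_zero.1 this with h | h
    · exact absurd h (by positivity)
    · exact h
  have hsx : IsCoprime s x' := by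
    have h5 : -(a' * b' * x₄ + u ^ 2 * b' ^ 2 * (s * x')) = x' ^ 2 := by linear_combination -e4
    rw [h5] at hcop
    exact (IsCoprime.pow_iff (by norm_num) (by norm_num)).1 hcop
  have hsa : IsCoprime s a' := (IsCoprime.pow_left_iff (by norm_num)).1 hcr
  have hsb : IsCoprime s b' := (IsCoprime.pow_left_iff (by norm_num)).1 c2
  obtain ⟨d, b₂, e, hd, hb₂, rfl, rfl, c3⟩ := gcd_split b' x' hb'
  have e5 : d * e ^ 2 + d ^ 2 * e * u ^ 2 * s * b₂ ^ 2 + a' * b₂ * x₄ = 0 := by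
    have : d * (d * e ^ 2 + d ^ 2 * e * u ^ 2 * s * b₂ ^ 2 + a' * b₂ * x₄) = 0 := by
      linear_combination e4
    rcases mul_eq_zero.1 this with h | h
    · omega
    · exact h
  obtain ⟨b₁, rfl⟩ : b₂ ∣ d := by
    have h5 : b₂ ∣ e ^ 2 * d := ⟨-(d ^ 2 * e * u ^ 2 * s * b₂ + a' * x₄), by linear_combination e5⟩
    exact c3.pow_right.dvd_of_dvd_mul_left h5
  have hb₁ : 0 < b₁ := pos_of_mul_pos_right hd hb₂.le
  have e6 : b₁ * e ^ 2 + b₁ ^ 2 * b₂ ^ 3 * e * u ^ 2 * s + a' * x₄ = 0 := by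
    have : b₂ * (b₁ * e ^ 2 + b₁ ^ 2 * b₂ ^ 3 * e * u ^ 2 * s + a' * x₄) = 0 := by
      linear_combination e5
    rcases mul_eq_zero.1 this with h | h
    · omega
    · exact h
  obtain ⟨a₁, a₂, y, ha₁, ha₂, rfl, rfl, c4⟩ := gcd_split a' e ha'
  have e7 : b₁ * y * (a₁ * y + s * u ^ 2 * b₁ * b₂ ^ 3) + a₂ * x₄ = 0 := by
    have : a₁ * (b₁ * y * (a₁ * y + s * u ^ 2 * b₁ * b₂ ^ 3) + a₂ * x₄) = 0 := by
      linear_combination e6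
    rcases mul_eq_zero.1 this with h | h
    · omega
    · exact h
  have ca1b1 : IsCoprime a₁ b₁ := hab'.of_mul_left_left.of_mul_right_left.of_mul_right_right
  have ca2b1 : IsCoprime a₂ b₁ := hab'.of_mul_left_right.of_mul_right_left.of_mul_right_right
  have ca1b2 : IsCoprime a₁ b₂ := hab'.of_mul_left_left.of_mul_right_right
  have ca2b2 : IsCoprime a₂ b₂ := hab'.of_mul_left_right.of_mul_right_right
  obtain ⟨z', hz⟩ : a₂ ∣ a₁ * y + s * u ^ 2 * b₁ * b₂ ^ 3 := by
    have h5 : a₂ ∣ b₁ * y * (a₁ * y + s * u ^ 2 * b₁ * b₂ ^ 3) :=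
      ⟨-x₄, by linear_combination e7⟩
    exact (ca2b1.mul_right c4).dvd_of_dvd_mul_left h5
  obtain ⟨z, rfl⟩ : ∃ z, z' = -z := ⟨-z', by ring⟩
  have hx4 : x₄ = b₁ * y * z := by
    have : a₂ * x₄ = a₂ * (b₁ * y * z) := by rw [hz] at e7; linear_combination e7
    exact mul_left_cancel₀ ha₂.ne' this
  have key : ∀ p : ℤ, Prime p → p ∣ t * u → p ∣ b₁ * y * z → False := by
    intro p pp hptu hpx
    have hpg : p ∣ t * (u * s ^ 2) := by rw [← mul_assoc]; exact Dvd.dvd.mul_right hptu _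
    exact hp p pp (Dvd.dvd.mul_right hptu _) (Dvd.dvd.mul_right hpg _) (Dvd.dvd.mul_right hpg _)
          (Dvd.dvd.mul_right hpg _) (hx4 ▸ hpx)
  have mk : ∀ m n : ℤ, 0 < m → m ∣ t * u → n ∣ b₁ * y * z → IsCoprime n m := by
    intro m n hm h5 h6
    apply isCoprime_of_prime_dvd
    · rintro ⟨-, h⟩; omega
    · intro p pp hpn hpm
      exact key p pp (hpm.trans h5) (hpn.trans h6)
  have cus : IsCoprime u a₁ := hcu.of_mul_right_left
  refine ⟨s, t, u, a₁, a₂, b₁, b₂, y, z, ⟨hs, ht, hu, ha₁, ha₂, hb₁, hb₂⟩, by ring, by ring,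
    by ring, by ring, hx4, by linear_combination hz,
    ⟨⟨hsa.of_mul_right_left, hsa.of_mul_right_right, hsb.of_mul_right_left.of_mul_right_right,
      hsb.of_mul_right_right⟩, ⟨htu, htb.of_mul_right_left.of_mul_right_right,
      htb.of_mul_right_right⟩, ⟨hcu.of_mul_right_left, hcu.of_mul_right_right, ?_⟩,
      ⟨?_, ca1b1, ca1b2⟩, ca2b1, ca2b2⟩, ?_, ?_, ?_, ?_, ?_⟩
  · exact (mk u b₁ hu (Dvd.intro_left _ rfl) ⟨y * z, by ring⟩).symm
  · apply isCoprime_of_prime_dvd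
    · rintro ⟨h, -⟩; omega
    · intro p pp hp1 hp2
      have h5 : p ∣ s * u ^ 2 * b₁ * b₂ ^ 3 := by
        have : p ∣ a₁ * y + s * u ^ 2 * b₁ * b₂ ^ 3 := hz ▸ Dvd.dvd.mul_right hp2 _
        exact (dvd_add_right (Dvd.dvd.mul_right hp1 _)).1 this
      have h6 : IsCoprime a₁ (s * u ^ 2 * b₁ * b₂ ^ 3) :=
        ((hsa.of_mul_right_left.symm.mul_right cus.symm.pow_right).mul_right ca1b1).mul_right
          ca1b2.pow_right
      exact pp.not_isUnit (h6.isUnit_of_dvd' hp1 h5)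
  · exact hsx.symm.of_mul_left_right.of_mul_left_right
  · exact mk t y ht (Dvd.intro _ rfl) ⟨b₁ * z, by ring⟩
  · exact mk u y hu (Dvd.intro_left _ rfl) ⟨b₁ * z, by ring⟩
  · exact c3.symm.of_mul_left_right
  · exact mk t z ht (Dvd.intro _ rfl) ⟨b₁ * y, by ring⟩

lemma gcd_split_unique {d e m n m' n' : ℤ} (hd : 0 < d) (he : 0 < e) (h1 : d * m = e * m')
    (h2 : d * n = e * n') (c : IsCoprime m n) (c' : IsCoprime m' n') : d = e := by
  have aux : ∀ {d e m n m' n' : ℤ}, d * m = e * m' → d * n = e * n' → IsCoprime m' n' → d ∣ e := by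
    rintro d e m n m' n' h1 h2 ⟨x, y, h⟩
    exact ⟨x * m + y * n, by linear_combination (-e) * h - x * h1 - y * h2⟩
  exact Int.dvd_antisymm hd.le he.le (aux h1 h2 c') (aux h1.symm h2.symm c)

lemma pos_sq_inj {a b : ℤ} (ha : 0 < a) (hb : 0 < b) (h : a ^ 2 = b ^ 2) : a = b := by
  exact (sq_eq_sq₀ ha.le hb.le).1 h

/-- A coprimality consequence of the torsor equation. -/
lemma cop_y_a₂ {s t u a₁ a₂ b₁ b₂ y z : ℤ} (ha₂ : 0 < a₂)
    (e : a₁ * y + a₂ * z + s * u ^ 2 * b₁ * b₂ ^ 3 = 0) (h : Cop7 s t u a₁ a₂ b₁ b₂) :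
    IsCoprime a₂ y := by
  obtain ⟨⟨c1, c2, c3, c4⟩, ⟨c5, c6, c7⟩, ⟨c8, c9, c10⟩, ⟨c11, c12, c13⟩, c14, c15⟩ := h
  apply isCoprime_of_prime_dvd
  · rintro ⟨h, -⟩; omega
  · intro p pp h1 h2
    have h3 : p ∣ s * u ^ 2 * b₁ * b₂ ^ 3 := by
      have h4 : s * u ^ 2 * b₁ * b₂ ^ 3 = -(a₁ * y + a₂ * z) := by linear_combination e
      rw [h4, dvd_neg]
      exact dvd_add (Dvd.dvd.mul_left h2 _) (Dvd.dvd.mul_right h1 _)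
    have h6 : IsCoprime a₂ (s * u ^ 2 * b₁ * b₂ ^ 3) :=
      ((c2.symm.mul_right c9.symm.pow_right).mul_right c14).mul_right c15.pow_right
    exact pp.not_isUnit (h6.isUnit_of_dvd' h1 h3)

/-- The lift of a point to the universal torsor is unique. -/
lemma torsor_unique {s t u a₁ a₂ b₁ b₂ y z s' t' u' a₁' a₂' b₁' b₂' y' z' : ℤ}
    (hs : 0 < s) (ht : 0 < t) (hu : 0 < u) (ha₁ : 0 < a₁) (ha₂ : 0 < a₂) (hb₁ : 0 < b₁)
    (hb₂ : 0 < b₂) (hs' : 0 < s') (ht' : 0 < t') (hu' : 0 < u') (ha₁' : 0 < a₁') (ha₂' : 0 < a₂')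
    (hb₁' : 0 < b₁') (hb₂' : 0 < b₂')
    (e : a₁ * y + a₂ * z + s * u ^ 2 * b₁ * b₂ ^ 3 = 0) (hc : Cop7 s t u a₁ a₂ b₁ b₂)
    (hy : IsCoprime y b₂)
    (e' : a₁' * y' + a₂' * z' + s' * u' ^ 2 * b₁' * b₂' ^ 3 = 0)
    (hc' : Cop7 s' t' u' a₁' a₂' b₁' b₂') (hy' : IsCoprime y' b₂')
    (h0 : a₁ * y * (s * t * u * b₁ * b₂) = a₁' * y' * (s' * t' * u' * b₁' * b₂'))
    (h1 : s ^ 2 * t ^ 3 * u * a₁ ^ 2 * a₂ ^ 2 = s' ^ 2 * t' ^ 3 * u' * a₁' ^ 2 * a₂' ^ 2)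
    (h3 : s ^ 2 * t * u ^ 3 * b₁ ^ 2 * b₂ ^ 4 = s' ^ 2 * t' * u' ^ 3 * b₁' ^ 2 * b₂' ^ 4) :
    s = s' ∧ t = t' ∧ u = u' ∧ a₁ = a₁' ∧ a₂ = a₂' ∧ b₁ = b₁' ∧ b₂ = b₂' ∧ y = y' := by
  have ya := cop_y_a₂ ha₂ e hc
  have ya' := cop_y_a₂ ha₂' e' hc'
  obtain ⟨⟨c1, c2, c3, c4⟩, ⟨c5, c6, c7⟩, ⟨c8, c9, c10⟩, ⟨c11, c12, c13⟩, c14, c15⟩ := hc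
  obtain ⟨⟨d1, d2, d3, d4⟩, ⟨d5, d6, d7⟩, ⟨d8, d9, d10⟩, ⟨d11, d12, d13⟩, d14, d15⟩ := hc'
  have cab : IsCoprime (t * a₁ * a₂) (u * b₁ * b₂ ^ 2) :=
    (((c5.mul_right c6).mul_right c7.pow_right).mul_left
      ((c8.symm.mul_right c12).mul_right c13.pow_right)).mul_left
      ((c9.symm.mul_right c14).mul_right c15.pow_right)
  have cab' : IsCoprime (t' * a₁' * a₂') (u' * b₁' * b₂' ^ 2) :=
    (((d5.mul_right d6).mul_right d7.pow_right).mul_left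
      ((d8.symm.mul_right d12).mul_right d13.pow_right)).mul_left
      ((d9.symm.mul_right d14).mul_right d15.pow_right)
  have eg : s ^ 2 * t * u = s' ^ 2 * t' * u' :=
    gcd_split_unique (m := (t * a₁ * a₂) ^ 2) (n := (u * b₁ * b₂ ^ 2) ^ 2)
      (m' := (t' * a₁' * a₂') ^ 2) (n' := (u' * b₁' * b₂' ^ 2) ^ 2) (by positivity) (by positivity)
      (by linear_combination h1) (by linear_combination h3) cab.pow cab'.pow
  have ea : t * a₁ * a₂ = t' * a₁' * a₂' := by
    apply pos_sq_inj (by positivity) (by positivity)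
    apply mul_left_cancel₀ (a := s ^ 2 * t * u) (by positivity)
    calc _ = s ^ 2 * t ^ 3 * u * a₁ ^ 2 * a₂ ^ 2 := by ring
      _ = _ := by rw [h1, eg]; ring
  have eb : u * b₁ * b₂ ^ 2 = u' * b₁' * b₂' ^ 2 := by
    apply pos_sq_inj (by positivity) (by positivity)
    apply mul_left_cancel₀ (a := s ^ 2 * t * u) (by positivity)
    calc _ = s ^ 2 * t * u ^ 3 * b₁ ^ 2 * b₂ ^ 4 := by ring
      _ = _ := by rw [h3, eg]; ring
  have et : t = t' :=
    gcd_split_unique (m := s ^ 2 * u) (n := a₁ * a₂) (m' := s' ^ 2 * u') (n' := a₁' * a₂') ht ht'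
      (by linear_combination eg) (by linear_combination ea)
      ((c1.mul_right c2).pow_left.mul_left (c8.mul_right c9))
      ((d1.mul_right d2).pow_left.mul_left (d8.mul_right d9))
  have eu : u = u' :=
    gcd_split_unique (m := s ^ 2 * t) (n := b₁ * b₂ ^ 2) (m' := s' ^ 2 * t') (n' := b₁' * b₂' ^ 2)
      hu hu' (by linear_combination eg) (by linear_combination eb)
      ((c3.mul_right c4.pow_right).pow_left.mul_left (c6.mul_right c7.pow_right))
      ((d3.mul_right d4.pow_right).pow_left.mul_left (d6.mul_right d7.pow_right))
  subst et eu
  have es : s = s' := by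
    apply pos_sq_inj hs hs'
    apply mul_left_cancel₀ (a := t * u) (by positivity)
    linear_combination eg
  subst es
  have ea1 : a₁ * t = a₁' * t :=
    gcd_split_unique (m := a₂) (n := y * s * u * b₁ * b₂) (m' := a₂') (n' := y' * s * u * b₁' * b₂')
      (by positivity) (by positivity) (by linear_combination ea) (by linear_combination h0)
      ((((ya.mul_right c2.symm).mul_right c9.symm).mul_right c14).mul_right c15)
      ((((ya'.mul_right d2.symm).mul_right d9.symm).mul_right d14).mul_right d15)
  have ea1 : a₁ = a₁' := mul_right_cancel₀ ht.ne' ea1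
  subst ea1
  have ea2 : a₂ = a₂' := mul_left_cancel₀ (a := t * a₁) (by positivity) ea
  subst ea2
  have eb1 : b₁ * b₂ * u = b₁' * b₂' * u :=
    gcd_split_unique (m := b₂) (n := a₁ * y * s * t) (m' := b₂') (n' := a₁ * y' * s * t)
      (by positivity) (by positivity) (by linear_combination eb) (by linear_combination h0)
      (((c13.symm.mul_right hy.symm).mul_right c4.symm).mul_right c7.symm)
      (((d13.symm.mul_right hy'.symm).mul_right d4.symm).mul_right d7.symm)
  have eb2 : b₂ = b₂' := by
    apply mul_left_cancel₀ (a := b₁ * b₂ * u) (by positivity)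
    nth_rewrite 2 [eb1]
    linear_combination eb
  subst eb2
  have eb1 : b₁ = b₁' := by
    apply mul_right_cancel₀ (b := b₂ * u) (by positivity)
    linear_combination eb1
  subst eb1
  refine ⟨rfl, rfl, rfl, rfl, rfl, rfl, rfl, ?_⟩
  apply mul_left_cancel₀ (a := a₁ * (s * t * u * b₁ * b₂)) (by positivity)
  linear_combination h0

/-- The point below a torsor point has coprime coordinates. -/
lemma torsor_primitive {s t u a₁ a₂ b₁ b₂ y z : ℤ}
    (e : a₁ * y + a₂ * z + s * u ^ 2 * b₁ * b₂ ^ 3 = 0) (hc : Cop7 s t u a₁ a₂ b₁ b₂)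
    (hys : IsCoprime y s) (hyt : IsCoprime y t) (hyu : IsCoprime y u) (hzt : IsCoprime z t)
    (p : ℤ) (pp : Prime p) 
    (h1 : p ∣ s ^ 2 * t ^ 3 * u * a₁ ^ 2 * a₂ ^ 2)
    (h3 : p ∣ s ^ 2 * t * u ^ 3 * b₁ ^ 2 * b₂ ^ 4) (h4 : p ∣ b₁ * y * z) : False := by
  obtain ⟨⟨c1, c2, c3, c4⟩, ⟨c5, c6, c7⟩, ⟨c8, c9, c10⟩, ⟨c11, c12, c13⟩, c14, c15⟩ := hc
  have nd : ∀ {m n : ℤ}, IsCoprime m n → p ∣ m → p ∣ n → False :=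
    fun h a b => pp.not_isUnit (h.isUnit_of_dvd' a b)
  have cab : IsCoprime (t * a₁ * a₂) (u * b₁ * b₂ ^ 2) :=
    (((c5.mul_right c6).mul_right c7.pow_right).mul_left
      ((c8.symm.mul_right c12).mul_right c13.pow_right)).mul_left
      ((c9.symm.mul_right c14).mul_right c15.pow_right)
  have hg : p ∣ s ^ 2 * t * u := by
    have h5 : s ^ 2 * t ^ 3 * u * a₁ ^ 2 * a₂ ^ 2 = (s ^ 2 * t * u) * (t * a₁ * a₂) ^ 2 := by ring
    have h6 : s ^ 2 * t * u ^ 3 * b₁ ^ 2 * b₂ ^ 4 = (s ^ 2 * t * u) * (u * b₁ * b₂ ^ 2) ^ 2 := by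
      ring
    rw [h5] at h1
    rw [h6] at h3
    rcases pp.dvd_or_dvd h1 with h | h
    · exact h
    rcases pp.dvd_or_dvd h3 with h' | h'
    · exact h'
    exact (nd cab (pp.dvd_of_dvd_pow h) (pp.dvd_of_dvd_pow h')).elim
  have hza : ∀ {w : ℤ}, IsCoprime y w → IsCoprime w a₁ → w ∣ s * u ^ 2 * b₁ * b₂ ^ 3 → p ∣ w →
      ¬ p ∣ z := by
    intro w h5 h6 h7 h8 h9
    have h10 : p ∣ a₁ * y := by
      have : a₁ * y = -(a₂ * z + s * u ^ 2 * b₁ * b₂ ^ 3) := by linear_combination e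
      rw [this, dvd_neg]
      exact dvd_add (Dvd.dvd.mul_left h9 _) (h8.trans h7)
    rcases pp.dvd_or_dvd h10 with h | h
    · exact nd h6 h8 h
    · exact nd h5 h h8
  rcases pp.dvd_or_dvd hg with h | hu
  · rcases pp.dvd_or_dvd h with h | ht
    · have hs := pp.dvd_of_dvd_pow h
      rcases pp.dvd_or_dvd h4 with h5 | h5
      · rcases pp.dvd_or_dvd h5 with h6 | h6
        · exact nd c3 hs h6
        · exact nd hys h6 hs
      · exact hza hys c1 ⟨u ^ 2 * b₁ * b₂ ^ 3, by ring⟩ hs h5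
    · rcases pp.dvd_or_dvd h4 with h5 | h5
      · rcases pp.dvd_or_dvd h5 with h6 | h6
        · exact nd c6 ht h6
        · exact nd hyt h6 ht
      · exact nd hzt h5 ht
  · rcases pp.dvd_or_dvd h4 with h5 | h5
    · rcases pp.dvd_or_dvd h5 with h6 | h6
      · exact nd c10 hu h6
      · exact nd hyu h6 hu
    · exact hza hyu c8 ⟨s * u * b₁ * b₂ ^ 3, by ring⟩ hu h5

/-! ### Counting points through the torsor -/

lemma cop_iff_primes (y : ℤ) (m : ℕ) :
    IsCoprime y (m : ℤ) ↔ ∀ p : ℕ, p.Prime → p ∣ m → ¬ (p : ℤ) ∣ y := by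
  constructor
  · intro h p pp hpm hpy
    exact (Nat.prime_iff_prime_int.1 pp).not_isUnit
      (h.isUnit_of_dvd' hpy (Int.natCast_dvd_natCast.2 hpm))
  · intro h
    rw [Int.isCoprime_iff_gcd_eq_one]
    by_contra hne
    obtain ⟨p, pp, hp⟩ := Nat.exists_prime_and_dvd hne
    have h1 : (p : ℤ) ∣ y := (Int.natCast_dvd_natCast.2 hp).trans (Int.gcd_dvd_left _ _)
    have h2 : (p : ℤ) ∣ m := (Int.natCast_dvd_natCast.2 hp).trans (Int.gcd_dvd_right _ _)
    exact h p pp (Int.natCast_dvd_natCast.1 h2) h1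

/-- Coprimality conditions on a vector `n = (s, t, u, a₁, a₂, b₁, b₂)` of torsor variables. -/
def CopN (n : Fin 7 → ℕ) : Prop := Cop7 (n 0) (n 1) (n 2) (n 3) (n 4) (n 5) (n 6)

/-- The monomial `s u² b₁ b₂³` of the torsor equation. -/
def cN (n : Fin 7 → ℕ) : ℕ := n 0 * n 2 ^ 2 * n 5 * n 6 ^ 3

/-- The cofactor of `y` in `x₀`. -/
def kN (n : Fin 7 → ℕ) : ℕ := n 3 * (n 0 * n 1 * n 2 * n 5 * n 6)

/-- `x₁` as a monomial in the torsor variables. -/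
def X1 (n : Fin 7 → ℕ) : ℕ := n 0 ^ 2 * n 1 ^ 3 * n 2 * n 3 ^ 2 * n 4 ^ 2

/-- `x₂` as a monomial in the torsor variables. -/
def X2 (n : Fin 7 → ℕ) : ℕ := n 0 ^ 2 * n 1 ^ 2 * n 2 ^ 2 * n 3 * n 4 * n 5 * n 6 ^ 2

/-- `x₃` as a monomial in the torsor variables. -/
def X3 (n : Fin 7 → ℕ) : ℕ := n 0 ^ 2 * n 1 * n 2 ^ 3 * n 5 ^ 2 * n 6 ^ 4

/-- The arithmetic conditions on `y`: the congruence modulo `a₂` that makes `z` integral, and the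
coprimality of `y` to `s t u b₂` and of `z` to `t`. -/
def GoodY (n : Fin 7 → ℕ) (y : ℤ) : Prop :=
  (n 4 : ℤ) ∣ n 3 * y + cN n ∧
  (∀ p : ℕ, p.Prime → (p ∣ n 0 ∨ p ∣ n 1 ∨ p ∣ n 2 ∨ p ∣ n 6) → ¬ (p : ℤ) ∣ y) ∧
  (∀ p : ℕ, p.Prime → p ∣ n 1 → ¬ ((n 4 * p : ℕ) : ℤ) ∣ n 3 * y + cN n)

/-- The height conditions on `x₀` and `x₄`, given `x₂` and `x₃`. -/
def HtY (B : ℝ) (n : Fin 7 → ℕ) (y : ℤ) : Prop :=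
  |(kN n : ℝ) * y| ≤ B ∧ |(kN n : ℝ) * y * (kN n * y + X3 n)| ≤ B * X2 n

/-- The integral points of the universal torsor of bounded height. -/
def TorSet (B : ℝ) : Set ((Fin 7 → ℕ) × ℤ) :=
  {q | (∀ i, 0 < q.1 i) ∧ CopN q.1 ∧ GoodY q.1 q.2 ∧ (X1 q.1 : ℝ) ≤ B ∧ (X3 q.1 : ℝ) ≤ B ∧
    HtY B q.1 q.2}

/-- The map from the torsor to the surface. -/
def torMap (q : (Fin 7 → ℕ) × ℤ) : Fin 5 → ℤ :=
  ![kN q.1 * q.2, X1 q.1, X2 q.1, X3 q.1, -(q.1 5 * q.2 * ((q.1 3 * q.2 + cN q.1) / q.1 4))]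

/-- Representatives of the points with `x₂ / x₁ > 0`. -/
def PosSet (B : ℝ) : Set (Fin 5 → ℤ) := {v | v ∈ countSet B ∧ 0 < v 1 ∧ 0 < v 2}

lemma goodY_iff {n : Fin 7 → ℕ} (hn : ∀ i, 0 < n i) (y : ℤ) :
    GoodY n y ↔ ∃ z : ℤ, (n 3 : ℤ) * y + n 4 * z + n 0 * n 2 ^ 2 * n 5 * n 6 ^ 3 = 0 ∧
      IsCoprime y (n 0 : ℤ) ∧ IsCoprime y (n 1 : ℤ) ∧ IsCoprime y (n 2 : ℤ) ∧
      IsCoprime y (n 6 : ℤ) ∧ IsCoprime z (n 1 : ℤ) := by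
  have h4 : (n 4 : ℤ) ≠ 0 := by have := hn 4; positivity
  have hc : (cN n : ℤ) = n 0 * n 2 ^ 2 * n 5 * n 6 ^ 3 := by simp [cN]
  simp only [cop_iff_primes _ _]
  constructor
  · rintro ⟨⟨w, hw⟩, h2, h3⟩
    refine ⟨-w, by rw [hc] at hw; linear_combination hw, fun p pp h => h2 p pp (by tauto),
      fun p pp h => h2 p pp (by tauto), fun p pp h => h2 p pp (by tauto),
      fun p pp h => h2 p pp (by tauto), fun p pp h h' => h3 p pp h ?_⟩
    rw [hw]; push_cast
    exact mul_dvd_mul_left _ (dvd_neg.1 h')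
  · rintro ⟨z, e, h0, h1, h2, h6, hz⟩
    have hw : (n 3 : ℤ) * y + cN n = n 4 * (-z) := by rw [hc]; linear_combination e
    refine ⟨⟨-z, hw⟩, ?_, ?_⟩
    · rintro p pp (h | h | h | h)
      exacts [h0 p pp h, h1 p pp h, h2 p pp h, h6 p pp h]
    · intro p pp h h'
      rw [hw] at h'; push_cast at h'
      exact hz p pp h (dvd_neg.1 ((mul_dvd_mul_iff_left h4).1 h'))

lemma primitive_iff (v : Fin 5 → ℤ) (h1 : 0 < v 1) :
    Primitive v ↔ ∀ p : ℤ, Prime p → ¬ ∀ i, p ∣ v i := by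
  unfold Primitive
  constructor
  · intro h p pp hp
    exact pp.not_dvd_one (h ▸ Finset.dvd_gcd (fun i _ => hp i))
  · intro h
    have h0 : Finset.univ.gcd v ≠ 0 := by
      intro h2
      rw [Finset.gcd_eq_zero_iff] at h2
      have := h2 1 (Finset.mem_univ _); omega
    have hn : normalize (Finset.univ.gcd v) = Finset.univ.gcd v := Finset.normalize_gcd
    by_contra hne
    have hu : ¬ IsUnit (Finset.univ.gcd v) := by
      intro hu
      rw [normalize_eq_one.2 hu] at hn
      exact hne hn.symm
    obtain ⟨p, pp, hp⟩ := WfDvdMonoid.exists_irreducible_factor hu h0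
    exact h p pp.prime (fun i => hp.trans (Finset.gcd_dvd (Finset.mem_univ i)))

lemma countSet_pos {B : ℝ} {v : Fin 5 → ℤ} (hv : v ∈ countSet B) : v 2 ≠ 0 ∧ v 1 ≠ 0 := by
  obtain ⟨-, ⟨e1, e2, l1, l2, l3⟩, -⟩ := hv
  have h2 : v 2 ≠ 0 := by
    intro h2
    rw [h2] at e1 e2
    have e1' : v 0 * (v 0 + v 3) = 0 := by linear_combination e1
    have e2' : v 1 * v 3 = 0 := by linear_combination e2
    rcases mul_eq_zero.1 e1' with h | h <;> rcases mul_eq_zero.1 e2' with h' | h'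
    · exact l1 ⟨h, h', h2⟩
    · exact l3 ⟨h, h2, h'⟩
    · exact l2 ⟨h, h', h2⟩
    · exact l3 ⟨by rw [h'] at h; simpa using h, h2, h'⟩
  refine ⟨h2, fun h1 => h2 ?_⟩
  rw [h1] at e2
  have : v 2 ^ 2 = 0 := by linear_combination -e2
  exact pow_eq_zero_iff (two_ne_zero) |>.1 this

/-- The universal torsor parametrises the points with `x₁, x₂ > 0` bijectively. -/
lemma torMap_bij (B : ℝ) : Set.BijOn torMap (TorSet B) (PosSet B) := by
  refine ⟨?_, ?_, ?_⟩
  · rintro ⟨n, y⟩ ⟨hn, hc, hy, hX1, hX3, hh1, hh2⟩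
    dsimp only at hn hc hy hX1 hX3 hh1 hh2
    obtain ⟨z, e, y0, y1, y2, y6, zt⟩ := (goodY_iff hn y).1 hy
    have hn0 := hn 0; have hn1 := hn 1; have hn2 := hn 2; have hn3 := hn 3
    have hn4 := hn 4; have hn5 := hn 5; have hn6 := hn 6
    have hz : ((n 3 : ℤ) * y + cN n) / n 4 = -z := by
      have : (n 3 : ℤ) * y + cN n = n 4 * (-z) := by simp only [cN]; push_cast; linear_combination e
      rw [this]; exact Int.mul_ediv_cancel_left _ (by positivity)
    have v4 : torMap (n, y) 4 = n 5 * y * z := by simp [torMap, hz]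
    have v0 : torMap (n, y) 0 = kN n * y := rfl
    have v1 : torMap (n, y) 1 = X1 n := rfl
    have v2 : torMap (n, y) 2 = X2 n := rfl
    have v3 : torMap (n, y) 3 = X3 n := rfl
    have p2 : 0 < X2 n := by unfold X2; positivity
    have p1 : 0 < X1 n := by unfold X1; positivity
    have e1 : (kN n * y : ℤ) ^ 2 + (kN n * y) * X3 n + X2 n * (n 5 * y * z) = 0 := by
      simp only [kN, X3, X2]; push_cast
      linear_combination ((n 0 : ℤ) ^ 2 * n 1 ^ 2 * n 2 ^ 2 * n 3 * n 5 ^ 2 * n 6 ^ 2 * y) * e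
    have e2 : (X1 n : ℤ) * X3 n = X2 n ^ 2 := by simp only [X1, X2, X3]; push_cast; ring
    have hB : 0 ≤ B := le_trans (abs_nonneg _) hh1
    refine ⟨⟨?_, ⟨?_, ?_, ?_, ?_, ?_⟩, ?_⟩, ?_, ?_⟩
    · rw [primitive_iff _ (by rw [v1]; exact_mod_cast p1)]
      intro p pp hp
      have q1 := hp 1; have q3 := hp 3; have q4 := hp 4
      rw [v1] at q1; rw [v3] at q3; rw [v4] at q4
      simp only [X1, X3] at q1 q3; push_cast at q1 q3
      exact torsor_primitive e hc y0 y1 y2 zt p pp q1 q3 q4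
    · rw [v0, v2, v3, v4]; exact e1
    · rw [v1, v2, v3, e2]; ring
    · rintro ⟨-, -, h⟩; rw [v2] at h; have : X2 n = 0 := by exact_mod_cast h
      omega
    · rintro ⟨-, -, h⟩; rw [v2] at h; have : X2 n = 0 := by exact_mod_cast h
      omega
    · rintro ⟨-, h, -⟩; rw [v2] at h; have : X2 n = 0 := by exact_mod_cast h
      omega
    · have e1r : (kN n * y : ℝ) * (kN n * y + X3 n) = -(X2 n * (n 5 * y * z)) := by
        have : ((kN n * y : ℤ) * (kN n * y + X3 n) : ℤ) = -(X2 n * (n 5 * y * z)) := by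
          linear_combination e1
        exact_mod_cast this
      have p2r : (0:ℝ) < X2 n := by exact_mod_cast p2
      intro j
      fin_cases j
      · simp only [Fin.zero_eta, v0]; push_cast; exact hh1
      · simp only [Fin.mk_one, v1]; simpa using hX1
      · change |((torMap (n, y) 2 : ℤ) : ℝ)| ≤ B
        rw [v2]
        have e2r : (X1 n : ℝ) * X3 n = X2 n ^ 2 := by exact_mod_cast e2
        push_cast
        apply abs_le_of_sq_le_sq _ hB
        rw [← e2r, pow_two]
        exact mul_le_mul hX1 hX3 (by positivity) hB
      · change |((torMap (n, y) 3 : ℤ) : ℝ)| ≤ B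
        rw [v3]; simpa using hX3
      · change |((torMap (n, y) 4 : ℤ) : ℝ)| ≤ B
        rw [v4]; push_cast
        rw [e1r, abs_neg, abs_mul, abs_of_pos p2r, mul_comm B] at hh2
        exact le_of_mul_le_mul_left hh2 p2r
    · rw [v1]; exact_mod_cast p1
    · rw [v2]; exact_mod_cast p2
  · rintro ⟨n, y⟩ ⟨hn, hc, hy, -⟩ ⟨n', y'⟩ ⟨hn', hc', hy', -⟩ heq
    dsimp only at hn hc hy hn' hc' hy'
    obtain ⟨z, e, y0, y1, y2, y6, zt⟩ := (goodY_iff hn y).1 hy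
    obtain ⟨z', e', y0', y1', y2', y6', zt'⟩ := (goodY_iff hn' y').1 hy'
    have h0 : (kN n * y : ℤ) = kN n' * y' := congrFun heq 0
    have h1 : (X1 n : ℤ) = X1 n' := congrFun heq 1
    have h3 : (X3 n : ℤ) = X3 n' := congrFun heq 3
    simp only [kN, X1, X3] at h0 h1 h3; push_cast at h0 h1 h3
    have P : ∀ i, (0:ℤ) < n i := fun i => by exact_mod_cast hn i
    have P' : ∀ i, (0:ℤ) < n' i := fun i => by exact_mod_cast hn' i
    obtain ⟨r0, r1, r2, r3, r4, r5, r6, r7⟩ := torsor_unique (P 0) (P 1) (P 2) (P 3) (P 4) (P 5)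
      (P 6) (P' 0) (P' 1) (P' 2) (P' 3) (P' 4) (P' 5) (P' 6) e hc y6 e' hc' y6'
      (by linear_combination h0) h1 h3
    refine Prod.ext (funext fun i => ?_) r7
    fin_cases i
    exacts [Int.natCast_inj.1 r0, Int.natCast_inj.1 r1, Int.natCast_inj.1 r2, Int.natCast_inj.1 r3,
      Int.natCast_inj.1 r4, Int.natCast_inj.1 r5, Int.natCast_inj.1 r6]
  · rintro v ⟨⟨hp, ⟨e1, e2, -⟩, hB⟩, hv1, hv2⟩
    have e2' : v 1 * v 3 = v 2 ^ 2 := by linear_combination e2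
    have hv3 : 0 < v 3 := by
      have : 0 < v 1 * v 3 := by rw [e2']; positivity
      exact pos_of_mul_pos_right this hv1.le
    obtain ⟨s, t, u, a₁, a₂, b₁, b₂, y, z, ⟨hs, ht, hu, ha₁, ha₂, hb₁, hb₂⟩, q0, q1, q2, q3, q4, e,
      hc, y0, y1, y2, y6, zt⟩ := torsor_exists (v 0) (v 1) (v 2) (v 3) (v 4) hv1 hv2 hv3 e1 e2'
        (by
          intro p pp h0 h1 h2 h3 h4
          refine (primitive_iff v hv1).1 hp p pp (fun i => ?_)
          fin_cases i <;> assumption)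
    lift s to ℕ using hs.le
    lift t to ℕ using ht.le
    lift u to ℕ using hu.le
    lift a₁ to ℕ using ha₁.le
    lift a₂ to ℕ using ha₂.le
    lift b₁ to ℕ using hb₁.le
    lift b₂ to ℕ using hb₂.le
    norm_cast at hs ht hu ha₁ ha₂ hb₁ hb₂
    set n : Fin 7 → ℕ := ![s, t, u, a₁, a₂, b₁, b₂] with hn
    have hpos : ∀ i, 0 < n i := by intro i; fin_cases i <;> assumption
    have hz : ((n 3 : ℤ) * y + cN n) / n 4 = -z := by
      have : (n 3 : ℤ) * y + cN n = n 4 * (-z) := by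
        have e' : (n 3 : ℤ) * y + n 4 * z + n 0 * n 2 ^ 2 * n 5 * n 6 ^ 3 = 0 := e
        simp only [cN]; push_cast; linear_combination e'
      rw [this]; exact Int.mul_ediv_cancel_left _ (by have := hpos 4; positivity)
    have w0 : v 0 = kN n * y := by rw [q0]; simp [kN, hn]; ring
    have w1 : v 1 = X1 n := by rw [q1]; simp [X1, hn]
    have w2 : v 2 = X2 n := by rw [q2]; simp [X2, hn]
    have w3 : v 3 = X3 n := by rw [q3]; simp [X3, hn]
    have hgy : GoodY n y := (goodY_iff hpos y).2 ⟨z, e, y0, y1, y2, y6, zt⟩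
    refine ⟨(n, y), ⟨hpos, hc, hgy, ?_, ?_, ?_, ?_⟩, ?_⟩
    · have := hB 1; rw [w1] at this; simpa using this
    · have := hB 3; rw [w3] at this; simpa using this
    · have := hB 0; rw [w0] at this; push_cast at this; exact this
    · have h4 := hB 4
      have : ((kN n : ℝ) * y * (kN n * y + X3 n)) = -(X2 n * (v 4 : ℤ)) := by
        have h5 : v 0 * (v 0 + v 3) = -(v 2 * v 4) := by linear_combination e1
        rw [w0, w2, w3] at h5
        exact_mod_cast h5
      dsimp only
      rw [this, abs_neg, abs_mul, mul_comm B, Nat.abs_cast]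
      exact mul_le_mul_of_nonneg_left h4 (Nat.cast_nonneg _)
    · funext i
      fin_cases i
      · exact w0.symm
      · exact w1.symm
      · exact w2.symm
      · exact w3.symm
      · change -((n 5 : ℤ) * y * (((n 3 : ℤ) * y + cN n) / n 4)) = v 4
        rw [hz, q4]; simp [hn]

lemma countSet_finite (B : ℝ) : (countSet B).Finite := by
  apply Set.Finite.subset (Set.Finite.pi (t := fun _ : Fin 5 => Set.Icc (-⌊B⌋) ⌊B⌋)
    (fun _ => Set.finite_Icc _ _))
  intro v hv i _
  have := hv.2.2 i
  rw [abs_le] at this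
  constructor
  · have h1 : ((-v i : ℤ) : ℝ) ≤ B := by push_cast; linarith
    have := Int.le_floor.2 h1; omega
  · exact Int.le_floor.2 this.2

/-- The involution `(x₂, x₄) ↦ (-x₂, -x₄)` of the surface. -/
def flipV (v : Fin 5 → ℤ) : Fin 5 → ℤ := ![v 0, v 1, -v 2, v 3, -v 4]

lemma flipV_flipV (v : Fin 5 → ℤ) : flipV (flipV v) = v := by
  funext i; fin_cases i <;> simp [flipV]

lemma flipV_mem {B : ℝ} {v : Fin 5 → ℤ} (h1 : 0 < v 1) (hv : v ∈ countSet B) :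
    flipV v ∈ countSet B := by
  obtain ⟨hp, ⟨e1, e2, l1, l2, l3⟩, hB⟩ := hv
  refine ⟨?_, ⟨?_, ?_, ?_, ?_, ?_⟩, ?_⟩
  · rw [primitive_iff _ (by simpa [flipV] using h1)]
    rw [primitive_iff _ h1] at hp
    intro p pp h
    refine hp p pp fun i => ?_
    have := h i
    fin_cases i <;> simpa [flipV] using this
  · simp [flipV]; linear_combination e1
  · simp [flipV]; linear_combination e2
  · simpa [flipV] using l1
  · simpa [flipV] using l2
  · simpa [flipV] using l3
  · intro j
    have := hB j
    fin_cases j <;> simpa [flipV] using this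

lemma neg_mem_countSet {B : ℝ} {v : Fin 5 → ℤ} (hv : v ∈ countSet B) : -v ∈ countSet B := by
  obtain ⟨hp, ⟨e1, e2, l1, l2, l3⟩, hB⟩ := hv
  refine ⟨?_, ⟨?_, ?_, ?_, ?_, ?_⟩, ?_⟩
  · unfold Primitive at *
    rw [← hp]
    apply dvd_antisymm_of_normalize_eq Finset.normalize_gcd Finset.normalize_gcd
    · exact Finset.dvd_gcd fun i hi => (dvd_neg.1 (Finset.gcd_dvd (f := -v) hi))
    · exact Finset.dvd_gcd fun i hi => (dvd_neg.2 (Finset.gcd_dvd (f := v) hi))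
  · simp; linear_combination e1
  · simp; linear_combination e2
  · simpa using l1
  · simp only [Pi.neg_apply, neg_eq_zero]
    rintro ⟨h, h'⟩; exact l2 ⟨by linarith, h'⟩
  · simpa using l3
  · intro j; simpa using hB j

/-- The counting function is twice the number of torsor points. -/
lemma NUH_eq (B : ℝ) : NUH B = 2 * (TorSet B).ncard := by
  have hfin : (PosSet B).Finite := (countSet_finite B).subset fun v hv => hv.1
  have h1 : (TorSet B).ncard = (PosSet B).ncard := by
    rw [← (torMap_bij B).image_eq, (torMap_bij B).injOn.ncard_image]
  have h2 : Quotient.mk signSetoid '' countSet B =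
      Quotient.mk signSetoid '' (PosSet B ∪ flipV '' PosSet B) := by
    apply Set.Subset.antisymm
    · rintro _ ⟨v, hv, rfl⟩
      obtain ⟨n2, n1⟩ := countSet_pos hv
      have main : ∀ v : Fin 5 → ℤ, v ∈ countSet B → 0 < v 1 → v ∈ PosSet B ∪ flipV '' PosSet B := by
        intro v hv p1
        obtain ⟨n2, n1⟩ := countSet_pos hv
        rcases lt_or_gt_of_ne n2 with h | h
        · refine Or.inr ⟨flipV v, ⟨flipV_mem p1 hv, ?_, ?_⟩, flipV_flipV v⟩
          · simpa [flipV] using p1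
          · simpa [flipV] using h
        · exact Or.inl ⟨hv, p1, h⟩
      rcases lt_or_gt_of_ne n1 with h | h
      · refine ⟨-v, main (-v) (neg_mem_countSet hv) (by simpa using h), ?_⟩
        exact Quotient.sound (Or.inr rfl)
      · exact ⟨v, main v hv h, rfl⟩
    · apply Set.image_mono
      rintro v (hv | ⟨w, hw, rfl⟩)
      · exact hv.1
      · exact flipV_mem hw.2.1 hw.1
  have h3 : ∀ v ∈ PosSet B ∪ flipV '' PosSet B, 0 < v 1 := by
    rintro v (hv | ⟨w, hw, rfl⟩)
    · exact hv.2.1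
    · simpa [flipV] using hw.2.1
  have hinj : Set.InjOn (Quotient.mk signSetoid) (PosSet B ∪ flipV '' PosSet B) := by
    intro v hv w hw h
    rcases Quotient.exact h with h | h
    · exact h
    · have := h3 v hv
      have h' := h3 w hw
      rw [h] at this
      simp at this; omega
  have hd : Disjoint (PosSet B) (flipV '' PosSet B) := by
    rw [Set.disjoint_left]
    rintro v hv ⟨w, hw, rfl⟩
    have h4 := hv.2.2; have h5 := hw.2.2
    simp [flipV] at h4; omega
  have hfi : Function.Injective flipV := fun v w h => by
    rw [← flipV_flipV v, h, flipV_flipV]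
  unfold NUH
  rw [h2, Nat.card_coe_set_eq, hinj.ncard_image,
    Set.ncard_union_eq hd hfin (hfin.image _), Set.ncard_image_of_injective _ hfi, h1]
  ring

/-! ### Local patterns of divisibility -/

/-- A linear congruence modulo a prime has exactly one solution. -/
lemma linear_class (p : ℕ) (pp : p.Prime) (a y : ℤ) (h : ¬ (p : ℤ) ∣ a) :
    ∃ ρ : ℤ, ∀ r : ℤ, (p : ℤ) ∣ y + a * r ↔ r ≡ ρ [ZMOD p] := by
  have hp := Nat.prime_iff_prime_int.1 pp
  have hc : IsCoprime a (p : ℤ) := ((Prime.coprime_iff_not_dvd hp).2 h).symm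
  obtain ⟨b, k, hb⟩ := hc
  refine ⟨-(b * y), fun r => ?_⟩
  rw [Int.modEq_iff_dvd]
  constructor
  · rintro ⟨m, hm⟩
    exact ⟨-(b * m) - k * r, by linear_combination (-b) * hm + r * hb⟩
  · rintro ⟨m, hm⟩
    refine ⟨k * y - a * m, ?_⟩
    linear_combination (-a) * hm - y * hb

/-- Sieving a set of integers that is equidistributed in arithmetic progressions by residue classes
modulo primes. -/
lemma sieve (A : Finset ℤ) (l : ℝ)
    (hA : ∀ Q : ℕ, 0 < Q → ∀ r : ℤ, |((A.filter (fun y => y ≡ r [ZMOD Q])).card : ℝ) - l / Q| ≤ 2)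
    (bad : ℕ → Finset ℤ) (P : Finset ℕ) (hP : ∀ p ∈ P, p.Prime)
    (hb : ∀ p ∈ P, ∀ a ∈ bad p, ∀ b ∈ bad p, a ≡ b [ZMOD p] → a = b) :
    ∀ q : ℕ, 0 < q → (∀ p ∈ P, Nat.Coprime q p) → ∀ r : ℤ,
      |((A.filter (fun y => y ≡ r [ZMOD q] ∧ ∀ p ∈ P, ∀ a ∈ bad p, ¬ y ≡ a [ZMOD p])).card : ℝ) -
        l / q * ∏ p ∈ P, (1 - ((bad p).card : ℝ) / p)| ≤ 2 * ∏ p ∈ P, (1 + ((bad p).card : ℝ)) := by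
  classical
  induction P using Finset.induction_on with
  | empty =>
    intro q hq _ r
    simpa using hA q hq r
  | insert p P hpP ih =>
    intro q hq hqP r
    have ih' := ih (fun p' h => hP p' (Finset.mem_insert_of_mem h))
      (fun p' h => hb p' (Finset.mem_insert_of_mem h))
    have pp := hP p (Finset.mem_insert_self _ _)
    have hqp := hqP p (Finset.mem_insert_self _ _)
    -- classes modulo `q p` refining the given class modulo `q`
    have hcrt : ∀ a : ℤ, ∃ r' : ℤ, ∀ y : ℤ, (y ≡ r [ZMOD q] ∧ y ≡ a [ZMOD p]) ↔
        y ≡ r' [ZMOD ((q * p : ℕ) : ℤ)] := by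
      intro a
      have hc : IsCoprime (q : ℤ) (p : ℤ) := Nat.isCoprime_iff_coprime.2 hqp
      obtain ⟨x, z, hxz⟩ := hc
      refine ⟨r * (z * p) + a * (x * q), fun y => ?_⟩
      have e1 : r * (z * p) + a * (x * q) ≡ r [ZMOD q] := by
        rw [Int.modEq_iff_dvd]; exact ⟨(r - a) * x, by linear_combination (-r) * hxz⟩
      have e2 : r * (z * p) + a * (x * q) ≡ a [ZMOD p] := by
        rw [Int.modEq_iff_dvd]; exact ⟨(a - r) * z, by linear_combination (-a) * hxz⟩
      push_cast
      rw [← Int.modEq_and_modEq_iff_modEq_mul (by simpa using hqp)]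
      constructor
      · rintro ⟨h1, h2⟩; exact ⟨h1.trans e1.symm, h2.trans e2.symm⟩
      · rintro ⟨h1, h2⟩; exact ⟨h1.trans e1, h2.trans e2⟩
    choose cr hcr using hcrt
    set F := fun (q : ℕ) (r : ℤ) =>
      A.filter (fun y => y ≡ r [ZMOD q] ∧ ∀ p ∈ P, ∀ a ∈ bad p, ¬ y ≡ a [ZMOD p]) with hF
    have hset : F q r = (A.filter (fun y => y ≡ r [ZMOD q] ∧ ∀ p' ∈ insert p P, ∀ a ∈ bad p',
        ¬ y ≡ a [ZMOD p'])) ∪ (bad p).biUnion (fun a => F (q * p) (cr a)) := by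
      ext y
      simp only [hF, Finset.mem_union, Finset.mem_filter, Finset.mem_biUnion, ← hcr,
        Finset.forall_mem_insert]
      constructor
      · rintro ⟨h1, h2, h3⟩
        by_cases h : ∀ a ∈ bad p, ¬ y ≡ a [ZMOD p]
        · exact Or.inl ⟨h1, h2, h, h3⟩
        · push Not at h
          obtain ⟨a, ha, h⟩ := h
          exact Or.inr ⟨a, ha, h1, ⟨h2, h⟩, h3⟩
      · rintro (⟨h1, h2, h, h3⟩ | ⟨a, ha, h1, ⟨h2, h⟩, h3⟩)
        · exact ⟨h1, h2, h3⟩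
        · exact ⟨h1, h2, h3⟩
    have hdisj : Disjoint (A.filter (fun y => y ≡ r [ZMOD q] ∧ ∀ p' ∈ insert p P, ∀ a ∈ bad p',
        ¬ y ≡ a [ZMOD p'])) ((bad p).biUnion (fun a => F (q * p) (cr a))) := by
      rw [Finset.disjoint_left]
      intro y hy hy'
      simp only [hF, Finset.mem_filter, Finset.mem_biUnion, ← hcr,
        Finset.forall_mem_insert] at hy hy'
      obtain ⟨a, ha, -, ⟨-, h⟩, -⟩ := hy'
      exact hy.2.2.1 a ha h
    have hdisj2 : ((bad p : Finset ℤ) : Set ℤ).PairwiseDisjoint (fun a => F (q * p) (cr a)) := by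
      intro a ha b hb' hab
      rw [Function.onFun, Finset.disjoint_left]
      intro y hy hy'
      simp only [hF, Finset.mem_filter, ← hcr] at hy hy'
      exact hab (hb p (Finset.mem_insert_self _ _) a ha b hb' (hy.2.1.2.symm.trans hy'.2.1.2))
    have hcard := congrArg Finset.card hset
    rw [Finset.card_union_of_disjoint hdisj, Finset.card_biUnion hdisj2] at hcard
    have hcard' : ((A.filter (fun y => y ≡ r [ZMOD q] ∧ ∀ p' ∈ insert p P, ∀ a ∈ bad p',
        ¬ y ≡ a [ZMOD p'])).card : ℝ) = (F q r).card - ∑ a ∈ bad p, ((F (q * p) (cr a)).card : ℝ) := by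
      rw [hcard]; push_cast; ring
    rw [hcard', Finset.prod_insert hpP, Finset.prod_insert hpP]
    set M := ∏ p ∈ P, (1 - ((bad p).card : ℝ) / p)
    set E := ∏ p ∈ P, (1 + ((bad p).card : ℝ))
    have i1 := ih' q hq (fun p' h => hqP p' (Finset.mem_insert_of_mem h)) r
    have i2 : ∀ a, |((F (q * p) (cr a)).card : ℝ) - l / (q * p : ℕ) * M| ≤ 2 * E := fun a =>
      ih' (q * p) (Nat.mul_pos hq pp.pos) (fun p' h => Nat.Coprime.mul_left
        (hqP p' (Finset.mem_insert_of_mem h)) ((Nat.coprime_primes pp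
          (hP p' (Finset.mem_insert_of_mem h))).2 (by rintro rfl; exact hpP h))) (cr a)
    have hq0 : (q : ℝ) ≠ 0 := by positivity
    have hp0 : (p : ℝ) ≠ 0 := by have := pp.pos; positivity
    have e3 : ((F q r).card : ℝ) - ∑ a ∈ bad p, ((F (q * p) (cr a)).card : ℝ) -
        l / q * ((1 - ((bad p).card : ℝ) / p) * M) =
        (((F q r).card : ℝ) - l / q * M) -
          ∑ a ∈ bad p, (((F (q * p) (cr a)).card : ℝ) - l / (q * p : ℕ) * M) := by
      rw [Finset.sum_sub_distrib, Finset.sum_const, nsmul_eq_mul]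
      push_cast
      field_simp
      ring
    rw [e3]
    calc _ ≤ |((F q r).card : ℝ) - l / q * M| +
          |∑ a ∈ bad p, (((F (q * p) (cr a)).card : ℝ) - l / (q * p : ℕ) * M)| := abs_sub _ _
      _ ≤ 2 * E + ∑ a ∈ bad p, 2 * E := by
        refine add_le_add i1 ((Finset.abs_sum_le_sum_abs _ _).trans (Finset.sum_le_sum
          (fun a _ => i2 a)))
      _ = _ := by rw [Finset.sum_const, nsmul_eq_mul]; ring

/-- The set of indices `i` with `p ∣ n i`. -/
def pat (p : ℕ) (n : Fin 7 → ℕ) : Finset (Fin 7) := Finset.univ.filter (fun i => p ∣ n i)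

/-- The number of residue classes modulo `p` that the coprimality conditions on `y` and `z`
exclude, as a function of the set of torsor variables divisible by `p`. -/
def kap (T : Finset (Fin 7)) : ℕ :=
  (if (0 ∈ T ∨ 1 ∈ T ∨ 2 ∈ T ∨ 6 ∈ T) ∧ 4 ∉ T then 1 else 0) +
  (if 1 ∈ T ∧ 0 ∉ T ∧ 3 ∉ T then 1 else 0)

lemma mem_pat {p : ℕ} {n : Fin 7 → ℕ} {i : Fin 7} : i ∈ pat p n ↔ p ∣ n i := by simp [pat]

/-- The solutions of the torsor equation are `y = y₀ + a₂ r`, `z = z₀ - a₁ r`; at each prime the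
coprimality conditions exclude exactly `kap` residue classes of the parameter `r`. -/
lemma bad_exists (n : Fin 7 → ℕ) (hc : CopN n) (y₀ z₀ : ℤ)
    (e : (n 3 : ℤ) * y₀ + n 4 * z₀ + cN n = 0) (p : ℕ) (pp : p.Prime) :
    ∃ bad : Finset ℤ, bad.card = kap (pat p n) ∧
      (∀ a ∈ bad, ∀ b ∈ bad, a ≡ b [ZMOD p] → a = b) ∧
      ∀ r : ℤ, (((p ∣ n 0 ∨ p ∣ n 1 ∨ p ∣ n 2 ∨ p ∣ n 6) → ¬ (p : ℤ) ∣ y₀ + n 4 * r) ∧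
        (p ∣ n 1 → ¬ (p : ℤ) ∣ z₀ - n 3 * r)) ↔ ∀ a ∈ bad, ¬ r ≡ a [ZMOD p] := by
  have hp := Nat.prime_iff_prime_int.1 pp
  obtain ⟨⟨c1, c2, c3, c4⟩, ⟨c5, c6, c7⟩, ⟨c8, c9, c10⟩, ⟨c11, c12, c13⟩, c14, c15⟩ := hc
  have nd : ∀ {m n : ℕ}, IsCoprime (m : ℤ) (n : ℤ) → p ∣ m → p ∣ n → False :=
    fun h a b => hp.not_isUnit (h.isUnit_of_dvd' (Int.natCast_dvd_natCast.2 a)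
      (Int.natCast_dvd_natCast.2 b))
  have er : ∀ r : ℤ, (n 3 : ℤ) * (y₀ + n 4 * r) + n 4 * (z₀ - n 3 * r) + cN n = 0 := by
    intro r; linear_combination e
  have hcN : (p : ℤ) ∣ cN n → p ∣ n 0 ∨ p ∣ n 2 ∨ p ∣ n 5 ∨ p ∣ n 6 := by
    intro h
    have h := Int.natCast_dvd_natCast.1 h
    unfold cN at h
    rcases (pp.dvd_mul).1 h with h | h
    · rcases (pp.dvd_mul).1 h with h | h
      · rcases (pp.dvd_mul).1 h with h | h
        · exact Or.inl h
        · exact Or.inr (Or.inl (pp.dvd_of_dvd_pow h))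
      · tauto
    · exact Or.inr (Or.inr (Or.inr (pp.dvd_of_dvd_pow h)))
  simp only [kap, mem_pat]
  by_cases hA : p ∣ n 0 ∨ p ∣ n 1 ∨ p ∣ n 2 ∨ p ∣ n 6
  swap
  · have h1 : ¬ p ∣ n 1 := by tauto
    exact ⟨∅, by rw [if_neg (fun h => hA h.1), if_neg (fun h => h1 h.1)]; rfl, by simp, fun r =>
      ⟨fun _ a ha => by simp at ha, fun _ => ⟨fun h => (hA h).elim, fun h => (h1 h).elim⟩⟩⟩
  by_cases h1 : p ∣ n 1
  swap
  · have h4 : ¬ p ∣ n 4 := by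
      intro h4
      rcases hA with h | h | h | h
      exacts [nd c2 h h4, h1 h, nd c9 h h4, nd c15 h4 h]
    obtain ⟨ρ, hρ⟩ := linear_class p pp (n 4) y₀ (by rwa [Int.natCast_dvd_natCast])
    refine ⟨{ρ}, by rw [if_pos ⟨hA, h4⟩, if_neg (fun h => h1 h.1)]; rfl, by simp, fun r => ?_⟩
    simp only [Finset.mem_singleton, forall_eq, ← hρ]
    exact ⟨fun h => h.1 hA, fun h => ⟨fun _ => h, fun h' => (h1 h').elim⟩⟩
  by_cases h0 : p ∣ n 0
  · have h4 : ¬ p ∣ n 4 := fun h4 => nd c2 h0 h4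
    have h3 : ¬ p ∣ n 3 := fun h3 => nd c1 h0 h3
    obtain ⟨ρ, hρ⟩ := linear_class p pp (n 4) y₀ (by rwa [Int.natCast_dvd_natCast])
    refine ⟨{ρ}, by rw [if_pos ⟨hA, h4⟩, if_neg (fun h => h.2.1 h0)]; rfl, by simp, fun r => ?_⟩
    simp only [forall_prop_of_true hA, forall_prop_of_true h1, Finset.mem_singleton, forall_eq, ← hρ]
    refine ⟨fun h => h.1, fun h => ⟨h, fun h' => h ?_⟩⟩
    have h5 : (p : ℤ) ∣ cN n := by
      rw [Int.natCast_dvd_natCast]; unfold cN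
      exact Dvd.dvd.mul_right (Dvd.dvd.mul_right (Dvd.dvd.mul_right h0 _) _) _
    have h6 : (p : ℤ) ∣ n 3 * (y₀ + n 4 * r) := by
      have : (n 3 : ℤ) * (y₀ + n 4 * r) = -(n 4 * (z₀ - n 3 * r) + cN n) := by
        linear_combination er r
      rw [this, dvd_neg]
      exact dvd_add (Dvd.dvd.mul_left h' _) h5
    exact (hp.dvd_or_dvd h6).resolve_left (by rwa [Int.natCast_dvd_natCast])
  have hcn : ¬ (p : ℤ) ∣ cN n := by
    intro h
    rcases hcN h with h | h | h | h
    exacts [h0 h, nd c5 h1 h, nd c6 h1 h, nd c7 h1 h]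
  by_cases h3 : p ∣ n 3
  · have h4 : ¬ p ∣ n 4 := fun h4 => nd c11 h3 h4
    obtain ⟨ρ, hρ⟩ := linear_class p pp (n 4) y₀ (by rwa [Int.natCast_dvd_natCast])
    refine ⟨{ρ}, by rw [if_pos ⟨hA, h4⟩, if_neg (fun h => h.2.2 h3)]; rfl, by simp, fun r => ?_⟩
    simp only [forall_prop_of_true hA, forall_prop_of_true h1, Finset.mem_singleton, forall_eq, ← hρ]
    refine ⟨fun h => h.1, fun h => ⟨h, fun h' => hcn ?_⟩⟩
    have : (cN n : ℤ) = -(n 3 * (y₀ + n 4 * r) + n 4 * (z₀ - n 3 * r)) := by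
      linear_combination er r
    rw [this, dvd_neg]
    exact dvd_add (Dvd.dvd.mul_right (Int.natCast_dvd_natCast.2 h3) _) (Dvd.dvd.mul_left h' _)
  obtain ⟨ρ', hρ'⟩ := linear_class p pp (-(n 3 : ℤ)) z₀
    (by rwa [dvd_neg, Int.natCast_dvd_natCast])
  have hρ'' : ∀ r : ℤ, (p : ℤ) ∣ z₀ - n 3 * r ↔ r ≡ ρ' [ZMOD p] := by
    intro r; rw [← hρ']; ring_nf
  by_cases h4 : p ∣ n 4
  · refine ⟨{ρ'}, by rw [if_neg (fun h => h.2 h4), if_pos ⟨h1, h0, h3⟩]; rfl, by simp, fun r => ?_⟩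
    simp only [forall_prop_of_true hA, forall_prop_of_true h1, Finset.mem_singleton, forall_eq, ← hρ'']
    refine ⟨fun h => h.2, fun h => ⟨fun h' => hcn ?_, h⟩⟩
    have : (cN n : ℤ) = -(n 3 * (y₀ + n 4 * r) + n 4 * (z₀ - n 3 * r)) := by
      linear_combination er r
    rw [this, dvd_neg]
    exact dvd_add (Dvd.dvd.mul_left h' _) (Dvd.dvd.mul_right (Int.natCast_dvd_natCast.2 h4) _)
  · obtain ⟨ρ, hρ⟩ := linear_class p pp (n 4) y₀ (by rwa [Int.natCast_dvd_natCast])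
    have hne : ¬ ρ ≡ ρ' [ZMOD p] := by
      intro h
      apply hcn
      have k1 := (hρ ρ).2 (Int.ModEq.refl _)
      have k2 := (hρ'' ρ).2 h
      have : (cN n : ℤ) = -(n 3 * (y₀ + n 4 * ρ) + n 4 * (z₀ - n 3 * ρ)) := by
        linear_combination er ρ
      rw [this, dvd_neg]
      exact dvd_add (Dvd.dvd.mul_left k1 _) (Dvd.dvd.mul_left k2 _)
    have hne' : ρ ≠ ρ' := by rintro rfl; exact hne (Int.ModEq.refl _)
    refine ⟨{ρ, ρ'}, by rw [if_pos ⟨hA, h4⟩, if_pos ⟨h1, h0, h3⟩, Finset.card_pair hne'], ?_, fun r => ?_⟩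
    · intro a ha b hb hab
      simp only [Finset.mem_insert, Finset.mem_singleton] at ha hb
      rcases ha with rfl | rfl <;> rcases hb with rfl | rfl
      · rfl
      · exact (hne hab).elim
      · exact (hne hab.symm).elim
      · rfl
    · simp only [forall_prop_of_true hA, forall_prop_of_true h1, Finset.mem_insert, Finset.mem_singleton, forall_eq_or_imp,
        forall_eq, ← hρ, ← hρ'']

/-! ### Counting the last variable -/

/-- The number of integers in a bounded interval differs from its length by at most one. -/
lemma ord_count (S : Set ℝ) (hS : S.OrdConnected) (c : ℝ) (hb : S ⊆ Set.Icc (-c) c) (F : Finset ℤ)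
    (hF : ∀ r : ℤ, r ∈ F ↔ (r : ℝ) ∈ S) : |(F.card : ℝ) - (volume S).toReal| ≤ 1 := by
  have hfin : volume S ≠ ⊤ :=
    ((measure_mono hb).trans_lt (by rw [Real.volume_Icc]; exact ENNReal.ofReal_lt_top)).ne
  have key : ∀ a b : ℝ, a ≤ b → S ⊆ Set.Icc a b → (volume S).toReal ≤ b - a := by
    intro a b hab h
    have := ENNReal.toReal_mono (by rw [Real.volume_Icc]; exact ENNReal.ofReal_ne_top)
      (measure_mono (μ := volume) h)
    rwa [Real.volume_Icc, ENNReal.toReal_ofReal (by linarith)] at this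
  have h0 : 0 ≤ (volume S).toReal := ENNReal.toReal_nonneg
  rcases F.eq_empty_or_nonempty with rfl | hne
  · simp only [Finset.card_empty, Nat.cast_zero, zero_sub, abs_neg]
    rw [abs_of_nonneg h0]
    rcases S.eq_empty_or_nonempty with rfl | ⟨x, hx⟩
    · simp
    have : S ⊆ Set.Icc (⌊x⌋ : ℝ) (⌊x⌋ + 1) := by
      intro z hz
      constructor
      · by_contra hlt
        push Not at hlt
        have := (hF ⌊x⌋).2 (hS.out hz hx ⟨hlt.le, Int.floor_le x⟩)
        simp at this
      · by_contra hlt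
        push Not at hlt
        have := (hF (⌊x⌋ + 1)).2 (hS.out hx hz ⟨by push_cast; exact (Int.lt_floor_add_one x).le,
          by push_cast; exact hlt.le⟩)
        simp at this
    have := key _ _ (by linarith) this
    linarith
  · set a := F.min' hne
    set b := F.max' hne
    have ha : (a : ℝ) ∈ S := (hF a).1 (F.min'_mem hne)
    have hb' : (b : ℝ) ∈ S := (hF b).1 (F.max'_mem hne)
    have hab : a ≤ b := F.min'_le _ (F.max'_mem hne)
    have hFI : F = Finset.Icc a b := by
      ext r
      rw [Finset.mem_Icc]
      constructor
      · exact fun h => ⟨F.min'_le _ h, F.le_max' _ h⟩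
      · rintro ⟨h1, h2⟩
        exact (hF r).2 (hS.out ha hb' ⟨by exact_mod_cast h1, by exact_mod_cast h2⟩)
    have hcard : (F.card : ℝ) = b - a + 1 := by
      rw [hFI, Int.card_Icc]
      have : ((b + 1 - a).toNat : ℤ) = b + 1 - a := Int.toNat_of_nonneg (by omega)
      have h2 : (((b + 1 - a).toNat : ℤ) : ℝ) = ((b + 1 - a : ℤ) : ℝ) := by rw [this]
      push_cast at h2
      rw [h2]; ring
    have habR : (a : ℝ) ≤ b := by exact_mod_cast hab
    have l1 : (b : ℝ) - a ≤ (volume S).toReal := by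
      have := ENNReal.toReal_mono hfin (measure_mono (μ := volume) (hS.out ha hb'))
      rwa [Real.volume_Icc, ENNReal.toReal_ofReal (by linarith)] at this
    have l2 : S ⊆ Set.Icc ((a : ℝ) - 1) (b + 1) := by
      intro z hz
      constructor
      · by_contra hlt
        push Not at hlt
        have := (hF (a - 1)).2 (hS.out hz ha ⟨by push_cast; exact hlt.le, by push_cast; linarith⟩)
        have := F.min'_le _ this
        change a ≤ a - 1 at this
        omega
      · by_contra hlt
        push Not at hlt
        have := (hF (b + 1)).2 (hS.out hb' hz ⟨by push_cast; linarith, by push_cast; exact hlt.le⟩)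
        have := F.le_max' _ this
        change b + 1 ≤ b at this
        omega
    have := key _ _ (by linarith) l2
    rw [abs_le]; constructor <;> linarith

/-- Volume of the preimage of a set under an affine map. -/
lemma vol_affine (S : Set ℝ) (α β : ℝ) (hβ : 0 < β) :
    (volume {x : ℝ | α + β * x ∈ S}).toReal = (volume S).toReal / β := by
  have : {x : ℝ | α + β * x ∈ S} = (fun x => β * x) ⁻¹' ((fun x => α + x) ⁻¹' S) := rfl
  rw [this, Real.volume_preimage_mul_left hβ.ne', measure_preimage_add, ENNReal.toReal_mul,
    ENNReal.toReal_ofReal (abs_nonneg _), abs_of_pos (inv_pos.2 hβ)]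
  ring

/-- The region cut out by the two height conditions on `x₀`. -/
def Om (B h M : ℝ) : Set ℝ := {x | |x| ≤ B ∧ |x * (x + h)| ≤ M}

lemma quad_convex (h : ℝ) : ConvexOn ℝ Set.univ (fun x : ℝ => x ^ 2 + h * x) :=
  (Even.convexOn_pow (by decide)).add ((LinearMap.mulLeft ℝ h).convexOn convex_univ)

/-- `Om` is a difference of two nested intervals, so that arithmetic progressions meet it in the
expected number of points, up to an error of two. -/
lemma om_count (B h M α β : ℝ) (hM : 0 ≤ M) (hβ : 0 < β) (F : Finset ℤ)
    (hF : ∀ r : ℤ, r ∈ F ↔ α + β * r ∈ Om B h M) :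
    |(F.card : ℝ) - (volume (Om B h M)).toReal / β| ≤ 2 := by
  set S1 : Set ℝ := {x | |x| ≤ B ∧ x ^ 2 + h * x ≤ M} with hS1
  set S2 : Set ℝ := {x | |x| ≤ B ∧ x ^ 2 + h * x < -M} with hS2
  have c1 : S1.OrdConnected := by
    have e : S1 = Set.Icc (-B) B ∩ {x | x ∈ Set.univ ∧ x ^ 2 + h * x ≤ M} := by
      ext x; simp [hS1, abs_le]
    rw [e]
    exact Set.ordConnected_Icc.inter ((quad_convex h).convex_le M).ordConnected
  have c2 : S2.OrdConnected := by
    have e : S2 = Set.Icc (-B) B ∩ {x | x ∈ Set.univ ∧ x ^ 2 + h * x < -M} := by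
      ext x; simp [hS2, abs_le]
    rw [e]
    exact Set.ordConnected_Icc.inter ((quad_convex h).convex_lt (-M)).ordConnected
  have hdiff : Om B h M = S1 \ S2 := by
    ext x
    simp only [Om, hS1, hS2, Set.mem_ofPred_eq, Set.mem_sdiff, abs_le, not_and, not_lt]
    constructor
    · rintro ⟨h1, h2, h3⟩
      exact ⟨⟨h1, by nlinarith⟩, fun _ => by nlinarith⟩
    · rintro ⟨⟨h1, h2⟩, h3⟩
      exact ⟨h1, by nlinarith [h3 h1], by nlinarith⟩
  have hsub : S2 ⊆ S1 := fun x hx => ⟨hx.1, by linarith [hx.2]⟩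
  have m2 : MeasurableSet S2 := c2.measurableSet
  have bd : ∀ S : Set ℝ, S ⊆ Set.Icc (-B) B → volume S ≠ ⊤ := fun S hS =>
    ((measure_mono hS).trans_lt (by rw [Real.volume_Icc]; exact ENNReal.ofReal_lt_top)).ne
  have b1 : S1 ⊆ Set.Icc (-B) B := fun x hx => abs_le.1 hx.1
  have b2 : S2 ⊆ Set.Icc (-B) B := fun x hx => abs_le.1 hx.1
  have hvol : (volume (Om B h M)).toReal = (volume S1).toReal - (volume S2).toReal := by
    rw [hdiff, measure_sdiff hsub m2.nullMeasurableSet (bd _ b2),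
      ENNReal.toReal_sub_of_le (measure_mono hsub) (bd _ b1)]
  have haff : ∀ S : Set ℝ, S.OrdConnected → {x : ℝ | α + β * x ∈ S}.OrdConnected := by
    intro S hS
    exact hS.preimage_mono (f := fun x => α + β * x)
      (fun x y hxy => by simp only; nlinarith)
  have hbd : ∀ S : Set ℝ, S ⊆ Set.Icc (-B) B → {x : ℝ | α + β * x ∈ S} ⊆
      Set.Icc (-((|B| + |α|) / β)) ((|B| + |α|) / β) := by
    intro S hS x hx
    have := hS hx
    have k1 := le_abs_self B
    have k3 := neg_abs_le α
    have k4 := le_abs_self α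
    have k5 : |x| ≤ (|B| + |α|) / β := by
      rw [le_div_iff₀ hβ, ← abs_of_pos hβ, ← abs_mul, abs_le]
      constructor <;> nlinarith [this.1, this.2]
    exact abs_le.1 k5
  have hfin : ∀ S : Set ℝ, S ⊆ Set.Icc (-B) B → {r : ℤ | α + β * r ∈ S}.Finite := by
    intro S hS
    apply (Set.finite_Icc (-⌈(|B| + |α|) / β⌉) ⌈(|B| + |α|) / β⌉).subset
    intro r hr
    have := hbd S hS (show (r : ℝ) ∈ _ from hr)
    have k := Int.le_ceil ((|B| + |α|) / β)
    constructor
    · have : ((-⌈(|B| + |α|) / β⌉ : ℤ) : ℝ) ≤ r := by push_cast; linarith [this.1]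
      exact_mod_cast this
    · have : (r : ℝ) ≤ (⌈(|B| + |α|) / β⌉ : ℤ) := by linarith [this.2]
      exact_mod_cast this
  set F1 := (hfin S1 b1).toFinset
  set F2 := (hfin S2 b2).toFinset
  have k1 := ord_count _ (haff S1 c1) _ (hbd S1 b1) F1 (fun r => by simp [F1])
  have k2 := ord_count _ (haff S2 c2) _ (hbd S2 b2) F2 (fun r => by simp [F2])
  rw [vol_affine _ _ _ hβ] at k1 k2
  have hF12 : F = F1 \ F2 := by
    ext r
    rw [hF, hdiff]
    simp [F1, F2]
  have hsF : F2 ⊆ F1 := by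
    intro r hr
    simp only [F1, F2, Set.Finite.mem_toFinset, Set.mem_ofPred_eq] at hr ⊢
    exact hsub hr
  have hcard : (F.card : ℝ) = F1.card - F2.card := by
    rw [hF12, Finset.card_sdiff_of_subset hsF, Nat.cast_sub (Finset.card_le_card hsF)]
  rw [hcard, hvol, sub_div]
  rw [abs_le] at *
  constructor <;> linarith

/-- The normalized volume of `Om`. -/
noncomputable def phi2 (h m : ℝ) : ℝ := (volume (Om 1 h m)).toReal

lemma vol_Om (B h M : ℝ) (hB : 0 < B) :
    (volume (Om B h (B * M))).toReal = B * phi2 (h / B) (M / B) := by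
  have := vol_affine (Om B h (B * M)) 0 B hB
  have e : {x : ℝ | 0 + B * x ∈ Om B h (B * M)} = Om 1 (h / B) (M / B) := by
    ext x
    simp only [Om, Set.mem_ofPred_eq, zero_add]
    rw [abs_mul, abs_of_pos hB]
    have e1 : B * x * (B * x + h) = B ^ 2 * (x * (x + h / B)) := by field_simp
    rw [e1, abs_mul, abs_of_pos (pow_pos hB 2)]
    have i1 : B * |x| ≤ B ↔ |x| ≤ 1 := by
      constructor
      · intro h; nlinarith
      · intro h; nlinarith
    have i2 : B ^ 2 * |x * (x + h / B)| ≤ B * M ↔ |x * (x + h / B)| ≤ M / B := by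
      rw [le_div_iff₀ hB]
      constructor
      · intro h; nlinarith
      · intro h; nlinarith
    rw [i1, i2]
  rw [e] at this
  rw [phi2, this]; field_simp

lemma prod7 (n : Fin 7 → ℕ) : ∏ i, n i = kN n * n 4 := by
  rw [Fin.prod_univ_seven, kN]; ring

/-- The number of admissible `y` for fixed torsor variables. -/
lemma count_y (B : ℝ) (hB : 0 < B) (n : Fin 7 → ℕ) (hn : ∀ i, 0 < n i) (hc : CopN n)
    (P : Finset ℕ) (hP : ∀ p ∈ P, p.Prime) (hPn : ∀ p : ℕ, p.Prime → ∀ i, p ∣ n i → p ∈ P) :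
    |(({y : ℤ | GoodY n y ∧ HtY B n y}).ncard : ℝ) -
      B * phi2 (X3 n / B) (X2 n / B) / (∏ i, (n i : ℝ)) * ∏ p ∈ P, (1 - (kap (pat p n) : ℝ) / p)|
      ≤ 2 * ∏ p ∈ P, (1 + (kap (pat p n) : ℝ)) := by
  classical
  have hcop : IsCoprime (n 3 : ℤ) (n 4 : ℤ) := by
    obtain ⟨-, -, -, ⟨h, -, -⟩, -⟩ := hc
    exact h
  obtain ⟨x, w, hxw⟩ := hcop
  set y₀ : ℤ := -(x * cN n)
  set z₀ : ℤ := -(w * cN n)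
  have e : (n 3 : ℤ) * y₀ + n 4 * z₀ + cN n = 0 := by
    simp only [y₀, z₀]; linear_combination (-(cN n : ℤ)) * hxw
  have h4 : (0 : ℤ) < n 4 := by exact_mod_cast hn 4
  have hb : ∀ p : ℕ, ∃ bad : Finset ℤ, p.Prime → (bad.card = kap (pat p n) ∧
      (∀ a ∈ bad, ∀ b ∈ bad, a ≡ b [ZMOD p] → a = b) ∧
      ∀ r : ℤ, (((p ∣ n 0 ∨ p ∣ n 1 ∨ p ∣ n 2 ∨ p ∣ n 6) → ¬ (p : ℤ) ∣ y₀ + n 4 * r) ∧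
        (p ∣ n 1 → ¬ (p : ℤ) ∣ z₀ - n 3 * r)) ↔ ∀ a ∈ bad, ¬ r ≡ a [ZMOD p]) := by
    intro p
    by_cases pp : p.Prime
    · obtain ⟨bad, hbad⟩ := bad_exists n hc y₀ z₀ e p pp
      exact ⟨bad, fun _ => hbad⟩
    · exact ⟨∅, fun h => (pp h).elim⟩
  choose bad hbad using hb
  have hgood : ∀ r : ℤ, GoodY n (y₀ + n 4 * r) ↔ ∀ p ∈ P, ∀ a ∈ bad p, ¬ r ≡ a [ZMOD p] := by
    intro r
    have er : (n 3 : ℤ) * (y₀ + n 4 * r) + cN n = n 4 * (-(z₀ - n 3 * r)) := by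
      linear_combination e
    have hz : ∀ p : ℕ, ((n 4 * p : ℕ) : ℤ) ∣ n 3 * (y₀ + n 4 * r) + cN n ↔
        (p : ℤ) ∣ z₀ - n 3 * r := by
      intro p
      rw [er]; push_cast
      rw [mul_dvd_mul_iff_left h4.ne', dvd_neg]
    constructor
    · rintro ⟨-, g1, g2⟩ p hp
      have pp := hP p hp
      refine ((hbad p pp).2.2 r).1 ⟨g1 p pp, fun h => ?_⟩
      rw [← hz]; exact g2 p pp h
    · intro h
      refine ⟨⟨_, er⟩, fun p pp hd => ?_, fun p pp hd => ?_⟩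
      · have hp : p ∈ P := by
          rcases hd with hd | hd | hd | hd <;> exact hPn p pp _ hd
        exact (((hbad p pp).2.2 r).2 (h p hp)).1 hd
      · rw [hz]
        exact (((hbad p pp).2.2 r).2 (h p (hPn p pp _ hd))).2 hd
  have hk : 0 < kN n := by
    have := hn 0; have := hn 1; have := hn 2; have := hn 3; have := hn 5; have := hn 6
    unfold kN; positivity
  have hkR : (0 : ℝ) < kN n := by exact_mod_cast hk
  have h4R : (0 : ℝ) < n 4 := by exact_mod_cast hn 4
  have hHt : ∀ y : ℤ, HtY B n y ↔ (kN n : ℝ) * y ∈ Om B (X3 n) (B * X2 n) := fun y => Iff.rfl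
  have hfin : {r : ℤ | HtY B n (y₀ + n 4 * r)}.Finite := by
    have f1 : {y : ℤ | HtY B n y}.Finite := by
      apply (Set.finite_Icc (-⌈B⌉) ⌈B⌉).subset
      intro y hy
      have h1 : |(kN n : ℝ) * y| ≤ B := hy.1
      rw [abs_mul, abs_of_pos hkR] at h1
      have h2 : |(y : ℝ)| ≤ B := by
        have : (1 : ℝ) ≤ kN n := by exact_mod_cast hk
        nlinarith [abs_nonneg (y : ℝ)]
      have h3 := abs_le.1 (h2.trans (Int.le_ceil B))
      exact ⟨by exact_mod_cast h3.1, by exact_mod_cast h3.2⟩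
    exact f1.preimage (f := fun r : ℤ => y₀ + n 4 * r)
      (fun a _ b _ h => mul_left_cancel₀ h4.ne' (add_left_cancel h))
  set A := hfin.toFinset with hAdef
  have hmemA : ∀ r : ℤ, r ∈ A ↔ HtY B n (y₀ + n 4 * r) := fun r => by simp [A]
  set l := (volume (Om B (X3 n) (B * X2 n))).toReal / (kN n * n 4) with hl
  have hAQ : ∀ Q : ℕ, 0 < Q → ∀ r : ℤ,
      |((A.filter (fun y => y ≡ r [ZMOD Q])).card : ℝ) - l / Q| ≤ 2 := by
    intro Q hQ r
    have hQR : (0 : ℝ) < Q := by exact_mod_cast hQ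
    have hQZ : (Q : ℤ) ≠ 0 := by exact_mod_cast hQ.ne'
    set G : Finset ℤ := (A.filter (fun y => y ≡ r [ZMOD Q])).image (fun y => (y - r) / Q) with hG
    have hGc : G.card = (A.filter (fun y => y ≡ r [ZMOD Q])).card := by
      apply Finset.card_image_of_injOn
      intro a ha b hb hab
      simp only [Finset.coe_filter, Set.mem_ofPred_eq] at ha hb
      obtain ⟨u, hu⟩ := ha.2.symm.dvd
      obtain ⟨v, hv⟩ := hb.2.symm.dvd
      simp only [hu, hv, Int.mul_ediv_cancel_left _ hQZ] at hab
      rw [hab, ← hv] at hu; linarith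
    have hGm : ∀ m : ℤ, m ∈ G ↔ (kN n : ℝ) * (y₀ + n 4 * r) + (kN n * n 4 * Q) * m ∈
        Om B (X3 n) (B * X2 n) := by
      intro m
      have e1 : (kN n : ℝ) * (y₀ + n 4 * r) + (kN n * n 4 * Q) * m =
          (kN n : ℝ) * ((y₀ + n 4 * (r + Q * m) : ℤ) : ℝ) := by push_cast; ring
      rw [e1, ← hHt, ← hmemA, hG, Finset.mem_image]
      constructor
      · rintro ⟨a, ha, rfl⟩
        rw [Finset.mem_filter] at ha
        obtain ⟨u, hu⟩ := ha.2.symm.dvd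
        rw [hu, Int.mul_ediv_cancel_left _ hQZ, ← hu]
        simpa using ha.1
      · intro h
        refine ⟨r + Q * m, Finset.mem_filter.2 ⟨h, ?_⟩, ?_⟩
        · rw [Int.modEq_iff_dvd]; exact ⟨-m, by ring⟩
        · rw [add_sub_cancel_left, Int.mul_ediv_cancel_left _ hQZ]
    have := om_count B (X3 n) (B * X2 n) _ (kN n * n 4 * Q) (by positivity) (by positivity) G hGm
    rw [hGc] at this
    rw [hl, div_div]; exact this
  have hs := sieve A l hAQ bad P hP (fun p hp => (hbad p (hP p hp)).2.1) 1 one_pos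
    (fun p _ => Nat.coprime_one_left p) 0
  have hcard : ({y : ℤ | GoodY n y ∧ HtY B n y}).ncard = (A.filter (fun y => y ≡ 0 [ZMOD (1 : ℕ)] ∧
      ∀ p ∈ P, ∀ a ∈ bad p, ¬ y ≡ a [ZMOD p])).card := by
    rw [← Set.ncard_coe_finset]
    symm
    apply Set.ncard_congr (fun r _ => y₀ + n 4 * r)
    · intro r hr
      simp only [Finset.coe_filter, Set.mem_ofPred_eq] at hr ⊢
      exact ⟨(hgood r).2 hr.2.2, (hmemA r).1 hr.1⟩
    · intro a b _ _ h
      exact mul_left_cancel₀ h4.ne' (add_left_cancel h)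
    · intro y hy
      have hd : (n 4 : ℤ) ∣ n 3 * (y - y₀) := by
        have := hy.1.1
        have e2 : (n 3 : ℤ) * (y - y₀) = (n 3 * y + cN n) + n 4 * z₀ := by linear_combination -e
        rw [e2]; exact dvd_add this (Dvd.intro _ rfl)
      have hco : IsCoprime (n 4 : ℤ) (n 3 : ℤ) := ⟨w, x, by linear_combination hxw⟩
      obtain ⟨r, hr⟩ := hco.dvd_of_dvd_mul_left hd
      have hy' : y = y₀ + n 4 * r := by linarith
      refine ⟨r, ?_, hy'.symm⟩
      simp only [Finset.coe_filter, Set.mem_ofPred_eq]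
      rw [hy'] at hy
      exact ⟨(hmemA r).2 hy.2, by simpa using Int.modEq_one, (hgood r).1 hy.1⟩
  have p1 : ∏ p ∈ P, (1 - ((bad p).card : ℝ) / p) = ∏ p ∈ P, (1 - (kap (pat p n) : ℝ) / p) :=
    Finset.prod_congr rfl (fun p hp => by rw [(hbad p (hP p hp)).1])
  have p2 : ∏ p ∈ P, (1 + ((bad p).card : ℝ)) = ∏ p ∈ P, (1 + (kap (pat p n) : ℝ)) :=
    Finset.prod_congr rfl (fun p hp => by rw [(hbad p (hP p hp)).1])
  rw [p1, p2, ← hcard, hl, vol_Om _ _ _ hB] at hs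
  have p3 : ∏ i, (n i : ℝ) = kN n * n 4 := by
    have := prod7 n
    exact_mod_cast this
  rw [p3]
  simpa using hs

/-! ### Harmonic sums -/

/-- The positive part of a real number. -/
noncomputable def pp (x : ℝ) : ℝ := max x 0

lemma pp_nonneg (x : ℝ) : 0 ≤ pp x := le_max_right _ _

lemma pp_mono {x y : ℝ} (h : x ≤ y) : pp x ≤ pp y := max_le_max_right _ h

lemma pp_of_nonneg {x : ℝ} (h : 0 ≤ x) : pp x = x := max_eq_left h

lemma pp_of_nonpos {x : ℝ} (h : x ≤ 0) : pp x = 0 := max_eq_right h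

lemma pp_sq (x : ℝ) : pp x * x = pp x ^ 2 := by
  rcases le_total 0 x with h | h
  · rw [pp_of_nonneg h]; ring
  · rw [pp_of_nonpos h]; ring

lemma hasDerivAt_pp (k : ℕ) (x : ℝ) :
    HasDerivAt (fun x => pp x ^ (k + 2)) ((k + 2) * pp x ^ (k + 1)) x := by
  rcases lt_trichotomy x 0 with h | rfl | h
  · have : (fun x => pp x ^ (k + 2)) =ᶠ[nhds x] fun _ => (0 : ℝ) := by
      filter_upwards [gt_mem_nhds h] with y hy
      rw [pp_of_nonpos hy.le]; simp
    rw [pp_of_nonpos h.le]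
    simpa using (hasDerivAt_const x (0 : ℝ)).congr_of_eventuallyEq this
  · have h0 : pp 0 = 0 := by simp [pp]
    rw [h0, hasDerivAt_iff_isLittleO_nhds_zero]
    simp only [h0]
    have : (fun h : ℝ => pp (0 + h) ^ (k + 2) - 0 ^ (k + 2) - h • ((k + 2 : ℝ) * 0 ^ (k + 1)))
        =O[nhds 0] fun h : ℝ => h ^ 2 * |h| ^ k := by
      apply Asymptotics.isBigO_of_le
      intro h
      have e : pp h ≤ |h| := max_le (le_abs_self h) (abs_nonneg h)
      have e2 : pp h ^ (k + 2) ≤ |h| ^ (k + 2) := pow_le_pow_left₀ (pp_nonneg h) e _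
      simp only [zero_add, Real.norm_eq_abs]
      rw [zero_pow (by omega), zero_pow (by omega), abs_mul, abs_pow, abs_pow, abs_abs]
      simp only [sub_zero, mul_zero, smul_zero]
      rw [abs_of_nonneg (pow_nonneg (pp_nonneg h) _)]
      calc _ ≤ |h| ^ (k + 2) := e2
        _ = _ := by ring
    refine this.trans_isLittleO ?_
    have l1 : (fun h : ℝ => h ^ 2) =o[nhds 0] fun h : ℝ => h := by
      simpa using Asymptotics.isLittleO_pow_pow (𝕜 := ℝ) (m := 1) (n := 2) (by norm_num)
    have l2 : (fun h : ℝ => |h| ^ k) =O[nhds 0] fun _ => (1 : ℝ) :=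
      Filter.Tendsto.isBigO_one ℝ ((continuous_abs.pow k).tendsto 0)
    simpa using l1.mul_isBigO l2
  · have : (fun x => pp x ^ (k + 2)) =ᶠ[nhds x] fun x => x ^ (k + 2) := by
      filter_upwards [lt_mem_nhds h] with y hy
      rw [pp_of_nonneg hy.le]
    rw [pp_of_nonneg h.le]
    have h2 := hasDerivAt_pow (k + 2) x
    push_cast at h2
    exact h2.congr_of_eventuallyEq this

/-- Comparison of `∑ f (log n) / n` with an antiderivative of a decreasing function `f`. -/
lemma sum_log (f F : ℝ → ℝ) (k N : ℕ) (hk : 1 ≤ k) (hkN : k ≤ N)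
    (hF : ∀ x, HasDerivAt F (f x) x) (anti : AntitoneOn f (Set.Ici (Real.log k)))
    (hpos : ∀ x, Real.log k ≤ x → 0 ≤ f x) :
    F (Real.log (N + 1)) - F (Real.log k) ≤ ∑ n ∈ Finset.Icc k N, f (Real.log n) / n ∧
    ∑ n ∈ Finset.Icc k N, f (Real.log n) / n ≤
      f (Real.log k) + (F (Real.log N) - F (Real.log k)) := by
  have step : ∀ n : ℕ, k ≤ n → f (Real.log (n + 1)) / (n + 1) ≤
      F (Real.log (n + 1)) - F (Real.log n) ∧
      F (Real.log (n + 1)) - F (Real.log n) ≤ f (Real.log n) / n := by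
    intro n hn
    have hn0 : (0 : ℝ) < n := by exact_mod_cast (by omega : 0 < n)
    have hk0 : (0 : ℝ) < k := by exact_mod_cast (by omega : 0 < k)
    have hnk : (k : ℝ) ≤ n := by exact_mod_cast hn
    have hd : ∀ x : ℝ, 0 < x → HasDerivAt (fun x => F (Real.log x)) (f (Real.log x) / x) x := by
      intro x hx
      have := (hF (Real.log x)).comp x (Real.hasDerivAt_log hx.ne')
      simpa [div_eq_mul_inv, Function.comp_def] using this
    obtain ⟨c, hc, hc'⟩ := exists_hasDerivAt_eq_slope (fun x => F (Real.log x))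
      (fun x => f (Real.log x) / x) (show (n : ℝ) < n + 1 by linarith)
      (fun x hx => (hd x (hn0.trans_le hx.1)).continuousAt.continuousWithinAt)
      (fun x hx => hd x (hn0.trans hx.1))
    have hc0 : 0 < c := hn0.trans hc.1
    have e : F (Real.log (n + 1)) - F (Real.log n) = f (Real.log c) / c := by
      rw [hc']; ring
    rw [e]
    have lk : ∀ x : ℝ, (n : ℝ) ≤ x → Real.log k ≤ Real.log x := fun x hx =>
      Real.log_le_log hk0 (hnk.trans hx)
    constructor
    · apply div_le_div₀ (hpos _ (lk c hc.1.le)) _ hc0 hc.2.le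
      exact anti (lk c hc.1.le) (lk _ (by linarith)) (Real.log_le_log hc0 hc.2.le)
    · apply div_le_div₀ (hpos _ (lk n le_rfl)) _ hn0 hc.1.le
      exact anti (lk n le_rfl) (lk c hc.1.le) (Real.log_le_log hn0 hc.1.le)
  induction N, hkN using Nat.le_induction with
  | base =>
    simp only [Finset.Icc_self, Finset.sum_singleton, sub_self, add_zero]
    refine ⟨(step k le_rfl).2, ?_⟩
    have h1 : (1 : ℝ) ≤ k := by exact_mod_cast hk
    exact div_le_self (hpos _ le_rfl) h1
  | succ N hN ih =>
    rw [← Finset.insert_Icc_right_eq_Icc_add_one (by omega : k ≤ N + 1),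
      Finset.sum_insert (by simp)]
    have s1 := step N hN
    have s2 := step (N + 1) (by omega)
    push_cast at s2 ⊢
    constructor <;> linarith [ih.1, ih.2, s1.1, s1.2, s2.1, s2.2]

lemma harm_le (N : ℕ) (hN : 1 ≤ N) :
    ∑ n ∈ Finset.Icc 1 N, (1 : ℝ) / n ≤ 1 + Real.log N := by
  have := (sum_log (fun _ => 1) id 1 N le_rfl hN (fun x => hasDerivAt_id x)
    (fun _ _ _ _ _ => le_rfl) (fun _ _ => zero_le_one)).2
  simpa using this

/-- Symmetrization of a double sum. -/
lemma sum_symm (N : ℕ) (g : ℕ → ℕ → ℝ) (hg : ∀ t u, g t u = g u t) :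
    ∑ t ∈ Finset.Icc 1 N, ∑ u ∈ Finset.Icc 1 N, g t u =
      2 * ∑ u ∈ Finset.Icc 1 N, ∑ t ∈ Finset.Icc u N, g t u - ∑ u ∈ Finset.Icc 1 N, g u u := by
  induction N with
  | zero => simp
  | succ N ih =>
    have hI : Finset.Icc 1 (N + 1) = insert (N + 1) (Finset.Icc 1 N) :=
      (Finset.insert_Icc_right_eq_Icc_add_one (by omega)).symm
    have hI' : ∀ u ∈ Finset.Icc 1 N, ∑ t ∈ Finset.Icc u (N + 1), g t u =
        g (N + 1) u + ∑ t ∈ Finset.Icc u N, g t u := by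
      intro u hu
      rw [Finset.mem_Icc] at hu
      rw [← Finset.insert_Icc_right_eq_Icc_add_one (by omega), Finset.sum_insert (by simp)]
    have hni : N + 1 ∉ Finset.Icc 1 N := by simp
    rw [hI, Finset.sum_insert hni, Finset.sum_insert hni, Finset.sum_insert hni,
      Finset.sum_insert hni, Finset.sum_congr rfl hI', Finset.sum_add_distrib]
    have h3 : ∀ t ∈ Finset.Icc 1 N, ∑ u ∈ insert (N + 1) (Finset.Icc 1 N), g t u =
        g (N + 1) t + ∑ u ∈ Finset.Icc 1 N, g t u := by
      intro t _
      rw [Finset.sum_insert hni, hg]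
    rw [Finset.sum_congr rfl h3, Finset.sum_add_distrib, ih]
    simp only [Finset.Icc_self, Finset.sum_singleton]
    ring

/-- The sum over `s`. -/
lemma sum_s (L δ q : ℝ) (N : ℕ) (hN : 1 ≤ N) (hL : L ≤ Real.log (N + 1)) (hδ : 0 ≤ δ)
    (hq : q ≤ L) (hδq : q + δ ≤ L) :
    |∑ s ∈ Finset.Icc 1 N, pp (q - 2 * Real.log s) * pp (q - 2 * Real.log s + δ) / s -
      (pp q ^ 3 / 6 + δ * pp q ^ 2 / 4)| ≤ pp L ^ 2 := by
  have e : ∀ a, pp a * pp (a + δ) = pp a ^ 2 + δ * pp a := by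
    intro a
    rcases le_total 0 a with h | h
    · rw [pp_of_nonneg h, pp_of_nonneg (by linarith)]; ring
    · rw [pp_of_nonpos h]; ring
  have hd : ∀ x, HasDerivAt (fun x => -(pp (q - 2 * x) ^ 3 / 6 + δ * pp (q - 2 * x) ^ 2 / 4))
      (pp (q - 2 * x) * pp (q - 2 * x + δ)) x := by
    intro x
    have h1 : HasDerivAt (fun x : ℝ => q - 2 * x) (-2) x := by
      simpa using ((hasDerivAt_id x).const_mul 2).const_sub q
    have h3 := (hasDerivAt_pp 1 (q - 2 * x)).comp x h1
    have h2 := (hasDerivAt_pp 0 (q - 2 * x)).comp x h1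
    have := ((h3.div_const 6).add ((h2.const_mul δ).div_const 4)).neg
    refine HasDerivAt.congr_deriv this ?_
    rw [e]; push_cast; ring
  have hanti : ∀ x y : ℝ, x ≤ y → pp (q - 2 * y) * pp (q - 2 * y + δ) ≤
      pp (q - 2 * x) * pp (q - 2 * x + δ) := fun x y h =>
    mul_le_mul (pp_mono (by linarith)) (pp_mono (by linarith)) (pp_nonneg _) (pp_nonneg _)
  have := sum_log _ _ 1 N le_rfl hN hd (fun x _ y _ h => hanti x y h)
    (fun x _ => mul_nonneg (pp_nonneg _) (pp_nonneg _))
  simp only [Nat.cast_one, Real.log_one, mul_zero, sub_zero] at this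
  have hlN : 0 ≤ Real.log (N + 1) := Real.log_nonneg (by linarith [(Nat.cast_nonneg N : (0:ℝ) ≤ N)])
  have z1 : pp (q - 2 * Real.log (N + 1)) = 0 := pp_of_nonpos (by linarith)
  have z2 : pp q * pp (q + δ) ≤ pp L ^ 2 := by
    rw [sq]; exact mul_le_mul (pp_mono hq) (pp_mono hδq) (pp_nonneg _) (pp_nonneg _)
  have z3 : 0 ≤ pp (q - 2 * Real.log N) ^ 3 / 6 + δ * pp (q - 2 * Real.log N) ^ 2 / 4 := by
    have := pp_nonneg (q - 2 * Real.log N); positivity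
  rw [z1] at this
  have z4 := mul_nonneg (pp_nonneg q) (pp_nonneg (q + δ))
  norm_num at this
  rw [abs_le]; constructor <;> nlinarith [this.1, this.2]

/-- The sum over `t ≥ u`, where `z = log u`. -/
lemma sum_t (L : ℝ) (u N : ℕ) (hu : 1 ≤ u) (huN : u ≤ N) (hL : L ≤ Real.log (N + 1)) :
    |∑ t ∈ Finset.Icc u N, (pp (L - 3 * Real.log t - Real.log u) ^ 3 / 6 +
        2 * (Real.log t - Real.log u) * pp (L - 3 * Real.log t - Real.log u) ^ 2 / 4) / t -
      pp (L - 4 * Real.log u) ^ 4 / 54| ≤ pp L ^ 3 := by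
  set z := Real.log u with hz
  have hz0 : 0 ≤ z := Real.log_nonneg (by exact_mod_cast hu)
  set f : ℝ → ℝ := fun y => pp (L - 3 * y - z) ^ 3 / 6 + 2 * (y - z) * pp (L - 3 * y - z) ^ 2 / 4
    with hf
  set F : ℝ → ℝ := fun y => -(pp (L - 3 * y - z) ^ 4 / 54 + (y - z) * pp (L - 3 * y - z) ^ 3 / 18)
    with hFd
  have h1 : ∀ x, HasDerivAt (fun x : ℝ => L - 3 * x - z) (-3) x := by
    intro x
    simpa using (((hasDerivAt_id x).const_mul 3).const_sub L).sub_const z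
  have h0 : ∀ x, HasDerivAt (fun x : ℝ => x - z) 1 x := fun x => by
    simpa using (hasDerivAt_id x).sub_const z
  have hd : ∀ x, HasDerivAt F (f x) x := by
    intro x
    have h4 := (hasDerivAt_pp 2 (L - 3 * x - z)).comp x (h1 x)
    have h3 := (hasDerivAt_pp 1 (L - 3 * x - z)).comp x (h1 x)
    have := ((h4.div_const 54).add (((h0 x).mul h3).div_const 18)).neg
    refine HasDerivAt.congr_deriv this ?_
    simp only [hf, Function.comp_apply]; push_cast; ring
  have hd2 : ∀ x, HasDerivAt f (-(pp (L - 3 * x - z) ^ 2) - 3 * (x - z) * pp (L - 3 * x - z)) x := by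
    intro x
    have h3 := (hasDerivAt_pp 1 (L - 3 * x - z)).comp x (h1 x)
    have h2 := (hasDerivAt_pp 0 (L - 3 * x - z)).comp x (h1 x)
    have := (h3.div_const 6).add ((((h0 x).const_mul 2).mul h2).div_const 4)
    refine HasDerivAt.congr_deriv this ?_
    simp only [Function.comp]; push_cast; ring
  have hanti : AntitoneOn f (Set.Ici z) := by
    apply antitoneOn_of_deriv_nonpos (convex_Ici z)
      (fun x _ => (hd2 x).continuousAt.continuousWithinAt)
      (fun x _ => (hd2 x).differentiableAt.differentiableWithinAt)
    intro x hx
    rw [interior_Ici] at hx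
    rw [(hd2 x).deriv]
    have : 0 ≤ (x - z) * pp (L - 3 * x - z) :=
      mul_nonneg (by linarith [Set.mem_Ioi.1 hx]) (pp_nonneg _)
    nlinarith [sq_nonneg (pp (L - 3 * x - z))]
  have hpos : ∀ x, z ≤ x → 0 ≤ f x := by
    intro x hx
    have := pp_nonneg (L - 3 * x - z)
    have hx' : 0 ≤ x - z := by linarith
    simp only [hf]; positivity
  have := sum_log f F u N hu huN hd hanti hpos
  have hlN : 0 ≤ Real.log (N + 1) := Real.log_nonneg (by linarith [(Nat.cast_nonneg N : (0:ℝ) ≤ N)])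
  have hzN : z ≤ Real.log N := Real.log_le_log (by exact_mod_cast hu) (by exact_mod_cast huN)
  have z1 : F (Real.log (N + 1)) = 0 := by
    simp only [hFd]
    rw [pp_of_nonpos (by linarith)]; ring
  have z2 : F (Real.log N) ≤ 0 := by
    simp only [hFd]
    have := pp_nonneg (L - 3 * Real.log N - z)
    have : 0 ≤ Real.log N - z := by linarith
    have : 0 ≤ pp (L - 3 * Real.log N - z) ^ 4 / 54 +
      (Real.log N - z) * pp (L - 3 * Real.log N - z) ^ 3 / 18 := by positivity
    linarith
  have z3 : F z = -(pp (L - 4 * z) ^ 4 / 54) := by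
    simp only [hFd]
    rw [show L - 3 * z - z = L - 4 * z by ring]; ring
  have z4 : f z ≤ pp L ^ 3 := by
    simp only [hf]
    have : pp (L - 3 * z - z) ^ 3 ≤ pp L ^ 3 :=
      pow_le_pow_left₀ (pp_nonneg _) (pp_mono (by linarith)) 3
    have := pow_nonneg (pp_nonneg L) 3
    have e : 2 * (z - z) * pp (L - 3 * z - z) ^ 2 / 4 = 0 := by ring
    rw [e]
    linarith
  have z5 := pow_nonneg (pp_nonneg L) 3
  rw [← hz, z3, z1] at this
  rw [abs_le]; constructor <;> linarith [this.1, this.2]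

/-- The sum over `u`. -/
lemma sum_u (L : ℝ) (N : ℕ) (hN : 1 ≤ N) (hL0 : 0 ≤ L) (hL : L ≤ Real.log (N + 1)) :
    |∑ u ∈ Finset.Icc 1 N, (pp (L - 4 * Real.log u) ^ 4 / 54) / u - L ^ 5 / 1080| ≤ L ^ 4 := by
  have hd : ∀ x, HasDerivAt (fun x => -(pp (L - 4 * x) ^ 5 / 1080)) (pp (L - 4 * x) ^ 4 / 54) x := by
    intro x
    have h1 : HasDerivAt (fun x : ℝ => L - 4 * x) (-4) x := by
      simpa using ((hasDerivAt_id x).const_mul 4).const_sub L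
    have h3 := (hasDerivAt_pp 3 (L - 4 * x)).comp x h1
    have := (h3.div_const 1080).neg
    refine HasDerivAt.congr_deriv this ?_
    push_cast; ring
  have := sum_log _ _ 1 N le_rfl hN hd (fun x _ y _ h => by
    have := pow_le_pow_left₀ (pp_nonneg (L - 4 * y)) (pp_mono (show L - 4 * y ≤ L - 4 * x by linarith)) 4
    linarith) (fun x _ => by have := pp_nonneg (L - 4 * x); positivity)
  simp only [Nat.cast_one, Real.log_one, mul_zero, sub_zero] at this
  rw [pp_of_nonneg hL0, pp_of_nonpos (show L - 4 * Real.log (N + 1) ≤ 0 by linarith)] at this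
  have z := pow_nonneg (pp_nonneg (L - 4 * Real.log N)) 5
  have z2 := pow_nonneg hL0 4
  norm_num at this
  rw [abs_le]; constructor <;> linarith [this.1, this.2]

/-- A Riemann sum, in the logarithms of `s, t, u`, for an integral over a polytope; the constant
`1 / 540` is its value for `L = 1`. -/
lemma triple_sum (L : ℝ) (N : ℕ) (hN : 1 ≤ N) (hL0 : 0 ≤ L) (hL : L ≤ Real.log (N + 1))
    (hNL : Real.log N ≤ L) :
    |∑ t ∈ Finset.Icc 1 N, ∑ u ∈ Finset.Icc 1 N, (∑ s ∈ Finset.Icc 1 N,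
        pp (L - 2 * Real.log s - 3 * Real.log t - Real.log u) *
        pp (L - 2 * Real.log s - Real.log t - 3 * Real.log u) / s) / (t * u) - L ^ 5 / 540| ≤
      10 * (1 + L) ^ 4 := by
  set g : ℕ → ℕ → ℝ := fun t u => ∑ s ∈ Finset.Icc 1 N,
        pp (L - 2 * Real.log s - 3 * Real.log t - Real.log u) *
        pp (L - 2 * Real.log s - Real.log t - 3 * Real.log u) / s with hg
  set K : ℕ → ℕ → ℝ := fun t u => pp (L - 3 * Real.log t - Real.log u) ^ 3 / 6 +
        2 * (Real.log t - Real.log u) * pp (L - 3 * Real.log t - Real.log u) ^ 2 / 4 with hK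
  have hH : ∑ n ∈ Finset.Icc 1 N, (1 : ℝ) / n ≤ 1 + L := (harm_le N hN).trans (by linarith)
  have hH0 : ∀ u, 1 ≤ u → ∑ n ∈ Finset.Icc u N, (1 : ℝ) / n ≤ 1 + L := by
    intro u hu
    refine le_trans (Finset.sum_le_sum_of_subset_of_nonneg (Finset.Icc_subset_Icc_left hu) ?_) hH
    intros; positivity
  have hlog : ∀ n : ℕ, 0 ≤ Real.log n := Real.log_natCast_nonneg
  have hgK : ∀ u t : ℕ, 1 ≤ u → u ≤ t → |g t u - K t u| ≤ L ^ 2 := by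
    intro u t hu hut
    have hl : Real.log u ≤ Real.log t :=
      Real.log_le_log (by exact_mod_cast hu) (by exact_mod_cast hut)
    have := sum_s L (2 * (Real.log t - Real.log u)) (L - 3 * Real.log t - Real.log u) N hN hL
      (by linarith) (by linarith [hlog t, hlog u]) (by linarith [hlog t, hlog u])
    rw [pp_of_nonneg hL0] at this
    convert this using 3
    simp only [hg]
    refine Finset.sum_congr rfl (fun s _ => ?_)
    congr 3 <;> ring
  have hsymm := sum_symm N (fun t u => g t u / (t * u)) (by
    intro t u
    simp only [hg]
    rw [mul_comm (t : ℝ)]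
    congr 1
    refine Finset.sum_congr rfl (fun s _ => ?_)
    rw [mul_comm]
    congr 3 <;> ring)
  rw [hsymm]
  have b1 : ∀ u ∈ Finset.Icc 1 N, |∑ t ∈ Finset.Icc u N, g t u / (t * u) -
      (pp (L - 4 * Real.log u) ^ 4 / 54) / u| ≤ (L ^ 3 + L ^ 2 * (1 + L)) * (1 / u) := by
    intro u hu
    rw [Finset.mem_Icc] at hu
    have hu0 : (0 : ℝ) < u := by exact_mod_cast hu.1
    have t1 := sum_t L u N hu.1 hu.2 hL
    rw [pp_of_nonneg hL0] at t1
    have e1 : ∑ t ∈ Finset.Icc u N, g t u / (t * u) - (pp (L - 4 * Real.log u) ^ 4 / 54) / u =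
        ((∑ t ∈ Finset.Icc u N, K t u / t - pp (L - 4 * Real.log u) ^ 4 / 54) +
          ∑ t ∈ Finset.Icc u N, (g t u - K t u) * (1 / t)) * (1 / u) := by
      have : ∑ t ∈ Finset.Icc u N, g t u / (t * u) = (∑ t ∈ Finset.Icc u N, K t u / t +
          ∑ t ∈ Finset.Icc u N, (g t u - K t u) * (1 / t)) * (1 / u) := by
        rw [← Finset.sum_add_distrib, Finset.sum_mul]
        refine Finset.sum_congr rfl (fun t ht => ?_)
        have : (t : ℝ) ≠ 0 := by
          rw [Finset.mem_Icc] at ht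
          exact_mod_cast (by omega : t ≠ 0)
        field_simp
        ring
      rw [this]; ring
    rw [e1, abs_mul, abs_of_pos (show (0 : ℝ) < 1 / u by positivity)]
    refine mul_le_mul_of_nonneg_right ((abs_add_le _ _).trans (add_le_add t1 ?_)) (by positivity)
    refine (Finset.abs_sum_le_sum_abs _ _).trans ?_
    calc _ ≤ ∑ t ∈ Finset.Icc u N, L ^ 2 * ((1 : ℝ) / t) := by
          refine Finset.sum_le_sum (fun t ht => ?_)
          rw [Finset.mem_Icc] at ht
          rw [abs_mul, abs_of_nonneg (show (0 : ℝ) ≤ 1 / t by positivity)]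
          exact mul_le_mul_of_nonneg_right (hgK u t hu.1 ht.1) (by positivity)
      _ ≤ _ := by
          rw [← Finset.mul_sum]
          exact mul_le_mul_of_nonneg_left (hH0 u hu.1) (by positivity)
  have b2 : |∑ u ∈ Finset.Icc 1 N, ∑ t ∈ Finset.Icc u N, g t u / (t * u) -
      ∑ u ∈ Finset.Icc 1 N, (pp (L - 4 * Real.log u) ^ 4 / 54) / u| ≤
      (L ^ 3 + L ^ 2 * (1 + L)) * (1 + L) := by
    rw [← Finset.sum_sub_distrib]
    refine (Finset.abs_sum_le_sum_abs _ _).trans ((Finset.sum_le_sum b1).trans ?_)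
    rw [← Finset.mul_sum]
    exact mul_le_mul_of_nonneg_left hH (by positivity)
  have b3 := sum_u L N hN hL0 hL
  have b4 : |∑ u ∈ Finset.Icc 1 N, g u u / (u * u)| ≤ L ^ 2 * (1 + L) * (1 + L) := by
    refine (Finset.abs_sum_le_sum_abs _ _).trans ?_
    calc _ ≤ ∑ u ∈ Finset.Icc 1 N, L ^ 2 * (1 + L) * ((1 : ℝ) / u) := by
          refine Finset.sum_le_sum (fun u hu => ?_)
          rw [Finset.mem_Icc] at hu
          have hu0 : (1 : ℝ) ≤ u := by exact_mod_cast hu.1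
          rw [abs_div, abs_of_nonneg (show (0 : ℝ) ≤ u * u by positivity)]
          have hgu : |g u u| ≤ L ^ 2 * (1 + L) := by
            refine (Finset.abs_sum_le_sum_abs _ _).trans ?_
            calc _ ≤ ∑ s ∈ Finset.Icc 1 N, L ^ 2 * ((1 : ℝ) / s) := by
                  refine Finset.sum_le_sum (fun s hs => ?_)
                  have l1 := pp_mono (show L - 2 * Real.log s - 3 * Real.log u - Real.log u ≤ L by
                    linarith [hlog s, hlog u])
                  have l2 := pp_mono (show L - 2 * Real.log s - Real.log u - 3 * Real.log u ≤ L by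
                    linarith [hlog s, hlog u])
                  rw [pp_of_nonneg hL0] at l1 l2
                  rw [abs_of_nonneg (div_nonneg (mul_nonneg (pp_nonneg _) (pp_nonneg _))
                    (Nat.cast_nonneg _)), div_eq_mul_one_div]
                  refine mul_le_mul_of_nonneg_right ?_ (by positivity)
                  rw [sq]
                  exact mul_le_mul l1 l2 (pp_nonneg _) hL0
              _ ≤ _ := by
                  rw [← Finset.mul_sum]
                  exact mul_le_mul_of_nonneg_left hH (by positivity)
          rw [div_eq_mul_one_div]
          have : (1 : ℝ) / (u * u) ≤ 1 / u :=
            one_div_le_one_div_of_le (by positivity) (by nlinarith)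
          exact mul_le_mul hgu this (by positivity) (by positivity)
      _ ≤ _ := by
          rw [← Finset.mul_sum]
          exact mul_le_mul_of_nonneg_left hH (by positivity)
  have f1 : (L ^ 3 + L ^ 2 * (1 + L)) * (1 + L) ≤ 2 * (1 + L) ^ 4 := by
    have : 0 ≤ L ^ 2 := by positivity
    have : 0 ≤ L ^ 3 := by positivity
    nlinarith
  have f2 : L ^ 4 ≤ (1 + L) ^ 4 := pow_le_pow_left₀ hL0 (by linarith) 4
  have f3 : L ^ 2 * (1 + L) * (1 + L) ≤ (1 + L) ^ 4 := by
    have : 0 ≤ L ^ 2 := by positivity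
    have : 0 ≤ L ^ 3 := by positivity
    nlinarith
  rw [abs_le] at *
  constructor <;> linarith [b2.1, b2.2, b3.1, b3.2, b4.1, b4.2]

/-! ### A logarithmic lattice sum -/

/-- A harmonic sum cut off at `1 / x`; the bound on `N` makes the range of summation no restriction. -/
lemma harm_cut (x : ℝ) (hx : 0 < x) (N : ℕ) (hN : 1 ≤ x * (N + 1)) :
    |∑ m ∈ Finset.Icc 1 N, (if (m : ℝ) * x ≤ 1 then (1 : ℝ) / m else 0) - pp (-Real.log x)| ≤ 1 := by
  rw [← Finset.sum_filter]
  rcases lt_or_ge 1 x with h | h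
  · have : (Finset.Icc 1 N).filter (fun m : ℕ => (m : ℝ) * x ≤ 1) = ∅ := by
      apply Finset.filter_false_of_mem
      intro m hm
      rw [Finset.mem_Icc] at hm
      have : (1 : ℝ) ≤ m := by exact_mod_cast hm.1
      nlinarith
    rw [this, pp_of_nonpos (by linarith [Real.log_pos h])]
    simp
  · set k := ⌊1 / x⌋₊ with hk
    have h1x : 1 ≤ 1 / x := by rw [le_div_iff₀ hx]; linarith
    have hk1 : 1 ≤ k := Nat.le_floor (by simpa using h1x)
    have hkx : (k : ℝ) ≤ 1 / x := Nat.floor_le (by positivity)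
    have hkx' : 1 / x < k + 1 := Nat.lt_floor_add_one _
    have hkN : k ≤ N + 1 := by
      have : (k : ℝ) ≤ N + 1 := hkx.trans (by rw [div_le_iff₀ hx]; linarith)
      exact_mod_cast this
    have hl : -Real.log x = Real.log (1 / x) := by rw [one_div, Real.log_inv]
    have hl0 : 0 ≤ Real.log (1 / x) := Real.log_nonneg h1x
    rw [hl, pp_of_nonneg hl0]
    have hsl := sum_log (fun _ => 1) id 1 k le_rfl hk1 (fun x => hasDerivAt_id x)
      (fun _ _ _ _ _ => le_rfl) (fun _ _ => zero_le_one)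
    simp only [id, Nat.cast_one, Real.log_one, sub_zero] at hsl
    have l1 : Real.log k ≤ Real.log (1 / x) := Real.log_le_log (by exact_mod_cast hk1) hkx
    have l2 : Real.log (1 / x) ≤ Real.log (k + 1) := Real.log_le_log (by positivity) hkx'.le
    have hmem : ∀ m : ℕ, (m : ℝ) * x ≤ 1 ↔ m ≤ k := by
      intro m
      rw [hk, Nat.le_floor_iff (by positivity), le_div_iff₀ hx]
    rcases Nat.lt_or_ge N k with hlt | hge
    · -- only possible when `1 / x = N + 1`
      have hkN1 : k = N + 1 := by omega
      have hfil : (Finset.Icc 1 N).filter (fun m : ℕ => (m : ℝ) * x ≤ 1) = Finset.Icc 1 N := by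
        apply Finset.filter_true_of_mem
        intro m hm
        rw [Finset.mem_Icc] at hm
        rw [hmem]; omega
      rw [hfil]
      rw [hkN1, ← Finset.insert_Icc_right_eq_Icc_add_one (by omega), Finset.sum_insert (by simp)]
        at hsl
      have : (1 : ℝ) / ((N + 1 : ℕ) : ℝ) ≤ 1 := by
        rw [div_le_one (by positivity)]
        push_cast; linarith [(Nat.cast_nonneg N : (0 : ℝ) ≤ N)]
      have h0 : (0 : ℝ) < 1 / ((N + 1 : ℕ) : ℝ) := by positivity
      rw [hkN1] at l1 l2
      rw [abs_le]
      constructor <;> linarith [hsl.1, hsl.2]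
    · have hfil : (Finset.Icc 1 N).filter (fun m : ℕ => (m : ℝ) * x ≤ 1) = Finset.Icc 1 k := by
        ext m
        rw [Finset.mem_filter, Finset.mem_Icc, Finset.mem_Icc, hmem]
        omega
      rw [hfil, abs_le]
      constructor <;> linarith [hsl.1, hsl.2]

/-- The sum over five torsor variables that remains after summing over `a₁` and `b₁`. -/
noncomputable def rr (N : ℕ) (lam kap : ℝ) : ℝ :=
  ∑ t ∈ Finset.Icc 1 N, ∑ u ∈ Finset.Icc 1 N, (∑ s ∈ Finset.Icc 1 N,
    (∑ a ∈ Finset.Icc 1 N, if (a : ℝ) * (lam * (s * t * √(t * u))) ≤ 1 then (1 : ℝ) / a else 0) *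
    (∑ b ∈ Finset.Icc 1 N, if (b : ℝ) ^ 2 * (kap * (s * u * √(t * u))) ≤ 1 then (1 : ℝ) / b else 0)
      / s) / (t * u)

lemma pp_sub (a b : ℝ) : |pp a - pp b| ≤ |a - b| := abs_max_sub_max_le_abs a b 0

lemma pp_scale (c a : ℝ) (hc : 0 ≤ c) : pp (c * a) = c * pp a := by
  rcases le_total 0 a with h | h
  · rw [pp_of_nonneg h, pp_of_nonneg (by positivity)]
  · rw [pp_of_nonpos h, pp_of_nonpos (by nlinarith)]; ring

set_option maxHeartbeats 1000000 in
/-- The constant is that of `triple_sum` divided by `8`: summing over `a` and `b` gives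
`pp (L - …) / 2` and `pp (L - …) / 4`. The parameters `D1`, `D3` enter the error only through their
logarithms, which makes the estimate uniform in the moduli of the Möbius expansion. -/
lemma rr_asymp (B : ℝ) (hB : 1 ≤ B) (D1 D3 l : ℝ) (h1 : 1 ≤ D1) (h3 : 1 ≤ D3)
    (hl1 : Real.log D1 ≤ 4 * l) (hl3 : Real.log D3 ≤ 4 * l) :
    |rr ⌊B⌋₊ (√(D1 / B)) (√(D3 / B)) - Real.log B ^ 5 / 4320| ≤
      6 * (1 + Real.log B) ^ 4 * (1 + l) := by
  set L := Real.log B with hLd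
  set N := ⌊B⌋₊ with hNd
  have hB0 : 0 < B := by linarith
  have hL0 : 0 ≤ L := Real.log_nonneg hB
  have hN : 1 ≤ N := Nat.le_floor (by simpa using hB)
  have hNB : (N : ℝ) ≤ B := Nat.floor_le hB0.le
  have hBN : B < N + 1 := Nat.lt_floor_add_one B
  have hN0 : (0 : ℝ) < N := by exact_mod_cast hN
  have hNL : Real.log N ≤ L := Real.log_le_log hN0 hNB
  have hLN : L ≤ Real.log (N + 1) := Real.log_le_log hB0 hBN.le
  have hl0 : 0 ≤ l := by linarith [Real.log_nonneg h1]
  have hH : ∑ n ∈ Finset.Icc 1 N, (1 : ℝ) / n ≤ 1 + L := (harm_le N hN).trans (by linarith)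
  have hlog : ∀ n : ℕ, 0 ≤ Real.log n := Real.log_natCast_nonneg
  set A : ℕ → ℕ → ℕ → ℝ := fun s t u => ∑ a ∈ Finset.Icc 1 N,
    if (a : ℝ) * (√(D1 / B) * (s * t * √(t * u))) ≤ 1 then (1 : ℝ) / a else 0 with hA
  set C : ℕ → ℕ → ℕ → ℝ := fun s t u => ∑ b ∈ Finset.Icc 1 N,
    if (b : ℝ) ^ 2 * (√(D3 / B) * (s * u * √(t * u))) ≤ 1 then (1 : ℝ) / b else 0 with hC
  set l1 : ℕ → ℕ → ℕ → ℝ := fun s t u =>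
    pp (L - 2 * Real.log s - 3 * Real.log t - Real.log u) with hl1d
  set l3 : ℕ → ℕ → ℕ → ℝ := fun s t u =>
    pp (L - 2 * Real.log s - Real.log t - 3 * Real.log u) with hl3d
  have hlow : ∀ D : ℝ, 1 ≤ D → ∀ y : ℝ, 1 ≤ y → 1 ≤ √(D / B) * y * √B := by
    intro D hD y hy
    have : √(D / B) * √B = √D := by
      rw [← Real.sqrt_mul (by positivity)]; congr 1; field_simp
    have h2 : 1 ≤ √D := Real.one_le_sqrt.2 hD
    calc (1 : ℝ) ≤ √D * y := by nlinarith
      _ = _ := by rw [← this]; ring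
  have hsB : √B ≤ B := by
    rw [Real.sqrt_le_left hB0.le]; nlinarith
  have hA1 : ∀ s ∈ Finset.Icc 1 N, ∀ t ∈ Finset.Icc 1 N, ∀ u ∈ Finset.Icc 1 N,
      |A s t u - l1 s t u / 2| ≤ 2 * (1 + l) := by
    intro s hs t ht u hu
    rw [Finset.mem_Icc] at hs ht hu
    have s1 : (1 : ℝ) ≤ s := by exact_mod_cast hs.1
    have t1 : (1 : ℝ) ≤ t := by exact_mod_cast ht.1
    have u1 : (1 : ℝ) ≤ u := by exact_mod_cast hu.1
    have r1 : 1 ≤ √((t : ℝ) * u) := Real.one_le_sqrt.2 (by nlinarith)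
    have q1 : 1 ≤ (s : ℝ) * t := by nlinarith
    have q2 : 1 ≤ (s : ℝ) * t * √(t * u) := by nlinarith
    have hsq : 0 < √(D1 / B) := Real.sqrt_pos.2 (by positivity)
    have k := harm_cut (√(D1 / B) * (s * t * √(t * u))) (by positivity) N (by
      have := hlow D1 h1 _ q2
      refine this.trans (mul_le_mul_of_nonneg_left (by linarith) (by positivity)))
    have e : -Real.log (√(D1 / B) * (s * t * √(t * u))) =
        (1 / 2) * (L - 2 * Real.log s - 3 * Real.log t - Real.log u - Real.log D1) := by
      rw [Real.log_mul (by positivity) (by positivity), Real.log_mul (by positivity) (by positivity),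
        Real.log_mul (by positivity) (by positivity), Real.log_sqrt (by positivity),
        Real.log_sqrt (by positivity), Real.log_div (by positivity) (by positivity),
        Real.log_mul (by positivity) (by positivity)]
      ring
    rw [e, pp_scale _ _ (by norm_num)] at k
    have k2 := pp_sub (L - 2 * Real.log s - 3 * Real.log t - Real.log u - Real.log D1)
      (L - 2 * Real.log s - 3 * Real.log t - Real.log u)
    rw [show ∀ a b : ℝ, a - b - a = -b by intros; ring, abs_neg,
      abs_of_nonneg (Real.log_nonneg h1)] at k2
    simp only [hA, hl1d]
    rw [abs_le] at *
    constructor <;> linarith [k.1, k.2, k2.1, k2.2]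
  have hC1 : ∀ s ∈ Finset.Icc 1 N, ∀ t ∈ Finset.Icc 1 N, ∀ u ∈ Finset.Icc 1 N,
      |C s t u - l3 s t u / 4| ≤ 2 * (1 + l) := by
    intro s hs t ht u hu
    rw [Finset.mem_Icc] at hs ht hu
    have s1 : (1 : ℝ) ≤ s := by exact_mod_cast hs.1
    have t1 : (1 : ℝ) ≤ t := by exact_mod_cast ht.1
    have u1 : (1 : ℝ) ≤ u := by exact_mod_cast hu.1
    have r1 : 1 ≤ √((t : ℝ) * u) := Real.one_le_sqrt.2 (by nlinarith)
    have q1 : 1 ≤ (s : ℝ) * u := by nlinarith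
    have q2 : 1 ≤ (s : ℝ) * u * √(t * u) := by nlinarith
    have hsq : 0 < √(D3 / B) := Real.sqrt_pos.2 (by positivity)
    set x := √(D3 / B) * (s * u * √(t * u)) with hx
    have hx0 : 0 < x := by positivity
    have hcond : ∀ b : ℕ, (b : ℝ) ^ 2 * x ≤ 1 ↔ (b : ℝ) * √x ≤ 1 := by
      intro b
      have : (b : ℝ) ^ 2 * x = ((b : ℝ) * √x) ^ 2 := by rw [mul_pow, Real.sq_sqrt hx0.le]
      rw [this, sq_le_one_iff₀ (by positivity)]
    have k := harm_cut (√x) (by positivity) N (by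
      have h5 := hlow D3 h3 _ q2
      have h6 : 1 ≤ x * (N + 1) :=
        h5.trans (mul_le_mul_of_nonneg_left (by linarith) (by positivity))
      have h7 : 1 ≤ √(x * (N + 1)) := Real.one_le_sqrt.2 h6
      rw [Real.sqrt_mul hx0.le] at h7
      have h8 : √((N : ℝ) + 1) ≤ N + 1 := by
        rw [Real.sqrt_le_left (by positivity)]; nlinarith
      exact h7.trans (mul_le_mul_of_nonneg_left h8 (by positivity)))
    have e : -Real.log (√x) =
        (1 / 4) * (L - 2 * Real.log s - Real.log t - 3 * Real.log u - Real.log D3) := by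
      rw [Real.log_sqrt hx0.le, hx, Real.log_mul (by positivity) (by positivity),
        Real.log_mul (by positivity) (by positivity),
        Real.log_mul (by positivity) (by positivity), Real.log_sqrt (by positivity),
        Real.log_sqrt (by positivity), Real.log_div (by positivity) (by positivity),
        Real.log_mul (by positivity) (by positivity)]
      ring
    rw [e, pp_scale _ _ (by norm_num)] at k
    have k2 := pp_sub (L - 2 * Real.log s - Real.log t - 3 * Real.log u - Real.log D3)
      (L - 2 * Real.log s - Real.log t - 3 * Real.log u)
    rw [show ∀ a b : ℝ, a - b - a = -b by intros; ring, abs_neg,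
      abs_of_nonneg (Real.log_nonneg h3)] at k2
    simp only [hC, hl3d, ← hx, hcond]
    rw [abs_le] at *
    constructor <;> linarith [k.1, k.2, k2.1, k2.2]
  have hAb : ∀ s t u, |A s t u| ≤ 1 + L := by
    intro s t u
    refine (Finset.abs_sum_le_sum_abs _ _).trans (le_trans (Finset.sum_le_sum ?_) hH)
    intro a _
    split_ifs
    · rw [abs_of_nonneg (by positivity)]
    · simp
  have hl3b : ∀ s t u, |l3 s t u / 4| ≤ L := by
    intro s t u
    have := pp_mono (show L - 2 * Real.log s - Real.log t - 3 * Real.log u ≤ L by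
      linarith [hlog s, hlog t, hlog u])
    rw [pp_of_nonneg hL0] at this
    have h0 := pp_nonneg (L - 2 * Real.log s - Real.log t - 3 * Real.log u)
    rw [abs_of_nonneg (by simp only [hl3d]; positivity)]
    simp only [hl3d]; linarith
  have hAC : ∀ s ∈ Finset.Icc 1 N, ∀ t ∈ Finset.Icc 1 N, ∀ u ∈ Finset.Icc 1 N,
      |A s t u * C s t u - l1 s t u * l3 s t u / 8| ≤ 4 * (1 + l) * (1 + L) := by
    intro s hs t ht u hu
    have e : A s t u * C s t u - l1 s t u * l3 s t u / 8 =
      A s t u * (C s t u - l3 s t u / 4) + (A s t u - l1 s t u / 2) * (l3 s t u / 4) := by ring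
    rw [e]
    refine (abs_add_le _ _).trans ?_
    rw [abs_mul, abs_mul]
    have i1 := mul_le_mul (hAb s t u) (hC1 s hs t ht u hu) (abs_nonneg _) (by linarith)
    have i2 := mul_le_mul (hA1 s hs t ht u hu) (hl3b s t u) (abs_nonneg _) (by positivity)
    nlinarith
  have htri := triple_sum L N hN hL0 hLN hNL
  set TS := ∑ t ∈ Finset.Icc 1 N, ∑ u ∈ Finset.Icc 1 N, (∑ s ∈ Finset.Icc 1 N,
        l1 s t u * l3 s t u / s) / ((t : ℝ) * u) with hTS
  have hd : |rr N (√(D1 / B)) (√(D3 / B)) - TS / 8| ≤ 4 * (1 + l) * (1 + L) * (1 + L) ^ 3 := by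
    have e : rr N (√(D1 / B)) (√(D3 / B)) - TS / 8 =
        ∑ t ∈ Finset.Icc 1 N, ∑ u ∈ Finset.Icc 1 N, ∑ s ∈ Finset.Icc 1 N,
          (A s t u * C s t u - l1 s t u * l3 s t u / 8) * (1 / s * (1 / t * (1 / u))) := by
      rw [hTS, rr, Finset.sum_div, ← Finset.sum_sub_distrib]
      refine Finset.sum_congr rfl (fun t _ => ?_)
      rw [Finset.sum_div, ← Finset.sum_sub_distrib]
      refine Finset.sum_congr rfl (fun u _ => ?_)
      rw [div_div, Finset.sum_div, Finset.sum_div, ← Finset.sum_sub_distrib]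
      refine Finset.sum_congr rfl (fun s _ => ?_)
      simp only [hA, hC, div_eq_mul_inv, one_mul, mul_inv]
      ring
    rw [e]
    have i1 : |∑ t ∈ Finset.Icc 1 N, ∑ u ∈ Finset.Icc 1 N, ∑ s ∈ Finset.Icc 1 N,
          (A s t u * C s t u - l1 s t u * l3 s t u / 8) * (1 / s * (1 / t * (1 / u)))| ≤
        ∑ t ∈ Finset.Icc 1 N, ∑ u ∈ Finset.Icc 1 N, ∑ s ∈ Finset.Icc 1 N,
          4 * (1 + l) * (1 + L) * ((1 : ℝ) / s * (1 / t * (1 / u))) := by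
      refine (Finset.abs_sum_le_sum_abs _ _).trans (Finset.sum_le_sum (fun t ht => ?_))
      refine (Finset.abs_sum_le_sum_abs _ _).trans (Finset.sum_le_sum (fun u hu => ?_))
      refine (Finset.abs_sum_le_sum_abs _ _).trans (Finset.sum_le_sum (fun s hs => ?_))
      rw [abs_mul, abs_of_nonneg (show (0 : ℝ) ≤ 1 / s * (1 / t * (1 / u)) by positivity)]
      exact mul_le_mul_of_nonneg_right (hAC s hs t ht u hu) (by positivity)
    refine i1.trans ?_
    simp only [← Finset.mul_sum, ← Finset.sum_mul]
    refine mul_le_mul_of_nonneg_left ?_ (by positivity)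
    have h0 : 0 ≤ ∑ n ∈ Finset.Icc 1 N, (1 : ℝ) / n := by positivity
    have := pow_le_pow_left₀ h0 hH 3
    calc _ = (∑ n ∈ Finset.Icc 1 N, (1 : ℝ) / n) ^ 3 := by ring
      _ ≤ _ := this
  have hp : 0 ≤ (1 + L) ^ 4 := by positivity
  have hfin : 4 * (1 + l) * (1 + L) * (1 + L) ^ 3 + 10 * (1 + L) ^ 4 / 8 ≤
      6 * (1 + L) ^ 4 * (1 + l) := by nlinarith
  rw [abs_le] at *
  constructor <;> linarith [hd.1, hd.2, htri.1, htri.2]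

/-! ### Riemann sums with a square-root singularity -/

lemma integral_rpow_half (a b : ℝ) :
    ∫ t in a..b, t ^ (-(1 / 2) : ℝ) = 2 * (√b - √a) := by
  rw [integral_rpow (Or.inl (by norm_num)), Real.sqrt_eq_rpow, Real.sqrt_eq_rpow]
  norm_num
  ring

/-- Comparison of the sum of `a` with the sum of `I`, when each `I k` lies between consecutive values of
`a` up to an error `ε k`. -/
lemma telescoping (M : ℕ) (a I ε : ℕ → ℝ) (A : ℝ) (ha0 : ∀ k ≤ M, 0 ≤ a k) (haA : ∀ k ≤ M, a k ≤ A)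
    (h : (∀ k < M, a k - ε k ≤ I k ∧ I k ≤ a (k + 1) + ε k) ∨
      (∀ k < M, a (k + 1) - ε k ≤ I k ∧ I k ≤ a k + ε k)) :
    |∑ k ∈ Finset.range (M + 1), a k - ∑ k ∈ Finset.range M, I k| ≤
      A + ∑ k ∈ Finset.range M, ε k := by
  have e1 := Finset.sum_range_succ a M
  have e2 := Finset.sum_range_succ' a M
  have h0 := ha0 0 (Nat.zero_le _)
  have h0' := haA 0 (Nat.zero_le _)
  have hM := ha0 M le_rfl
  have hM' := haA M le_rfl
  rcases h with h | h
  · have s1 : ∑ k ∈ Finset.range M, (a k - ε k) ≤ ∑ k ∈ Finset.range M, I k :=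
      Finset.sum_le_sum (fun k hk => (h k (Finset.mem_range.1 hk)).1)
    have s2 : ∑ k ∈ Finset.range M, I k ≤ ∑ k ∈ Finset.range M, (a (k + 1) + ε k) :=
      Finset.sum_le_sum (fun k hk => (h k (Finset.mem_range.1 hk)).2)
    rw [Finset.sum_sub_distrib] at s1
    rw [Finset.sum_add_distrib] at s2
    rw [abs_le]; constructor <;> linarith
  · have s1 : ∑ k ∈ Finset.range M, (a (k + 1) - ε k) ≤ ∑ k ∈ Finset.range M, I k :=
      Finset.sum_le_sum (fun k hk => (h k (Finset.mem_range.1 hk)).1)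
    have s2 : ∑ k ∈ Finset.range M, I k ≤ ∑ k ∈ Finset.range M, (a k + ε k) :=
      Finset.sum_le_sum (fun k hk => (h k (Finset.mem_range.1 hk)).2)
    rw [Finset.sum_sub_distrib] at s1
    rw [Finset.sum_add_distrib] at s2
    rw [abs_le]; constructor <;> linarith

lemma z32_exists : ∃ Z : ℝ, 0 ≤ Z ∧ ∀ M : ℕ,
    ∑ k ∈ Finset.range M, ((k : ℝ) + 1) ^ (-(3 / 2) : ℝ) ≤ Z := by
  have hs : Summable (fun n : ℕ => (n : ℝ) ^ (-(3 / 2) : ℝ)) :=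
    Real.summable_nat_rpow.2 (by norm_num)
  have hs' : Summable (fun n : ℕ => ((n : ℝ) + 1) ^ (-(3 / 2) : ℝ)) := by
    have := (summable_nat_add_iff 1).2 hs
    simpa using this
  refine ⟨∑' n : ℕ, ((n : ℝ) + 1) ^ (-(3 / 2) : ℝ), tsum_nonneg (fun n => by positivity), fun M => ?_⟩
  exact hs'.sum_le_tsum _ (fun n _ => by positivity)

set_option maxHeartbeats 2000000 in
/-- Riemann sums for functions on `(0, 1]` of size `O(t^{-1/2})` such that `t G(t)` is increasing
or `G(t) / t` is decreasing. -/
lemma riemann : ∃ K : ℝ, 0 < K ∧ ∀ (G : ℝ → ℝ) (c : ℝ), 0 ≤ c →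
    (∀ t, 0 < t → t ≤ 1 → 0 ≤ G t) → (∀ t, 0 < t → t ≤ 1 → G t ≤ c * t ^ (-(1 / 2) : ℝ)) →
    IntervalIntegrable G volume 0 1 →
    ((∀ s t, 0 < s → s ≤ t → t ≤ 1 → s * G s ≤ t * G t) ∨
      (∀ s t, 0 < s → s ≤ t → t ≤ 1 → s * G t ≤ t * G s)) →
    ∀ x : ℝ, 0 < x → x ≤ 1 → ∀ N : ℕ, 1 < x * (N + 1) →
      |∑ m ∈ Finset.Icc 1 N, (if (m : ℝ) * x ≤ 1 then x * G (m * x) else 0) - ∫ t in (0 : ℝ)..1, G t| ≤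
        K * c * √x := by
  obtain ⟨Z, hZ0, hZ⟩ := z32_exists
  refine ⟨Z + 5, by linarith, ?_⟩
  intro G c hc hG0 hGb hGint hmon x hx hx1 N hN
  obtain ⟨M, hM⟩ : ∃ M : ℕ, ⌊1 / x⌋₊ = M + 1 := by
    have h1x : 1 ≤ 1 / x := by rw [le_div_iff₀ hx]; linarith
    have : 1 ≤ ⌊1 / x⌋₊ := Nat.le_floor (by simpa using h1x)
    exact ⟨⌊1 / x⌋₊ - 1, by omega⟩
  have hkx : ((M : ℝ) + 1) * x ≤ 1 := by
    have : ((⌊1 / x⌋₊ : ℕ) : ℝ) ≤ 1 / x := Nat.floor_le (by positivity)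
    rw [hM, le_div_iff₀ hx] at this
    exact_mod_cast this
  have hkx' : 1 < ((M : ℝ) + 2) * x := by
    have : 1 / x < (⌊1 / x⌋₊ : ℕ) + 1 := Nat.lt_floor_add_one _
    rw [hM, div_lt_iff₀ hx] at this
    push_cast at this
    linarith
  have hmem : ∀ m : ℕ, (m : ℝ) * x ≤ 1 ↔ m ≤ M + 1 := by
    intro m
    rw [← hM, Nat.le_floor_iff (by positivity), le_div_iff₀ hx]
  have hMN : M + 1 ≤ N := by
    by_contra hlt
    have h2 : (N : ℝ) + 1 ≤ M + 1 := by exact_mod_cast (by omega : N + 1 ≤ M + 1)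
    nlinarith
  set a : ℕ → ℝ := fun k => x * G (((k : ℝ) + 1) * x) with ha
  have hsum : ∑ m ∈ Finset.Icc 1 N, (if (m : ℝ) * x ≤ 1 then x * G (m * x) else 0) =
      ∑ k ∈ Finset.range (M + 1), a k := by
    rw [← Finset.sum_filter]
    have hf : (Finset.Icc 1 N).filter (fun m : ℕ => (m : ℝ) * x ≤ 1) = Finset.Ico 1 (M + 2) := by
      ext m
      rw [Finset.mem_filter, Finset.mem_Icc, Finset.mem_Ico, hmem]
      omega
    rw [hf, Finset.sum_Ico_eq_sum_range]
    refine Finset.sum_congr (by simp) (fun k _ => ?_)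
    simp only [ha]
    push_cast
    rw [add_comm (1 : ℝ)]
  have hGint' : ∀ u v : ℝ, 0 ≤ u → u ≤ v → v ≤ 1 → IntervalIntegrable G volume u v := by
    intro u v hu huv hv
    apply hGint.mono_set
    rw [Set.uIcc_of_le huv, Set.uIcc_of_le zero_le_one]
    exact Set.Icc_subset_Icc hu hv
  set I : ℕ → ℝ := fun k => ∫ t in ((k : ℝ) + 1) * x..((k : ℝ) + 2) * x, G t with hI
  have hsplit : ∫ t in (0 : ℝ)..1, G t = (∫ t in (0 : ℝ)..x, G t) + ∑ k ∈ Finset.range M, I k +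
      ∫ t in ((M : ℝ) + 1) * x..1, G t := by
    have hmx : x ≤ ((M : ℝ) + 1) * x := by nlinarith [(Nat.cast_nonneg M : (0 : ℝ) ≤ M)]
    have e : ∑ k ∈ Finset.range M, I k = ∫ t in x..((M : ℝ) + 1) * x, G t := by
      have := intervalIntegral.sum_integral_adjacent_intervals (f := G) (μ := volume)
        (a := fun k : ℕ => ((k : ℝ) + 1) * x) (n := M) (fun k hk => by
          apply hGint' _ _ (by positivity)
          · push_cast; nlinarith
          · have : ((k : ℝ) + 1) ≤ M := by exact_mod_cast hk
            push_cast; nlinarith)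
      simp only [Nat.cast_zero, zero_add, one_mul] at this
      rw [← this]
      refine Finset.sum_congr rfl (fun k _ => ?_)
      simp only [hI]; push_cast
      rw [show ((k : ℝ) + 1 + 1) = k + 2 by ring]
    rw [e, intervalIntegral.integral_add_adjacent_intervals (hGint' _ _ le_rfl hx.le (by linarith))
      (hGint' _ _ hx.le hmx hkx), intervalIntegral.integral_add_adjacent_intervals
      (hGint' _ _ le_rfl (by positivity) hkx) (hGint' _ _ (by positivity) hkx le_rfl)]
  have hpow : ∀ u v : ℝ, IntervalIntegrable (fun t : ℝ => c * t ^ (-(1 / 2) : ℝ)) volume u v :=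
    fun u v => (intervalIntegral.intervalIntegrable_rpow' (by norm_num)).const_mul c
  have hbd : ∀ u v : ℝ, 0 ≤ u → u ≤ v → v ≤ 1 → 0 ≤ ∫ t in u..v, G t ∧
      ∫ t in u..v, G t ≤ 2 * c * (√v - √u) := by
    intro u v hu huv hv
    constructor
    · rw [intervalIntegral.integral_of_le huv]
      exact setIntegral_nonneg measurableSet_Ioc
        (fun t ht => hG0 t (hu.trans_lt ht.1) (ht.2.trans hv))
    · have : ∫ t in u..v, G t ≤ ∫ t in u..v, c * t ^ (-(1 / 2) : ℝ) := by
        rw [intervalIntegral.integral_of_le huv, intervalIntegral.integral_of_le huv]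
        exact setIntegral_mono_on (hGint' u v hu huv hv).1 (hpow u v).1 measurableSet_Ioc
          (fun t ht => hGb t (hu.trans_lt ht.1) (ht.2.trans hv))
      rw [intervalIntegral.integral_const_mul, integral_rpow_half u v] at this
      linarith
  have hsx : x ≤ √x := by
    apply Real.le_sqrt_of_sq_le; nlinarith
  have hsx0 : 0 ≤ √x := Real.sqrt_nonneg x
  have hxs : x * x ^ (-(1 / 2) : ℝ) = √x := by
    rw [Real.sqrt_eq_rpow]
    nth_rewrite 1 [← Real.rpow_one x]
    rw [← Real.rpow_add hx]; norm_num
  have hle1 : ∀ k ≤ M, ((k : ℝ) + 1) * x ≤ 1 := by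
    intro k hk
    have : (k : ℝ) ≤ M := by exact_mod_cast hk
    nlinarith
  have ha0 : ∀ k ≤ M, 0 ≤ a k := fun k hk =>
    mul_nonneg hx.le (hG0 _ (by positivity) (hle1 k hk))
  have hab : ∀ k ≤ M, a k ≤ c * √x * ((k : ℝ) + 1) ^ (-(1 / 2) : ℝ) := by
    intro k hk
    have := mul_le_mul_of_nonneg_left (hGb (((k : ℝ) + 1) * x) (by positivity) (hle1 k hk)) hx.le
    refine this.trans (le_of_eq ?_)
    rw [Real.mul_rpow (by positivity) hx.le, ← hxs]; ring
  have hr1 : ∀ k : ℕ, ((k : ℝ) + 1) ^ (-(1 / 2) : ℝ) ≤ 1 := fun k =>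
    Real.rpow_le_one_of_one_le_of_nonpos (by linarith [(Nat.cast_nonneg k : (0 : ℝ) ≤ k)]) (by norm_num)
  have haA : ∀ k ≤ M, a k ≤ c * √x := fun k hk =>
    (hab k hk).trans (mul_le_of_le_one_right (by positivity) (hr1 k))
  set ε : ℕ → ℝ := fun k => c * √x * ((k : ℝ) + 1) ^ (-(3 / 2) : ℝ) with hε
  have hεk : ∀ k, ε k * ((k : ℝ) + 1) = c * √x * ((k : ℝ) + 1) ^ (-(1 / 2) : ℝ) := by
    intro k
    simp only [hε]
    have : ((k : ℝ) + 1) ^ (-(1 / 2) : ℝ) = ((k : ℝ) + 1) ^ (-(3 / 2) : ℝ) * ((k : ℝ) + 1) := by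
      conv_rhs => rw [← Real.rpow_add_one (by positivity)]
      norm_num
    rw [this]; ring
  have he1 : ∀ k ≤ M, a k ≤ ε k * ((k : ℝ) + 1) := fun k hk => by rw [hεk]; exact hab k hk
  have he2 : ∀ k < M, a (k + 1) ≤ ε k * ((k : ℝ) + 1) := by
    intro k hk
    rw [hεk]
    refine (hab (k + 1) hk).trans (mul_le_mul_of_nonneg_left ?_ (by positivity))
    exact Real.rpow_le_rpow_of_nonpos (by positivity) (by push_cast; linarith) (by norm_num)
  have hconst : ∀ (k : ℕ) (y : ℝ), ∫ _ in ((k : ℝ) + 1) * x..((k : ℝ) + 2) * x, y = x * y := by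
    intro k y
    rw [intervalIntegral.integral_const, smul_eq_mul]; ring
  have hlow : ∀ k < M, ∀ y : ℝ, (∀ t, ((k : ℝ) + 1) * x ≤ t → t ≤ ((k : ℝ) + 2) * x → y ≤ G t) →
      x * y ≤ I k := by
    intro k hk y hy
    rw [← hconst k y]
    have h1 := hle1 (k + 1) hk
    push_cast at h1
    exact intervalIntegral.integral_mono_on (by nlinarith) (by simp)
      (hGint' _ _ (by positivity) (by nlinarith) (by linarith)) (fun t ht => hy t ht.1 ht.2)
  have hup : ∀ k < M, ∀ y : ℝ, (∀ t, ((k : ℝ) + 1) * x ≤ t → t ≤ ((k : ℝ) + 2) * x → G t ≤ y) →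
      I k ≤ x * y := by
    intro k hk y hy
    rw [← hconst k y]
    have h1 := hle1 (k + 1) hk
    push_cast at h1
    exact intervalIntegral.integral_mono_on (by nlinarith) 
      (hGint' _ _ (by positivity) (by nlinarith) (by linarith)) (by simp) (fun t ht => hy t ht.1 ht.2)
  have hq : ∀ k < M, 0 ≤ G (((k : ℝ) + 1) * x) ∧ 0 ≤ G (((k : ℝ) + 2) * x) ∧
      a (k + 1) = x * G (((k : ℝ) + 2) * x) ∧ ((k : ℝ) + 2) * x ≤ 1 := by
    intro k hk
    have h1 := hle1 (k + 1) hk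
    push_cast at h1
    rw [show ((k : ℝ) + 1 + 1) = k + 2 by ring] at h1
    refine ⟨hG0 _ (by positivity) (hle1 k hk.le), hG0 _ (by positivity) h1, ?_, h1⟩
    simp only [ha]; push_cast
    rw [show ((k : ℝ) + 1 + 1) = k + 2 by ring]
  have htel := telescoping M a I ε (c * √x) ha0 haA (by
    rcases hmon with hm | hm
    · left
      intro k hk
      obtain ⟨g1, g2, g3, g4⟩ := hq k hk
      have k1 : (0 : ℝ) < k + 1 := by positivity
      constructor
      · have := hlow k hk ((k + 1) / (k + 2) * G (((k : ℝ) + 1) * x)) (by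
          intro t h1 h2
          have ht : 0 < t := lt_of_lt_of_le (by positivity) h1
          have := hm _ t (by positivity) h1 (h2.trans g4)
          rw [div_mul_eq_mul_div, div_le_iff₀ (by positivity)]
          have h3 : t * G t ≤ ((k : ℝ) + 2) * x * G t :=
            mul_le_mul_of_nonneg_right h2 (hG0 t ht (h2.trans g4))
          nlinarith)
        refine le_trans ?_ this
        have e : x * ((k + 1) / (k + 2) * G (((k : ℝ) + 1) * x)) = a k - a k / (k + 2) := by
          simp only [ha]; field_simp; ring
        rw [e]
        have : a k / (k + 2) ≤ ε k := by
          rw [div_le_iff₀ (by positivity)]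
          have : 0 ≤ ε k := by simp only [hε]; positivity
          nlinarith [he1 k hk.le]
        linarith
      · have := hup k hk ((k + 2) / (k + 1) * G (((k : ℝ) + 2) * x)) (by
          intro t h1 h2
          have ht : 0 < t := lt_of_lt_of_le (by positivity) h1
          have := hm t _ ht h2 g4
          rw [div_mul_eq_mul_div, le_div_iff₀ (by positivity)]
          have h3 : ((k : ℝ) + 1) * x * G t ≤ t * G t :=
            mul_le_mul_of_nonneg_right h1 (hG0 t ht (h2.trans g4))
          nlinarith)
        refine this.trans ?_
        have e : x * ((k + 2) / (k + 1) * G (((k : ℝ) + 2) * x)) = a (k + 1) + a (k + 1) / (k + 1) := by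
          rw [g3]; field_simp; ring
        rw [e]
        have : a (k + 1) / (k + 1) ≤ ε k := by
          rw [div_le_iff₀ (by positivity)]
          exact he2 k hk
        linarith
    · right
      intro k hk
      obtain ⟨g1, g2, g3, g4⟩ := hq k hk
      have k1 : (0 : ℝ) < k + 1 := by positivity
      constructor
      · have := hlow k hk ((k + 1) / (k + 2) * G (((k : ℝ) + 2) * x)) (by
          intro t h1 h2
          have ht : 0 < t := lt_of_lt_of_le (by positivity) h1
          have := hm t _ ht h2 g4
          rw [div_mul_eq_mul_div, div_le_iff₀ (by positivity)]
          have h3 := mul_le_mul_of_nonneg_right h1 g2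
          nlinarith)
        refine le_trans ?_ this
        have e : x * ((k + 1) / (k + 2) * G (((k : ℝ) + 2) * x)) = a (k + 1) - a (k + 1) / (k + 2) := by
          rw [g3]; field_simp; ring
        rw [e]
        have : a (k + 1) / (k + 2) ≤ ε k := by
          rw [div_le_iff₀ (by positivity)]
          have : 0 ≤ ε k := by simp only [hε]; positivity
          nlinarith [he2 k hk]
        linarith
      · have := hup k hk ((k + 2) / (k + 1) * G (((k : ℝ) + 1) * x)) (by
          intro t h1 h2
          have ht : 0 < t := lt_of_lt_of_le (by positivity) h1
          have := hm _ t (by positivity) h1 (h2.trans g4)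
          rw [div_mul_eq_mul_div, le_div_iff₀ (by positivity)]
          have h3 := mul_le_mul_of_nonneg_right h2 g1
          nlinarith)
        refine this.trans ?_
        have e : x * ((k + 2) / (k + 1) * G (((k : ℝ) + 1) * x)) = a k + a k / (k + 1) := by
          simp only [ha]; field_simp; ring
        rw [e]
        have : a k / (k + 1) ≤ ε k := by
          rw [div_le_iff₀ (by positivity)]
          exact he1 k hk.le
        linarith)
  have hεs : ∑ k ∈ Finset.range M, ε k ≤ c * √x * Z := by
    simp only [hε, ← Finset.mul_sum]
    exact mul_le_mul_of_nonneg_left (hZ M) (by positivity)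
  have b1 := hbd 0 x le_rfl hx.le hx1
  have b2 := hbd (((M : ℝ) + 1) * x) 1 (by positivity) hkx le_rfl
  rw [Real.sqrt_zero, sub_zero] at b1
  have b3 : 1 - √(((M : ℝ) + 1) * x) ≤ √x := by
    have : ((M : ℝ) + 1) * x ≤ √(((M : ℝ) + 1) * x) := by
      apply Real.le_sqrt_of_sq_le
      have : 0 ≤ ((M : ℝ) + 1) * x := by positivity
      nlinarith
    nlinarith
  rw [Real.sqrt_one] at b2
  have b4 : 2 * c * (1 - √(((M : ℝ) + 1) * x)) ≤ 2 * c * √x :=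
    mul_le_mul_of_nonneg_left b3 (by positivity)
  have b5 : 0 ≤ c * √x := by positivity
  rw [hsum, hsplit]
  rw [abs_le] at *
  constructor <;> nlinarith [htel.1, htel.2, b1.1, b1.2, b2.1, b2.2]

/-! ### The archimedean length function -/

/-- The length of the set of admissible `x₀` for `x₁ = σ²`, `x₂ = σ τ`, `x₃ = τ²`. -/
noncomputable def ph (σ τ : ℝ) : ℝ := phi2 (τ ^ 2) (σ * τ)

lemma ph_nonneg (σ τ : ℝ) : 0 ≤ ph σ τ := ENNReal.toReal_nonneg

lemma vol_Om_ne_top (B h m : ℝ) : volume (Om B h m) ≠ ⊤ := by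
  have : Om B h m ⊆ Set.Icc (-B) B := fun x hx => abs_le.1 hx.1
  exact ((measure_mono this).trans_lt (by rw [Real.volume_Icc]; exact ENNReal.ofReal_lt_top)).ne

lemma ph_le (σ τ : ℝ) : ph σ τ ≤ 4 * √(σ * τ) := by
  set m := σ * τ with hm
  set h := τ ^ 2
  have hs : Om 1 h m ⊆ Set.Icc (-√m) (√m) ∪ Set.Icc (-h - √m) (-h + √m) := by
    rintro x ⟨-, hx⟩
    by_contra hcon
    rw [Set.mem_union, not_or] at hcon
    have h1 : √m < |x| := by
      by_contra hle
      exact hcon.1 (abs_le.1 (not_lt.1 hle))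
    have h2 : √m < |x + h| := by
      by_contra hle
      have := abs_le.1 (not_lt.1 hle)
      exact hcon.2 ⟨by linarith [this.1], by linarith [this.2]⟩
    rw [abs_mul] at hx
    have h0 := Real.sqrt_nonneg m
    have : √m * √m < |x| * |x + h| := by nlinarith
    have hm0 : 0 ≤ m := le_trans (by positivity) hx
    rw [Real.mul_self_sqrt hm0] at this
    linarith
  have h0 := Real.sqrt_nonneg m
  have hv : volume (Om 1 h m) ≤ ENNReal.ofReal (4 * √m) := by
    refine (measure_mono hs).trans ((measure_union_le _ _).trans ?_)
    rw [Real.volume_Icc, Real.volume_Icc, ← ENNReal.ofReal_add (by linarith) (by linarith)]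
    exact ENNReal.ofReal_le_ofReal (by linarith)
  exact ENNReal.toReal_le_of_le_ofReal (by positivity) hv

lemma ph_mono (τ : ℝ) (hτ : 0 ≤ τ) : Monotone (fun σ => ph σ τ) := by
  intro s t hst
  refine ENNReal.toReal_mono (vol_Om_ne_top _ _ _) (measure_mono ?_)
  rintro x ⟨h1, h2⟩
  exact ⟨h1, h2.trans (mul_le_mul_of_nonneg_right hst hτ)⟩

/-- After the substitution `x₀ = τ² x` the conditions on `x` become more restrictive as `τ` grows. -/
lemma ph_anti (σ : ℝ) (s t : ℝ) (hs : 0 < s) (hst : s ≤ t) :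
    ph σ t / t ^ 2 ≤ ph σ s / s ^ 2 := by
  have ht : 0 < t := hs.trans_le hst
  have key : ∀ τ : ℝ, 0 < τ → {x : ℝ | 0 + τ ^ 2 * x ∈ Om 1 (τ ^ 2) (σ * τ)} =
      {x : ℝ | |x| * τ ^ 2 ≤ 1 ∧ |x * (x + 1)| * τ ^ 3 ≤ σ} := by
    intro τ hτ
    ext x
    simp only [Om, Set.mem_ofPred_eq, zero_add]
    have e : τ ^ 2 * x * (τ ^ 2 * x + τ ^ 2) = τ ^ 4 * (x * (x + 1)) := by ring
    rw [e, abs_mul, abs_mul, abs_of_pos (by positivity : 0 < τ ^ 2),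
      abs_of_pos (by positivity : 0 < τ ^ 4), mul_comm (τ ^ 2),
      show τ ^ 4 * |x * (x + 1)| = |x * (x + 1)| * τ ^ 3 * τ by ring, mul_le_mul_iff_left₀ hτ]
  have f : ∀ τ : ℝ, 0 < τ → (volume {x : ℝ | |x| * τ ^ 2 ≤ 1 ∧ |x * (x + 1)| * τ ^ 3 ≤ σ}).toReal =
      ph σ τ / τ ^ 2 := by
    intro τ hτ
    rw [← key τ hτ, vol_affine _ _ _ (by positivity)]; rfl
  rw [← f s hs, ← f t ht]
  refine ENNReal.toReal_mono ?_ (measure_mono ?_)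
  · rw [← key s hs]
    have : {x : ℝ | 0 + s ^ 2 * x ∈ Om 1 (s ^ 2) (σ * s)} ⊆ Set.Icc (-(1 / s ^ 2)) (1 / s ^ 2) := by
      rw [key s hs]
      rintro x ⟨h1, -⟩
      rw [← le_div_iff₀ (by positivity)] at h1
      exact abs_le.1 h1
    exact ((measure_mono this).trans_lt (by rw [Real.volume_Icc]; exact ENNReal.ofReal_lt_top)).ne
  · rintro x ⟨h1, h2⟩
    exact ⟨le_trans (by gcongr) h1, le_trans (by gcongr) h2⟩

lemma intInt_of_bound (G : ℝ → ℝ) (c : ℝ)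
    (hm : AEStronglyMeasurable G (volume.restrict (Set.Ioc 0 1)))
    (h0 : ∀ t, 0 < t → t ≤ 1 → 0 ≤ G t) (hb : ∀ t, 0 < t → t ≤ 1 → G t ≤ c * t ^ (-(1 / 2) : ℝ)) :
    IntervalIntegrable G volume 0 1 := by
  have hp : IntervalIntegrable (fun t : ℝ => c * t ^ (-(1 / 2) : ℝ)) volume 0 1 :=
    (intervalIntegral.intervalIntegrable_rpow' (by norm_num)).const_mul c
  rw [intervalIntegrable_iff_integrableOn_Ioc_of_le zero_le_one] at hp ⊢
  refine hp.mono' hm ?_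
  filter_upwards [ae_restrict_mem measurableSet_Ioc] with t ht
  rw [Real.norm_eq_abs, abs_of_nonneg (h0 t ht.1 ht.2)]
  exact hb t ht.1 ht.2

lemma sqrt_div_self' (t : ℝ) (ht : 0 < t) : √t / t = t ^ (-(1 / 2) : ℝ) := by
  rw [Real.sqrt_eq_rpow]
  nth_rewrite 2 [← Real.rpow_one t]
  rw [← Real.rpow_sub ht]; norm_num

lemma phq_nonneg (τ : ℝ) (t : ℝ) (ht : 0 < t) (_ : t ≤ 1) : 0 ≤ ph t τ / t :=
  div_nonneg (ph_nonneg _ _) ht.le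

lemma phq_le (τ : ℝ) (t : ℝ) (ht : 0 < t) (_ : t ≤ 1) :
    ph t τ / t ≤ 4 * √τ * t ^ (-(1 / 2) : ℝ) := by
  rw [← sqrt_div_self' t ht]
  have := ph_le t τ
  rw [Real.sqrt_mul ht.le] at this
  rw [← mul_div_assoc]
  gcongr
  linarith

lemma phq_int (τ : ℝ) (hτ : 0 ≤ τ) : IntervalIntegrable (fun σ => ph σ τ / σ) volume 0 1 :=
  intInt_of_bound _ _ ((ph_mono τ hτ).measurable.div measurable_id).aestronglyMeasurable
    (phq_nonneg τ) (phq_le τ)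

/-- The integral of `ph σ τ` over `σ ∈ (0, 1]` against `dσ / σ`. -/
noncomputable def Phi (τ : ℝ) : ℝ := ∫ σ in (0 : ℝ)..1, ph σ τ / σ

lemma Phi_nonneg (τ : ℝ) : 0 ≤ Phi τ := by
  rw [Phi, intervalIntegral.integral_of_le zero_le_one]
  exact setIntegral_nonneg measurableSet_Ioc (fun t ht => phq_nonneg τ t ht.1 ht.2)

lemma Phi_le (τ : ℝ) (hτ : 0 ≤ τ) : Phi τ ≤ 8 * √τ := by
  have hp : IntervalIntegrable (fun t : ℝ => 4 * √τ * t ^ (-(1 / 2) : ℝ)) volume 0 1 :=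
    (intervalIntegral.intervalIntegrable_rpow' (by norm_num)).const_mul _
  have : Phi τ ≤ ∫ t in (0 : ℝ)..1, 4 * √τ * t ^ (-(1 / 2) : ℝ) := by
    have h1 := (phq_int τ hτ).1
    rw [Phi, intervalIntegral.integral_of_le zero_le_one, intervalIntegral.integral_of_le zero_le_one]
    exact setIntegral_mono_on h1 hp.1 measurableSet_Ioc (fun t ht => phq_le τ t ht.1 ht.2)
  rw [intervalIntegral.integral_const_mul, integral_rpow_half] at this
  simp only [Real.sqrt_one, Real.sqrt_zero] at this
  linarith

lemma Phi_anti (s t : ℝ) (hs : 0 < s) (hst : s ≤ t) : Phi t / t ^ 2 ≤ Phi s / s ^ 2 := by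
  have ht : 0 < t := hs.trans_le hst
  rw [Phi, Phi, ← intervalIntegral.integral_div, ← intervalIntegral.integral_div]
  have h1 := ((phq_int t ht.le).div_const (t ^ 2)).1
  have h2 := ((phq_int s hs.le).div_const (s ^ 2)).1
  rw [intervalIntegral.integral_of_le zero_le_one, intervalIntegral.integral_of_le zero_le_one]
  refine setIntegral_mono_on h1 h2 measurableSet_Ioc (fun x hx => ?_)
  have := ph_anti x s t hs hst
  have h3 := div_le_div_of_nonneg_right this hx.1.le
  rw [div_right_comm, div_right_comm (ph x s)]
  exact h3

lemma Phiq_nonneg (t : ℝ) (ht : 0 < t) (_ : t ≤ 1) : 0 ≤ Phi t / t :=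
  div_nonneg (Phi_nonneg _) ht.le

lemma Phiq_le (t : ℝ) (ht : 0 < t) (_ : t ≤ 1) : Phi t / t ≤ 8 * t ^ (-(1 / 2) : ℝ) := by
  rw [← sqrt_div_self' t ht, ← mul_div_assoc]
  gcongr
  exact Phi_le t ht.le

lemma Phiq_int : IntervalIntegrable (fun τ => Phi τ / τ) volume 0 1 := by
  refine intInt_of_bound _ 8 ?_ Phiq_nonneg Phiq_le
  have h1 : AEMeasurable (fun τ => Phi τ / τ ^ 2) (volume.restrict (Set.Ioc 0 1)) :=
    aemeasurable_restrict_of_antitoneOn measurableSet_Ioc (fun s hs t _ hst => Phi_anti s t hs.1 hst)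
  have h2 : AEMeasurable (fun τ => Phi τ / τ ^ 2 * τ) (volume.restrict (Set.Ioc 0 1)) :=
    h1.mul aemeasurable_id
  refine h2.aestronglyMeasurable.congr ?_
  filter_upwards [ae_restrict_mem measurableSet_Ioc] with t ht
  have := ht.1.ne'
  field_simp

/-- The integral of `ph σ τ` over `(0, 1]²` against `dσ dτ / (σ τ)`, a quarter of `omegaInf`. -/
noncomputable def Wc : ℝ := ∫ τ in (0 : ℝ)..1, Phi τ / τ

/-- `riemann` applied in `σ` (where `ph` is increasing) and in `τ` (where `ph / τ²` is decreasing). -/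
lemma riem_sum : ∃ K : ℝ, 0 < K ∧
    (∀ τ : ℝ, 0 ≤ τ → ∀ x : ℝ, 0 < x → x ≤ 1 → ∀ N : ℕ, 1 < x * (N + 1) →
      |∑ m ∈ Finset.Icc 1 N, (if (m : ℝ) * x ≤ 1 then ph (m * x) τ / m else 0) - Phi τ| ≤
        K * √τ * √x) ∧
    (∀ x : ℝ, 0 < x → x ≤ 1 → ∀ N : ℕ, 1 < x * (N + 1) →
      |∑ m ∈ Finset.Icc 1 N, (if (m : ℝ) * x ≤ 1 then Phi (m * x) / m else 0) - Wc| ≤ K * √x) := by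
  obtain ⟨K, hK, h⟩ := riemann
  refine ⟨8 * K, by positivity, ?_, ?_⟩
  · intro τ hτ x hx hx1 N hN
    have := h (fun σ => ph σ τ / σ) (4 * √τ) (by positivity) (phq_nonneg τ) (phq_le τ)
      (phq_int τ hτ) (Or.inl (fun s t hs hst _ => by
        have ht := hs.trans_le hst
        rw [mul_div_cancel₀ _ hs.ne', mul_div_cancel₀ _ ht.ne']
        exact ph_mono τ hτ hst)) x hx hx1 N hN
    have e : ∑ m ∈ Finset.Icc 1 N, (if (m : ℝ) * x ≤ 1 then ph (m * x) τ / m else 0) =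
        ∑ m ∈ Finset.Icc 1 N, (if (m : ℝ) * x ≤ 1 then x * (ph (m * x) τ / (m * x)) else 0) := by
      refine Finset.sum_congr rfl (fun m hm => ?_)
      have hm0 : (m : ℝ) ≠ 0 := by
        have := (Finset.mem_Icc.1 hm).1
        positivity
      split_ifs
      · field_simp
      · rfl
    rw [e]
    refine this.trans ?_
    have : 0 ≤ K * √τ * √x := by positivity
    nlinarith
  · intro x hx hx1 N hN
    have := h (fun τ => Phi τ / τ) 8 (by positivity) Phiq_nonneg Phiq_le
      Phiq_int (Or.inr (fun s t hs hst _ => by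
        have ht := hs.trans_le hst
        have := Phi_anti s t hs hst
        rw [div_le_div_iff₀ (by positivity) (by positivity)] at this
        rw [← mul_div_assoc, ← mul_div_assoc, div_le_div_iff₀ ht hs]
        nlinarith)) x hx hx1 N hN
    have e : ∑ m ∈ Finset.Icc 1 N, (if (m : ℝ) * x ≤ 1 then Phi (m * x) / m else 0) =
        ∑ m ∈ Finset.Icc 1 N, (if (m : ℝ) * x ≤ 1 then x * (Phi (m * x) / (m * x)) else 0) := by
      refine Finset.sum_congr rfl (fun m hm => ?_)
      have hm0 : (m : ℝ) ≠ 0 := by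
        have := (Finset.mem_Icc.1 hm).1
        positivity
      split_ifs
      · field_simp
      · rfl
    rw [e]
    refine this.trans (le_of_eq (by ring))

/-! ### The weighted sum over the torsor variables -/

lemma sum_half (N : ℕ) (x : ℝ) (hx : 0 < x) :
    ∑ m ∈ Finset.Icc 1 N, (if (m : ℝ) * x ≤ 1 then √(m * x) / m else 0) ≤ 2 := by
  -- the partial sums of `m^{-1/2}` are at most `2 √m`
  have key : ∀ M : ℕ, ∑ m ∈ Finset.Icc 1 M, (1 : ℝ) / √m ≤ 2 * √M := by
    intro M
    induction M with
    | zero => simp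
    | succ M ih =>
      rw [Finset.sum_Icc_succ_top (by omega)]
      have h1 : (0 : ℝ) < √((M + 1 : ℕ) : ℝ) := Real.sqrt_pos.2 (by positivity)
      have h2 := Real.sq_sqrt (Nat.cast_nonneg (M + 1) : (0 : ℝ) ≤ ((M + 1 : ℕ) : ℝ))
      have h3 := Real.sq_sqrt (Nat.cast_nonneg M : (0 : ℝ) ≤ (M : ℝ))
      have h4 := Real.sqrt_nonneg (M : ℝ)
      have : 1 / √((M + 1 : ℕ) : ℝ) ≤ 2 * √((M + 1 : ℕ) : ℝ) - 2 * √M := by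
        rw [div_le_iff₀ h1]
        push_cast at *
        nlinarith [sq_nonneg (√((M : ℝ) + 1) - √M)]
      linarith
  rw [← Finset.sum_filter]
  set M := ⌊1 / x⌋₊
  have hsub : (Finset.Icc 1 N).filter (fun m : ℕ => (m : ℝ) * x ≤ 1) ⊆ Finset.Icc 1 M := by
    intro m hm
    rw [Finset.mem_filter, Finset.mem_Icc] at hm
    rw [Finset.mem_Icc]
    refine ⟨hm.1.1, Nat.le_floor ?_⟩
    rw [le_div_iff₀ hx]; exact hm.2
  have hM : (M : ℝ) * x ≤ 1 := by
    rw [← le_div_iff₀ hx]; exact Nat.floor_le (by positivity)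
  calc ∑ m ∈ (Finset.Icc 1 N).filter (fun m : ℕ => (m : ℝ) * x ≤ 1), √(m * x) / m
      ≤ ∑ m ∈ Finset.Icc 1 M, √(m * x) / m :=
        Finset.sum_le_sum_of_subset_of_nonneg hsub (fun m _ _ => by positivity)
    _ = √x * ∑ m ∈ Finset.Icc 1 M, (1 : ℝ) / √m := by
        rw [Finset.mul_sum]
        refine Finset.sum_congr rfl (fun m hm => ?_)
        have hm0 : (0 : ℝ) < m := by exact_mod_cast (Finset.mem_Icc.1 hm).1
        rw [Real.sqrt_mul hm0.le]
        nth_rewrite 2 [← Real.mul_self_sqrt hm0.le]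
        have : 0 < √(m : ℝ) := Real.sqrt_pos.2 hm0
        field_simp
    _ ≤ √x * (2 * √M) := mul_le_mul_of_nonneg_left (key M) (Real.sqrt_nonneg x)
    _ = 2 * √(M * x) := by rw [Real.sqrt_mul (Nat.cast_nonneg M)]; ring
    _ ≤ 2 := by
        have : √(M * x) ≤ 1 := Real.sqrt_le_one.2 hM
        linarith

lemma sum_const_sq (N : ℕ) (C : ℝ) (hC : 0 < C) :
    ∑ b ∈ Finset.Icc 1 N, (if (b : ℝ) ^ 2 * C ≤ 1 then √((b : ℝ) ^ 2 * C) / b else 0) ≤ 1 := by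
  rw [← Finset.sum_filter]
  set M := ⌊1 / √C⌋₊
  have hc : 0 < √C := Real.sqrt_pos.2 hC
  have hsub : (Finset.Icc 1 N).filter (fun m : ℕ => (m : ℝ) ^ 2 * C ≤ 1) ⊆ Finset.Icc 1 M := by
    intro m hm
    rw [Finset.mem_filter, Finset.mem_Icc] at hm
    rw [Finset.mem_Icc]
    refine ⟨hm.1.1, Nat.le_floor ?_⟩
    rw [le_div_iff₀ hc]
    have h2 := hm.2
    rw [← Real.sq_sqrt hC.le, ← mul_pow] at h2
    exact (sq_le_one_iff₀ (by positivity)).1 h2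
  have hM : (M : ℝ) * √C ≤ 1 := by
    rw [← le_div_iff₀ hc]; exact Nat.floor_le (by positivity)
  calc ∑ m ∈ (Finset.Icc 1 N).filter (fun m : ℕ => (m : ℝ) ^ 2 * C ≤ 1), √((m : ℝ) ^ 2 * C) / m
      ≤ ∑ m ∈ Finset.Icc 1 M, √((m : ℝ) ^ 2 * C) / m :=
        Finset.sum_le_sum_of_subset_of_nonneg hsub (fun m _ _ => by positivity)
    _ = ∑ m ∈ Finset.Icc 1 M, √C := by
        refine Finset.sum_congr rfl (fun m hm => ?_)
        have hm0 : (0 : ℝ) < m := by exact_mod_cast (Finset.mem_Icc.1 hm).1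
        rw [Real.sqrt_mul (by positivity), Real.sqrt_sq hm0.le]
        field_simp
    _ = M * √C := by simp
    _ ≤ 1 := hM

set_option maxHeartbeats 1000000 in
/-- The inner sum over the variables `a₁, a₂, b₁, b₂`. -/
lemma inner_four : ∃ K : ℝ, 0 < K ∧ ∀ (N : ℕ) (A C : ℝ), 1 ≤ N → 0 < A → 0 < C → 1 < A * (N + 1) →
    1 < C * (N + 1) →
    |∑ a ∈ Finset.Icc 1 N, (∑ b ∈ Finset.Icc 1 N, (∑ k ∈ Finset.Icc 1 N,
        (if (k : ℝ) * ((b : ℝ) ^ 2 * C) ≤ 1 then (∑ j ∈ Finset.Icc 1 N,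
          (if (j : ℝ) * (a * A) ≤ 1 then ph (j * (a * A)) (k * ((b : ℝ) ^ 2 * C)) / j else 0)) / k
          else 0)) / b) / a -
      Wc * ((∑ a ∈ Finset.Icc 1 N, if (a : ℝ) * A ≤ 1 then (1 : ℝ) / a else 0) *
        (∑ b ∈ Finset.Icc 1 N, if (b : ℝ) ^ 2 * C ≤ 1 then (1 : ℝ) / b else 0))| ≤
      K * (1 + Real.log N) := by
  obtain ⟨K, hK, h1, h2⟩ := riem_sum
  refine ⟨5 * K, by positivity, ?_⟩
  intro N A C hN hA hC hNA hNC
  have hharm := harm_le N hN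
  have hN1 : (0 : ℝ) < N + 1 := by positivity
  -- the sum over `j`, with the correct value `0` once `a A > 1`
  have s1 : ∀ a ∈ Finset.Icc 1 N, ∀ τ : ℝ, 0 ≤ τ →
      |∑ j ∈ Finset.Icc 1 N, (if (j : ℝ) * (a * A) ≤ 1 then ph (j * (a * A)) τ / j else 0) -
        (if (a : ℝ) * A ≤ 1 then Phi τ else 0)| ≤
      if (a : ℝ) * A ≤ 1 then K * √τ * √(a * A) else 0 := by
    intro a ha τ hτ
    have ha1 : (1 : ℝ) ≤ a := by exact_mod_cast (Finset.mem_Icc.1 ha).1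
    by_cases hle : (a : ℝ) * A ≤ 1
    · rw [if_pos hle, if_pos hle]
      exact h1 τ hτ _ (by positivity) hle N (by nlinarith)
    · rw [if_neg hle, if_neg hle, Finset.sum_eq_zero, sub_zero, abs_zero]
      intro j hj
      have hj1 : (1 : ℝ) ≤ j := by exact_mod_cast (Finset.mem_Icc.1 hj).1
      rw [if_neg]
      push Not at hle ⊢
      nlinarith
  have s2 : ∀ b ∈ Finset.Icc 1 N,
      |∑ k ∈ Finset.Icc 1 N, (if (k : ℝ) * ((b : ℝ) ^ 2 * C) ≤ 1 then Phi (k * ((b : ℝ) ^ 2 * C)) / k else 0) -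
        (if (b : ℝ) ^ 2 * C ≤ 1 then Wc else 0)| ≤
      if (b : ℝ) ^ 2 * C ≤ 1 then K * √((b : ℝ) ^ 2 * C) else 0 := by
    intro b hb
    have hb1 : (1 : ℝ) ≤ b := by exact_mod_cast (Finset.mem_Icc.1 hb).1
    have hb2 : (1 : ℝ) ≤ (b : ℝ) ^ 2 := by nlinarith
    by_cases hle : (b : ℝ) ^ 2 * C ≤ 1
    · rw [if_pos hle, if_pos hle]
      exact h2 _ (by positivity) hle N (by nlinarith)
    · rw [if_neg hle, if_neg hle, Finset.sum_eq_zero, sub_zero, abs_zero]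
      intro j hj
      have hj1 : (1 : ℝ) ≤ j := by exact_mod_cast (Finset.mem_Icc.1 hj).1
      rw [if_neg]
      push Not at hle ⊢
      nlinarith
  -- for fixed `a, b`
  have s3 : ∀ a ∈ Finset.Icc 1 N, ∀ b ∈ Finset.Icc 1 N,
      |∑ k ∈ Finset.Icc 1 N,
        (if (k : ℝ) * ((b : ℝ) ^ 2 * C) ≤ 1 then (∑ j ∈ Finset.Icc 1 N,
          (if (j : ℝ) * (a * A) ≤ 1 then ph (j * (a * A)) (k * ((b : ℝ) ^ 2 * C)) / j else 0)) / k
          else 0) - (if (a : ℝ) * A ≤ 1 then (if (b : ℝ) ^ 2 * C ≤ 1 then Wc else 0) else 0)| ≤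
      (if (a : ℝ) * A ≤ 1 then 2 * K * √(a * A) else 0) +
        (if (b : ℝ) ^ 2 * C ≤ 1 then K * √((b : ℝ) ^ 2 * C) else 0) := by
    intro a ha b hb
    have hb1 : (1 : ℝ) ≤ b := by exact_mod_cast (Finset.mem_Icc.1 hb).1
    have e1 : |∑ k ∈ Finset.Icc 1 N,
        (if (k : ℝ) * ((b : ℝ) ^ 2 * C) ≤ 1 then (∑ j ∈ Finset.Icc 1 N,
          (if (j : ℝ) * (a * A) ≤ 1 then ph (j * (a * A)) (k * ((b : ℝ) ^ 2 * C)) / j else 0)) / k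
          else 0) - ∑ k ∈ Finset.Icc 1 N, (if (k : ℝ) * ((b : ℝ) ^ 2 * C) ≤ 1 then
            (if (a : ℝ) * A ≤ 1 then Phi (k * ((b : ℝ) ^ 2 * C)) else 0) / k else 0)| ≤
        if (a : ℝ) * A ≤ 1 then 2 * K * √(a * A) else 0 := by
      rw [← Finset.sum_sub_distrib]
      refine (Finset.abs_sum_le_sum_abs _ _).trans ?_
      have t : ∀ k ∈ Finset.Icc 1 N, |(if (k : ℝ) * ((b : ℝ) ^ 2 * C) ≤ 1 then (∑ j ∈ Finset.Icc 1 N,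
          (if (j : ℝ) * (a * A) ≤ 1 then ph (j * (a * A)) (k * ((b : ℝ) ^ 2 * C)) / j else 0)) / k
          else 0) - (if (k : ℝ) * ((b : ℝ) ^ 2 * C) ≤ 1 then
            (if (a : ℝ) * A ≤ 1 then Phi (k * ((b : ℝ) ^ 2 * C)) else 0) / k else 0)| ≤
          (if (a : ℝ) * A ≤ 1 then K * √(a * A) else 0) *
          (if (k : ℝ) * ((b : ℝ) ^ 2 * C) ≤ 1 then √(k * ((b : ℝ) ^ 2 * C)) / k else 0) := by
        intro k hk
        have hk0 : (0 : ℝ) < k := by exact_mod_cast (Finset.mem_Icc.1 hk).1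
        by_cases hle : (k : ℝ) * ((b : ℝ) ^ 2 * C) ≤ 1
        · rw [if_pos hle, if_pos hle, if_pos hle, ← sub_div, abs_div, abs_of_pos hk0, ← mul_div_assoc]
          refine div_le_div_of_nonneg_right ((s1 a ha _ (by positivity)).trans ?_) hk0.le
          split_ifs
          · exact le_of_eq (by ring)
          · simp
        · simp [if_neg hle]
      refine (Finset.sum_le_sum t).trans ?_
      rw [← Finset.mul_sum]
      have := sum_half N ((b : ℝ) ^ 2 * C) (by positivity)
      split_ifs
      · have h0 : 0 ≤ K * √(a * A) := by positivity
        nlinarith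
      · simp
    have e2 : |∑ k ∈ Finset.Icc 1 N, (if (k : ℝ) * ((b : ℝ) ^ 2 * C) ≤ 1 then
            (if (a : ℝ) * A ≤ 1 then Phi (k * ((b : ℝ) ^ 2 * C)) else 0) / k else 0) -
        (if (a : ℝ) * A ≤ 1 then (if (b : ℝ) ^ 2 * C ≤ 1 then Wc else 0) else 0)| ≤
        if (b : ℝ) ^ 2 * C ≤ 1 then K * √((b : ℝ) ^ 2 * C) else 0 := by
      by_cases hle : (a : ℝ) * A ≤ 1
      · simp only [if_pos hle]; exact s2 b hb
      · simp only [if_neg hle, zero_div, ite_self, Finset.sum_const_zero, sub_zero, abs_zero]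
        split_ifs <;> positivity
    exact (abs_sub_le _ _ _).trans (add_le_add e1 e2)
  rw [show Wc * ((∑ a ∈ Finset.Icc 1 N, if (a : ℝ) * A ≤ 1 then (1 : ℝ) / a else 0) *
        (∑ b ∈ Finset.Icc 1 N, if (b : ℝ) ^ 2 * C ≤ 1 then (1 : ℝ) / b else 0)) =
      ∑ a ∈ Finset.Icc 1 N, (∑ b ∈ Finset.Icc 1 N,
        (if (a : ℝ) * A ≤ 1 then (if (b : ℝ) ^ 2 * C ≤ 1 then Wc else 0) else 0) / b) / a by
    rw [Finset.sum_mul_sum, Finset.mul_sum]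
    refine Finset.sum_congr rfl (fun a _ => ?_)
    rw [Finset.mul_sum, Finset.sum_div]
    refine Finset.sum_congr rfl (fun b _ => ?_)
    split_ifs <;> simp <;> ring]
  rw [← Finset.sum_sub_distrib]
  refine (Finset.abs_sum_le_sum_abs _ _).trans ?_
  have t : ∀ a ∈ Finset.Icc 1 N, |(∑ b ∈ Finset.Icc 1 N, (∑ k ∈ Finset.Icc 1 N,
        (if (k : ℝ) * ((b : ℝ) ^ 2 * C) ≤ 1 then (∑ j ∈ Finset.Icc 1 N,
          (if (j : ℝ) * (a * A) ≤ 1 then ph (j * (a * A)) (k * ((b : ℝ) ^ 2 * C)) / j else 0)) / k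
          else 0)) / b) / a - (∑ b ∈ Finset.Icc 1 N,
        (if (a : ℝ) * A ≤ 1 then (if (b : ℝ) ^ 2 * C ≤ 1 then Wc else 0) else 0) / b) / a| ≤
      2 * K * (∑ b ∈ Finset.Icc 1 N, (1 : ℝ) / b) * (if (a : ℝ) * A ≤ 1 then √(a * A) / a else 0) +
        K * (1 / a) := by
    intro a ha
    have ha0 : (0 : ℝ) < a := by exact_mod_cast (Finset.mem_Icc.1 ha).1
    rw [← sub_div, ← Finset.sum_sub_distrib, abs_div, abs_of_pos ha0, div_le_iff₀ ha0]
    refine (Finset.abs_sum_le_sum_abs _ _).trans ?_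
    have t' : ∀ b ∈ Finset.Icc 1 N, |(∑ k ∈ Finset.Icc 1 N,
        (if (k : ℝ) * ((b : ℝ) ^ 2 * C) ≤ 1 then (∑ j ∈ Finset.Icc 1 N,
          (if (j : ℝ) * (a * A) ≤ 1 then ph (j * (a * A)) (k * ((b : ℝ) ^ 2 * C)) / j else 0)) / k
          else 0)) / b -
        (if (a : ℝ) * A ≤ 1 then (if (b : ℝ) ^ 2 * C ≤ 1 then Wc else 0) else 0) / b| ≤
        (if (a : ℝ) * A ≤ 1 then 2 * K * √(a * A) else 0) * (1 / b) +
        K * (if (b : ℝ) ^ 2 * C ≤ 1 then √((b : ℝ) ^ 2 * C) / b else 0) := by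
      intro b hb
      have hb0 : (0 : ℝ) < b := by exact_mod_cast (Finset.mem_Icc.1 hb).1
      rw [← sub_div, abs_div, abs_of_pos hb0, div_le_iff₀ hb0]
      refine (s3 a ha b hb).trans (le_of_eq ?_)
      split_ifs <;> field_simp <;> simp <;> ring
    refine (Finset.sum_le_sum t').trans ?_
    rw [Finset.sum_add_distrib, ← Finset.mul_sum, ← Finset.mul_sum]
    have h3 := sum_const_sq N C hC
    have e : (2 * K * (∑ b ∈ Finset.Icc 1 N, (1 : ℝ) / b) *
        (if (a : ℝ) * A ≤ 1 then √(a * A) / a else 0) + K * (1 / a)) * a =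
        (if (a : ℝ) * A ≤ 1 then 2 * K * √(a * A) else 0) * (∑ b ∈ Finset.Icc 1 N, (1 : ℝ) / b) + K := by
      split_ifs <;> field_simp <;> simp <;> ring
    rw [e]
    nlinarith
  refine (Finset.sum_le_sum t).trans ?_
  rw [Finset.sum_add_distrib, ← Finset.mul_sum, ← Finset.mul_sum]
  have h3 := sum_half N A hA
  have h4 : (0 : ℝ) ≤ ∑ b ∈ Finset.Icc 1 N, (1 : ℝ) / b := Finset.sum_nonneg (fun b _ => by positivity)
  have h5 := mul_le_mul_of_nonneg_left h3 (by positivity : 0 ≤ 2 * K * ∑ b ∈ Finset.Icc 1 N, (1 : ℝ) / b)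
  have h6 := mul_le_mul_of_nonneg_left hharm (by positivity : 0 ≤ 5 * K)
  linarith

/-- The box `[1, N]⁷` of torsor variables. -/
def box (N : ℕ) : Finset (Fin 7 → ℕ) := Fintype.piFinset (fun _ => Finset.Icc 1 N)

lemma mem_box (N : ℕ) (n : Fin 7 → ℕ) : n ∈ box N ↔ ∀ i, 1 ≤ n i ∧ n i ≤ N := by
  simp [box, Fintype.mem_piFinset]

lemma box_sum (N : ℕ) (f : (Fin 7 → ℕ) → ℝ) :
    ∑ m ∈ box N, f m = ∑ t ∈ Finset.Icc 1 N, ∑ u ∈ Finset.Icc 1 N, ∑ s ∈ Finset.Icc 1 N,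
      ∑ a ∈ Finset.Icc 1 N, ∑ b ∈ Finset.Icc 1 N, ∑ k ∈ Finset.Icc 1 N, ∑ j ∈ Finset.Icc 1 N,
        f ![s, t, u, j, a, k, b] := by
  simp_rw [← Finset.sum_product']
  refine Finset.sum_nbij' (fun m => (m 1, m 2, m 0, m 4, m 6, m 5, m 3))
    (fun p => ![p.2.2.1, p.1, p.2.1, p.2.2.2.2.2.2, p.2.2.2.1, p.2.2.2.2.2.1, p.2.2.2.2.1])
    ?_ ?_ ?_ ?_ ?_
  · intro m hm
    rw [mem_box] at hm
    simp only [Finset.mem_product, Finset.mem_Icc]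
    exact ⟨hm 1, hm 2, hm 0, hm 4, hm 6, hm 5, hm 3⟩
  · intro p hp
    simp only [Finset.mem_product, Finset.mem_Icc] at hp
    obtain ⟨h1, h2, h0, h4, h6, h5, h3⟩ := hp
    rw [mem_box]
    intro i
    fin_cases i
    exacts [h0, h1, h2, h3, h4, h5, h6]
  · intro m _
    ext i
    fin_cases i <;> rfl
  · intro p _
    rfl
  · intro m _
    congr 1
    ext i
    fin_cases i <;> rfl

/-- The weight of the torsor variables `n` in the main term: the length of the set of `x₀ / B` allowed
by the height condition when `x₁, x₂, x₃` are fixed. -/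
noncomputable def Fw (B : ℝ) (n : Fin 7 → ℕ) : ℝ :=
  if (X1 n : ℝ) ≤ B ∧ (X3 n : ℝ) ≤ B then phi2 (X3 n / B) (X2 n / B) else 0

lemma Fw_eq (B : ℝ) (hB : 0 < B) (n : Fin 7 → ℕ) (σ τ : ℝ) (hσ : 0 ≤ σ) (hτ : 0 ≤ τ)
    (h1 : σ ^ 2 = X1 n / B) (h2 : τ ^ 2 = X3 n / B) :
    Fw B n = if τ ≤ 1 then (if σ ≤ 1 then ph σ τ else 0) else 0 := by
  have i1 : (X1 n : ℝ) ≤ B ↔ σ ≤ 1 := by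
    rw [← sq_le_one_iff₀ hσ, h1, div_le_one hB]
  have i2 : (X3 n : ℝ) ≤ B ↔ τ ≤ 1 := by
    rw [← sq_le_one_iff₀ hτ, h2, div_le_one hB]
  have e : (X2 n : ℝ) / B = σ * τ := by
    have : ((X2 n : ℝ) / B) ^ 2 = (σ * τ) ^ 2 := by
      rw [mul_pow, h1, h2, X1, X2, X3]
      push_cast
      field_simp
    exact (pow_left_inj₀ (by positivity) (by positivity) two_ne_zero).1 this
  rw [Fw, e, ← h2, ← ph]
  simp only [i1, i2]
  by_cases hs : σ ≤ 1 <;> by_cases ht : τ ≤ 1 <;> simp [hs, ht]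

/-- The sum of the weights `Fw B n / ∏ i, n i` over the multiples `n i = d i * m i` of `d`, multiplied
by `∏ i, d i`. -/
noncomputable def SD (B : ℝ) (d : Fin 7 → ℕ) : ℝ :=
  ∑ m ∈ box ⌊B⌋₊, Fw B (fun i => d i * m i) / ∏ i, (m i : ℝ)

set_option maxHeartbeats 1000000 in
/-- With `σ = √(x₁ / B)` and `τ = √(x₃ / B)`, the sum separates into nested sums: `σ` is linear in `j`
and `a` (the variables `a₁`, `a₂`), and `τ` is linear in `k` and quadratic in `b` (the variables
`b₁`, `b₂`). -/
lemma SD_eq (B : ℝ) (hB : 0 < B) (d : Fin 7 → ℕ) :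
    SD B d = ∑ t ∈ Finset.Icc 1 ⌊B⌋₊, ∑ u ∈ Finset.Icc 1 ⌊B⌋₊, (∑ s ∈ Finset.Icc 1 ⌊B⌋₊,
      (∑ a ∈ Finset.Icc 1 ⌊B⌋₊, (∑ b ∈ Finset.Icc 1 ⌊B⌋₊, (∑ k ∈ Finset.Icc 1 ⌊B⌋₊,
        (if (k : ℝ) * ((b : ℝ) ^ 2 * (√(X3 d / B) * (s * u * √(t * u)))) ≤ 1 then
          (∑ j ∈ Finset.Icc 1 ⌊B⌋₊,
          (if (j : ℝ) * (a * (√(X1 d / B) * (s * t * √(t * u)))) ≤ 1 then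
            ph (j * (a * (√(X1 d / B) * (s * t * √(t * u)))))
              (k * ((b : ℝ) ^ 2 * (√(X3 d / B) * (s * u * √(t * u))))) / j else 0)) / k
          else 0)) / b) / a) / s) / (t * u) := by
  rw [SD, box_sum]
  refine Finset.sum_congr rfl (fun t _ => Finset.sum_congr rfl (fun u _ => ?_))
  rw [Finset.sum_div]
  refine Finset.sum_congr rfl (fun s _ => ?_)
  rw [Finset.sum_div, Finset.sum_div]
  refine Finset.sum_congr rfl (fun a _ => ?_)
  rw [Finset.sum_div, Finset.sum_div, Finset.sum_div]
  refine Finset.sum_congr rfl (fun b _ => ?_)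
  rw [Finset.sum_div, Finset.sum_div, Finset.sum_div, Finset.sum_div]
  refine Finset.sum_congr rfl (fun k _ => ?_)
  simp only [Fin.prod_univ_seven]
  have hd1 := Real.sq_sqrt (by positivity : 0 ≤ (X1 d : ℝ) / B)
  have hd3 := Real.sq_sqrt (by positivity : 0 ≤ (X3 d : ℝ) / B)
  have htu := Real.sq_sqrt (by positivity : 0 ≤ (t : ℝ) * u)
  have hF : ∀ j : ℕ, Fw B (fun i => d i * (![s, t, u, j, a, k, b] : Fin 7 → ℕ) i) =
      if (k : ℝ) * ((b : ℝ) ^ 2 * (√(X3 d / B) * (s * u * √(t * u)))) ≤ 1 then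
        (if (j : ℝ) * (a * (√(X1 d / B) * (s * t * √(t * u)))) ≤ 1 then
          ph (j * (a * (√(X1 d / B) * (s * t * √(t * u)))))
              (k * ((b : ℝ) ^ 2 * (√(X3 d / B) * (s * u * √(t * u))))) else 0) else 0 := by
    intro j
    apply Fw_eq B hB _ _ _ (by positivity) (by positivity)
    · simp only [mul_pow, hd1, htu]
      simp only [X1]
      push_cast
      ring
    · simp only [mul_pow, hd3, htu]
      simp only [X3]
      push_cast
      ring
  simp only [hF]
  split_ifs
  · rw [Finset.sum_div, Finset.sum_div, Finset.sum_div, Finset.sum_div, Finset.sum_div]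
    refine Finset.sum_congr rfl (fun j _ => ?_)
    split_ifs
    · simp
      ring
    · simp
  · simp

lemma X1_le (d : Fin 7 → ℕ) (hd : ∀ i, 1 ≤ d i) : X1 d ≤ (∏ i, d i) ^ 4 := by
  have e : (∏ i, d i) ^ 4 = X1 d * (d 0 ^ 2 * d 1 * d 2 ^ 3 * d 3 ^ 2 * d 4 ^ 2 * d 5 ^ 4 * d 6 ^ 4) := by
    rw [Fin.prod_univ_seven, X1]; ring
  rw [e]
  exact Nat.le_mul_of_pos_right _ (by have := hd 0; have := hd 1; have := hd 2; have := hd 3; have := hd 4; have := hd 5; have := hd 6; positivity)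

lemma X3_le (d : Fin 7 → ℕ) (hd : ∀ i, 1 ≤ d i) : X3 d ≤ (∏ i, d i) ^ 4 := by
  have e : (∏ i, d i) ^ 4 = X3 d * (d 0 ^ 2 * d 1 ^ 3 * d 2 * d 3 ^ 4 * d 4 ^ 4 * d 5 ^ 2) := by
    rw [Fin.prod_univ_seven, X3]; ring
  rw [e]
  exact Nat.le_mul_of_pos_right _ (by have := hd 0; have := hd 1; have := hd 2; have := hd 3; have := hd 4; have := hd 5; have := hd 6; positivity)

lemma Wc_nonneg : 0 ≤ Wc := by
  rw [Wc, intervalIntegral.integral_of_le zero_le_one]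
  exact setIntegral_nonneg measurableSet_Ioc (fun t ht => Phiq_nonneg t ht.1 ht.2)

set_option maxHeartbeats 1000000 in
/-- The asymptotic formula for `SD`, uniformly in `d`. -/
lemma SD_asymp : ∃ K : ℝ, 0 < K ∧ ∀ (B : ℝ) (d : Fin 7 → ℕ), 1 ≤ B → (∀ i, 1 ≤ d i) →
    |SD B d - Wc * (Real.log B ^ 5 / 4320)| ≤
      K * (1 + Real.log B) ^ 4 * (1 + Real.log (∏ i, (d i : ℝ))) := by
  obtain ⟨K, hK, h⟩ := inner_four
  refine ⟨K + 6 * Wc, by linarith [Wc_nonneg], ?_⟩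
  intro B d hB hd
  have hB0 : 0 < B := by linarith
  have hL := Real.log_nonneg hB
  set N := ⌊B⌋₊ with hN
  have hN1 : 1 ≤ N := Nat.le_floor (by simpa using hB)
  have hlogN : Real.log N ≤ Real.log B :=
    Real.log_le_log (by exact_mod_cast hN1) (Nat.floor_le hB0.le)
  have hNB : B < N + 1 := Nat.lt_floor_add_one B
  have hX1 : (1 : ℝ) ≤ X1 d := by
    have : 0 < X1 d := by
      have := hd 0; have := hd 1; have := hd 2; have := hd 3; have := hd 4
      rw [X1]; positivity
    exact_mod_cast this
  have hX3 : (1 : ℝ) ≤ X3 d := by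
    have : 0 < X3 d := by
      have := hd 0; have := hd 1; have := hd 2; have := hd 5; have := hd 6
      rw [X3]; positivity
    exact_mod_cast this
  have hD : (1 : ℝ) ≤ ∏ i, (d i : ℝ) := by
    have : 1 ≤ ∏ i, d i := Nat.one_le_iff_ne_zero.2 (Finset.prod_ne_zero_iff.2 (fun i _ => by have := hd i; omega))
    exact_mod_cast this
  have hl : 0 ≤ Real.log (∏ i, (d i : ℝ)) := Real.log_nonneg hD
  have l1 : Real.log (X1 d) ≤ 4 * Real.log (∏ i, (d i : ℝ)) := by
    have : (X1 d : ℝ) ≤ (∏ i, (d i : ℝ)) ^ 4 := by exact_mod_cast X1_le d hd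
    have := Real.log_le_log (by linarith) this
    rw [Real.log_pow] at this
    exact_mod_cast this
  have l3 : Real.log (X3 d) ≤ 4 * Real.log (∏ i, (d i : ℝ)) := by
    have : (X3 d : ℝ) ≤ (∏ i, (d i : ℝ)) ^ 4 := by exact_mod_cast X3_le d hd
    have := Real.log_le_log (by linarith) this
    rw [Real.log_pow] at this
    exact_mod_cast this
  have hr := rr_asymp B hB (X1 d) (X3 d) (Real.log (∏ i, (d i : ℝ))) hX1 hX3 l1 l3
  set lam := √((X1 d : ℝ) / B) with hlam
  set kp := √((X3 d : ℝ) / B) with hkp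
  -- both scales are at least `1 / B`
  have hlow : ∀ X : ℝ, 1 ≤ X → 1 / B ≤ √(X / B) := by
    intro X hX
    apply Real.le_sqrt_of_sq_le
    rw [div_pow, one_pow, div_le_div_iff₀ (by positivity) hB0]
    nlinarith
  have hlam1 : 1 / B ≤ lam := hlow _ hX1
  have hkp1 : 1 / B ≤ kp := hlow _ hX3
  have hmul : ∀ x y : ℝ, 1 / B ≤ x → 1 ≤ y → 0 < x * y ∧ 1 < x * y * (N + 1) := by
    intro x y hx hy
    have hb : 0 < 1 / B := by positivity
    have h1 : 1 / B ≤ x * y := by nlinarith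
    refine ⟨by linarith, ?_⟩
    have : 1 / B * (N + 1) > 1 := by
      rw [gt_iff_lt, one_div_mul_eq_div, lt_div_iff₀ hB0]; linarith
    have h2 : (0 : ℝ) < N + 1 := by positivity
    nlinarith
  have hge : ∀ s t u v: ℕ, 1 ≤ s → 1 ≤ t → 1 ≤ u → 1 ≤ v → (1 : ℝ) ≤ s * v * √(t * u) := by
    intro s t u v hs ht hu hv
    have h1 : (1 : ℝ) ≤ s * v := by exact_mod_cast Nat.mul_pos hs hv
    have h2 : (1 : ℝ) ≤ t * u := by exact_mod_cast Nat.mul_pos ht hu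
    have h3 : 1 ≤ √((t : ℝ) * u) := Real.one_le_sqrt.2 h2
    nlinarith
  have main : |SD B d - Wc * rr N lam kp| ≤ K * (1 + Real.log B) ^ 4 := by
    have hh := harm_le N hN1
    have hh0 : (0 : ℝ) ≤ ∑ s ∈ Finset.Icc 1 N, (1 : ℝ) / s := Finset.sum_nonneg (fun s _ => by positivity)
    have hhB : ∑ s ∈ Finset.Icc 1 N, (1 : ℝ) / s ≤ 1 + Real.log B := by linarith
    rw [SD_eq B hB0, rr, Finset.mul_sum, ← Finset.sum_sub_distrib]
    refine (Finset.abs_sum_le_sum_abs _ _).trans ?_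
    calc _ ≤ ∑ t ∈ Finset.Icc 1 N, ((1 : ℝ) / t) * (K * (1 + Real.log B) ^ 3) := ?_
      _ = (∑ t ∈ Finset.Icc 1 N, (1 : ℝ) / t) * (K * (1 + Real.log B) ^ 3) := by rw [Finset.sum_mul]
      _ ≤ (1 + Real.log B) * (K * (1 + Real.log B) ^ 3) := by gcongr
      _ = _ := by ring
    refine Finset.sum_le_sum (fun t ht => ?_)
    have ht1 := (Finset.mem_Icc.1 ht).1
    rw [Finset.mul_sum, ← Finset.sum_sub_distrib]
    refine (Finset.abs_sum_le_sum_abs _ _).trans ?_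
    calc _ ≤ ∑ u ∈ Finset.Icc 1 N, ((1 : ℝ) / u) * ((1 / t) * (K * (1 + Real.log B) ^ 2)) := ?_
      _ = (∑ u ∈ Finset.Icc 1 N, (1 : ℝ) / u) * ((1 / t) * (K * (1 + Real.log B) ^ 2)) := by rw [Finset.sum_mul]
      _ ≤ (1 + Real.log B) * ((1 / t) * (K * (1 + Real.log B) ^ 2)) := by gcongr
      _ = _ := by ring
    refine Finset.sum_le_sum (fun u hu => ?_)
    have hu1 := (Finset.mem_Icc.1 hu).1
    have ht0 : (0 : ℝ) < t := by exact_mod_cast ht1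
    have hu0 : (0 : ℝ) < u := by exact_mod_cast hu1
    rw [← mul_div_assoc, ← sub_div, Finset.mul_sum, ← Finset.sum_sub_distrib, abs_div,
      abs_of_pos (mul_pos ht0 hu0)]
    rw [show (1 : ℝ) / u * (1 / t * (K * (1 + Real.log B) ^ 2)) = (K * (1 + Real.log B) ^ 2) / (t * u) by
      field_simp]
    refine div_le_div_of_nonneg_right ?_ (by positivity)
    refine (Finset.abs_sum_le_sum_abs _ _).trans ?_
    calc _ ≤ ∑ s ∈ Finset.Icc 1 N, ((1 : ℝ) / s) * (K * (1 + Real.log B)) := ?_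
      _ = (∑ s ∈ Finset.Icc 1 N, (1 : ℝ) / s) * (K * (1 + Real.log B)) := by rw [Finset.sum_mul]
      _ ≤ (1 + Real.log B) * (K * (1 + Real.log B)) := by gcongr
      _ = _ := by ring
    refine Finset.sum_le_sum (fun s hs => ?_)
    have hs1 := (Finset.mem_Icc.1 hs).1
    have hs0 : (0 : ℝ) < s := by exact_mod_cast hs1
    obtain ⟨p1, p2⟩ := hmul lam _ hlam1 (hge s t u t hs1 ht1 hu1 ht1)
    obtain ⟨q1, q2⟩ := hmul kp _ hkp1 (hge s t u u hs1 ht1 hu1 hu1)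
    have := h N _ _ hN1 p1 q1 p2 q2
    rw [← mul_div_assoc, ← sub_div, abs_div, abs_of_pos hs0, one_div_mul_eq_div]
    refine div_le_div_of_nonneg_right (this.trans ?_) hs0.le
    gcongr
  have e : SD B d - Wc * (Real.log B ^ 5 / 4320) =
      (SD B d - Wc * rr N lam kp) + Wc * (rr N lam kp - Real.log B ^ 5 / 4320) := by ring
  rw [e]
  refine (abs_add_le _ _).trans ?_
  rw [abs_mul, abs_of_nonneg Wc_nonneg]
  have h2 := mul_le_mul_of_nonneg_left hr Wc_nonneg
  have h3 : K * (1 + Real.log B) ^ 4 ≤ K * (1 + Real.log B) ^ 4 * (1 + Real.log (∏ i, (d i : ℝ))) :=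
    le_mul_of_one_le_right (by positivity) (by linarith)
  nlinarith

/-! ### Reduction to a finite sum and the total error -/

lemma TorSet_finite (B : ℝ) : (TorSet B).Finite := by
  have hfin : (PosSet B).Finite := (countSet_finite B).subset fun v hv => hv.1
  rw [← (torMap_bij B).image_eq] at hfin
  exact hfin.of_finite_image (torMap_bij B).injOn

/-- The torsor variables contributing to the count. -/
def Adm (B : ℝ) (n : Fin 7 → ℕ) : Prop := CopN n ∧ (X1 n : ℝ) ≤ B ∧ (X3 n : ℝ) ≤ B

lemma le_of_X (B : ℝ) (n : Fin 7 → ℕ) (hn : ∀ i, 0 < n i) (h1 : (X1 n : ℝ) ≤ B)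
    (h3 : (X3 n : ℝ) ≤ B) (i : Fin 7) : n i ≤ ⌊B⌋₊ := by
  have hn0 := hn 0; have hn1 := hn 1; have hn2 := hn 2; have hn3 := hn 3
  have hn4 := hn 4; have hn5 := hn 5; have hn6 := hn 6
  have p1 : 0 < X1 n := by rw [X1]; positivity
  have p3 : 0 < X3 n := by rw [X3]; positivity
  have k1 : X1 n ≤ ⌊B⌋₊ := Nat.le_floor h1
  have k3 : X3 n ≤ ⌊B⌋₊ := Nat.le_floor h3
  have d1 : ∀ m, m ∣ X1 n → m ≤ ⌊B⌋₊ := fun m hm => (Nat.le_of_dvd p1 hm).trans k1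
  have d3 : ∀ m, m ∣ X3 n → m ≤ ⌊B⌋₊ := fun m hm => (Nat.le_of_dvd p3 hm).trans k3
  fin_cases i
  · exact d1 _ ⟨n 0 * n 1 ^ 3 * n 2 * n 3 ^ 2 * n 4 ^ 2, by simp [X1]; ring⟩
  · exact d1 _ ⟨n 0 ^ 2 * n 1 ^ 2 * n 2 * n 3 ^ 2 * n 4 ^ 2, by simp [X1]; ring⟩
  · exact d1 _ ⟨n 0 ^ 2 * n 1 ^ 3 * n 3 ^ 2 * n 4 ^ 2, by simp [X1]; ring⟩
  · exact d1 _ ⟨n 0 ^ 2 * n 1 ^ 3 * n 2 * n 3 * n 4 ^ 2, by simp [X1]; ring⟩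
  · exact d1 _ ⟨n 0 ^ 2 * n 1 ^ 3 * n 2 * n 3 ^ 2 * n 4, by simp [X1]; ring⟩
  · exact d3 _ ⟨n 0 ^ 2 * n 1 * n 2 ^ 3 * n 5 * n 6 ^ 4, by simp [X3]; ring⟩
  · exact d3 _ ⟨n 0 ^ 2 * n 1 * n 2 ^ 3 * n 5 ^ 2 * n 6 ^ 3, by simp [X3]; ring⟩

open Classical in
lemma ncard_TorSet (B : ℝ) : ((TorSet B).ncard : ℝ) =
    ∑ n ∈ box ⌊B⌋₊, if Adm B n then (({y : ℤ | GoodY n y ∧ HtY B n y}).ncard : ℝ) else 0 := by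
  rw [Set.ncard_eq_toFinset_card _ (TorSet_finite B)]
  rw [Finset.card_eq_sum_card_fiberwise (f := fun q : (Fin 7 → ℕ) × ℤ => q.1) (t := box ⌊B⌋₊)]
  · push_cast
    refine Finset.sum_congr rfl (fun n hn => ?_)
    rw [mem_box] at hn
    have e : ((((TorSet_finite B).toFinset).filter (fun q => q.1 = n) : Finset _) :
        Set ((Fin 7 → ℕ) × ℤ)) =
        if Adm B n then (fun y : ℤ => (n, y)) '' {y : ℤ | GoodY n y ∧ HtY B n y} else ∅ := by
      ext ⟨m, y⟩
      simp only [Finset.coe_filter, Set.Finite.mem_toFinset, Set.mem_ofPred_eq, TorSet]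
      split_ifs with h
      · simp only [Set.mem_image, Set.mem_ofPred_eq, Prod.mk.injEq]
        constructor
        · rintro ⟨⟨-, -, h2, -, -, h3⟩, rfl⟩
          exact ⟨y, ⟨h2, h3⟩, rfl, rfl⟩
        · rintro ⟨y, ⟨h2, h3⟩, rfl, rfl⟩
          exact ⟨⟨fun i => (hn i).1, h.1, h2, h.2.1, h.2.2, h3⟩, rfl⟩
      · simp only [Set.mem_empty_iff_false, iff_false]
        rintro ⟨⟨-, h1, h2, h3, h4, h5⟩, rfl⟩
        exact h ⟨h1, h3, h4⟩
    rw [← Set.ncard_coe_finset, e]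
    split_ifs
    · rw [Set.ncard_image_of_injective _ (fun a b h => (Prod.mk.inj h).2)]
    · simp
  · intro q hq
    simp only [Set.Finite.coe_toFinset, TorSet, Set.mem_ofPred_eq] at hq
    simp only [Finset.mem_coe, mem_box]
    exact fun i => ⟨hq.1 i, le_of_X B q.1 hq.1 hq.2.2.2.1 hq.2.2.2.2.1 i⟩

lemma rad_le (P : Finset ℕ) (hP : ∀ p ∈ P, p.Prime) (m : ℕ) (hm : 1 ≤ m) :
    ∏ p ∈ P, (if p ∣ m then (p : ℝ) else 1) ≤ m := by
  rw [← Finset.prod_filter]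
  have : ∏ p ∈ P.filter (fun p => p ∣ m), p ∣ m :=
    Finset.prod_primes_dvd m (fun p hp => (hP p (Finset.mem_filter.1 hp).1).prime)
      (fun p hp => (Finset.mem_filter.1 hp).2)
  have h : ((∏ p ∈ P.filter (fun p => p ∣ m), p : ℕ) : ℝ) ≤ m := by
    exact_mod_cast Nat.le_of_dvd hm this
  rwa [Nat.cast_prod] at h

/-- Replacing `4` by `p` at every prime divisor loses at most a factor `2` at each of `2` and `3`. -/
lemma four_pow_omega_le (P : Finset ℕ) (hP : ∀ p ∈ P, p.Prime) (m : ℕ) (hm : 1 ≤ m) :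
    ∏ p ∈ P, (if p ∣ m then (4 : ℝ) else 1) ≤ 4 * m := by
  calc ∏ p ∈ P, (if p ∣ m then (4 : ℝ) else 1)
      ≤ ∏ p ∈ P, ((if p ∈ ({2, 3} : Finset ℕ) then (2 : ℝ) else 1) * (if p ∣ m then (p : ℝ) else 1)) := by
        refine Finset.prod_le_prod (fun p _ => by split_ifs <;> norm_num) (fun p hp => ?_)
        have h2 := (hP p hp).two_le
        by_cases hd : p ∣ m
        · rw [if_pos hd, if_pos hd]
          by_cases h3 : p ∈ ({2, 3} : Finset ℕ)
          · rw [if_pos h3]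
            have : (2 : ℝ) ≤ p := by exact_mod_cast h2
            linarith
          · rw [if_neg h3]
            simp only [Finset.mem_insert, Finset.mem_singleton, not_or] at h3
            have : (4 : ℝ) ≤ p := by exact_mod_cast (by omega : 4 ≤ p)
            linarith
        · rw [if_neg hd, if_neg hd]
          split_ifs <;> norm_num
    _ = (∏ p ∈ P, (if p ∈ ({2, 3} : Finset ℕ) then (2 : ℝ) else 1)) *
        ∏ p ∈ P, (if p ∣ m then (p : ℝ) else 1) := Finset.prod_mul_distrib
    _ ≤ 4 * m := by
        refine mul_le_mul ?_ (rad_le P hP m hm) (Finset.prod_nonneg (fun p _ => by split_ifs <;> positivity))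
          (by norm_num)
        rw [← Finset.prod_filter, Finset.prod_const]
        have hc : (P.filter (fun p => p ∈ ({2, 3} : Finset ℕ))).card ≤ 2 :=
          (Finset.card_le_card (fun p hp => (Finset.mem_filter.1 hp).2)).trans (by simp)
        calc (2 : ℝ) ^ (P.filter (fun p => p ∈ ({2, 3} : Finset ℕ))).card ≤ 2 ^ 2 :=
              pow_le_pow_right₀ (by norm_num) hc
          _ = 4 := by norm_num

lemma two_pow_omega_le (P : Finset ℕ) (hP : ∀ p ∈ P, p.Prime) (m : ℕ) (hm : 1 ≤ m) :
    ∏ p ∈ P, (if p ∣ m then (2 : ℝ) else 1) ≤ 2 * √m := by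
  have h0 : 0 ≤ ∏ p ∈ P, (if p ∣ m then (2 : ℝ) else 1) :=
    Finset.prod_nonneg (fun p _ => by split_ifs <;> norm_num)
  refine (pow_le_pow_iff_left₀ h0 (by positivity) two_ne_zero).1 ?_
  rw [mul_pow, Real.sq_sqrt (Nat.cast_nonneg m), ← Finset.prod_pow]
  have := four_pow_omega_le P hP m hm
  refine le_trans (le_of_eq (Finset.prod_congr rfl (fun p _ => ?_))) (this.trans (le_of_eq (by norm_num)))
  split_ifs <;> norm_num

lemma two_pow_omega_le' (P : Finset ℕ) (hP : ∀ p ∈ P, p.Prime) (m : ℕ) (hm : 1 ≤ m) :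
    ∏ p ∈ P, (if p ∣ m then (2 : ℝ) else 1) ≤ m := by
  refine le_trans (Finset.prod_le_prod (fun p _ => by split_ifs <;> norm_num) (fun p hp => ?_))
    (rad_le P hP m hm)
  have : (2 : ℝ) ≤ p := by exact_mod_cast (hP p hp).two_le
  split_ifs <;> linarith

/-- A crude bound for the sieving error that keeps the sum over the torsor variables in `error_sum`
of order `B (log B)⁴`. -/
lemma weight_le (P : Finset ℕ) (hP : ∀ p ∈ P, p.Prime) (n : Fin 7 → ℕ) (hn : ∀ i, 1 ≤ n i) :
    ∏ p ∈ P, (1 + (kap (pat p n) : ℝ)) ≤ 8 * (n 0 * n 1 * n 2 * √(n 6)) := by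
  have key : ∀ p ∈ P, (1 + (kap (pat p n) : ℝ)) ≤ (if p ∣ n 0 then (2 : ℝ) else 1) *
      (if p ∣ n 1 then (4 : ℝ) else 1) * (if p ∣ n 2 then (2 : ℝ) else 1) *
      (if p ∣ n 6 then (2 : ℝ) else 1) := by
    intro p _
    rw [kap]
    simp only [mem_pat]
    by_cases h0 : p ∣ n 0 <;> by_cases h1 : p ∣ n 1 <;> by_cases h2 : p ∣ n 2 <;>
      by_cases h6 : p ∣ n 6 <;> by_cases h4 : p ∣ n 4 <;> by_cases h3 : p ∣ n 3 <;>
      simp only [h0, h1, h2, h3, h4, h6] <;> norm_num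
  refine (Finset.prod_le_prod (fun p _ => by positivity) key).trans ?_
  rw [Finset.prod_mul_distrib, Finset.prod_mul_distrib, Finset.prod_mul_distrib]
  have a0 := two_pow_omega_le' P hP (n 0) (hn 0)
  have a1 := four_pow_omega_le P hP (n 1) (hn 1)
  have a2 := two_pow_omega_le' P hP (n 2) (hn 2)
  have a6 := two_pow_omega_le P hP (n 6) (hn 6)
  have pos : ∀ (c : ℝ) (m : ℕ), 0 < c → 0 ≤ ∏ p ∈ P, (if p ∣ m then c else 1) := fun c m hc =>
    Finset.prod_nonneg (fun p _ => by split_ifs <;> linarith)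
  have := mul_le_mul (mul_le_mul (mul_le_mul a0 a1 (pos _ _ (by norm_num)) (by positivity)) a2
    (pos _ _ (by norm_num)) (by positivity)) a6 (pos _ _ (by norm_num)) (by positivity)
  refine this.trans (le_of_eq (by ring))

lemma count_le (N : ℕ) (x Q : ℝ) (hx : 0 < x) (hQ : 0 ≤ Q) :
    ∑ j ∈ Finset.Icc 1 N, (if (j : ℝ) * x ≤ Q then (1 : ℝ) else 0) ≤ Q / x := by
  rw [← Finset.sum_filter]
  have hsub : (Finset.Icc 1 N).filter (fun m : ℕ => (m : ℝ) * x ≤ Q) ⊆ Finset.Icc 1 ⌊Q / x⌋₊ := by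
    intro m hm
    rw [Finset.mem_filter, Finset.mem_Icc] at hm
    rw [Finset.mem_Icc]
    refine ⟨hm.1.1, Nat.le_floor ?_⟩
    rw [le_div_iff₀ hx]; exact hm.2
  have := Finset.card_le_card hsub
  rw [Nat.card_Icc, Nat.add_sub_cancel] at this
  rw [Finset.sum_const, nsmul_eq_mul, mul_one]
  exact (by exact_mod_cast this : (_ : ℝ) ≤ (⌊Q / x⌋₊ : ℝ)).trans (Nat.floor_le (by positivity))

open Classical in
/-- The contribution of the error terms in the count of `y`. -/
lemma error_sum : ∃ K : ℝ, 0 < K ∧ ∀ (B : ℝ) (P : Finset ℕ), 1 ≤ B → (∀ p ∈ P, p.Prime) →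
    ∑ n ∈ box ⌊B⌋₊, (if Adm B n then ∏ p ∈ P, (1 + (kap (pat p n) : ℝ)) else 0) ≤
      K * B * (1 + Real.log B) ^ 4 := by
  obtain ⟨Z, hZ0, hZ⟩ := z32_exists
  refine ⟨8 * Z + 1, by positivity, ?_⟩
  intro B P hB hP
  have hB0 : 0 < B := by linarith
  have hL := Real.log_nonneg hB
  set N := ⌊B⌋₊ with hN
  have hN1 : 1 ≤ N := Nat.le_floor (by simpa using hB)
  have hlogN : Real.log N ≤ Real.log B :=
    Real.log_le_log (by exact_mod_cast hN1) (Nat.floor_le hB0.le)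
  set Q := √B with hQ
  have hQ0 : 0 ≤ Q := Real.sqrt_nonneg B
  have hQ2 : Q ^ 2 = B := Real.sq_sqrt hB0.le
  set H := ∑ s ∈ Finset.Icc 1 N, (1 : ℝ) / s with hH
  have hH0 : 0 ≤ H := Finset.sum_nonneg (fun s _ => by positivity)
  have hHB : H ≤ 1 + Real.log B := by have := harm_le N hN1; linarith
  have hZ' : ∑ b ∈ Finset.Icc 1 N, √(b : ℝ) / (b : ℝ) ^ 2 ≤ Z := by
    refine le_trans (le_of_eq ?_) (hZ N)
    rw [← Finset.Ico_add_one_right_eq_Icc, Finset.sum_Ico_eq_sum_range, Nat.add_sub_cancel]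
    refine Finset.sum_congr rfl (fun k _ => ?_)
    have hk : (0 : ℝ) < (k : ℝ) + 1 := by positivity
    push_cast
    rw [add_comm (1 : ℝ), Real.sqrt_eq_rpow, ← Real.rpow_natCast, ← Real.rpow_sub hk]
    norm_num
  have hbound : ∀ n ∈ box N, (if Adm B n then ∏ p ∈ P, (1 + (kap (pat p n) : ℝ)) else 0) ≤
      8 * (n 0 * n 1 * n 2 * √(n 6)) *
      ((if (n 5 : ℝ) * ((n 6 : ℝ) ^ 2 * (n 0 * n 2 * √(n 1 * n 2))) ≤ Q then (1 : ℝ) else 0) *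
       (if (n 3 : ℝ) * (n 4 * (n 0 * n 1 * √(n 1 * n 2))) ≤ Q then (1 : ℝ) else 0)) := by
    intro n hn
    rw [mem_box] at hn
    have htu := Real.sq_sqrt (by positivity : 0 ≤ (n 1 : ℝ) * n 2)
    split_ifs with h h1 h2 h3
    · rw [mul_one, mul_one]; exact weight_le P hP n (fun i => (hn i).1)
    · exfalso
      apply h2
      apply Real.le_sqrt_of_sq_le
      refine le_trans (le_of_eq ?_) h.2.1
      simp only [mul_pow, htu, X1]; push_cast; ring
    · exfalso
      apply h1
      apply Real.le_sqrt_of_sq_le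
      refine le_trans (le_of_eq ?_) h.2.2
      simp only [mul_pow, htu, X3]; push_cast; ring
    · exfalso
      apply h1
      apply Real.le_sqrt_of_sq_le
      refine le_trans (le_of_eq ?_) h.2.2
      simp only [mul_pow, htu, X3]; push_cast; ring
    all_goals positivity
  refine (Finset.sum_le_sum hbound).trans ?_
  rw [box_sum]
  calc _ ≤ ∑ t ∈ Finset.Icc 1 N, ∑ u ∈ Finset.Icc 1 N, ∑ s ∈ Finset.Icc 1 N,
      ∑ a ∈ Finset.Icc 1 N, ∑ b ∈ Finset.Icc 1 N,
        8 * B * ((1 / (t : ℝ)) * ((1 / (u : ℝ)) * ((1 / (s : ℝ)) * ((1 / (a : ℝ)) * (√(b : ℝ) / (b : ℝ) ^ 2))))) := by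
        refine Finset.sum_le_sum (fun t ht => Finset.sum_le_sum (fun u hu => Finset.sum_le_sum (fun s hs =>
          Finset.sum_le_sum (fun a ha => Finset.sum_le_sum (fun b hb => ?_)))))
        have ht0 : (0 : ℝ) < t := by exact_mod_cast (Finset.mem_Icc.1 ht).1
        have hu0 : (0 : ℝ) < u := by exact_mod_cast (Finset.mem_Icc.1 hu).1
        have hs0 : (0 : ℝ) < s := by exact_mod_cast (Finset.mem_Icc.1 hs).1
        have ha0 : (0 : ℝ) < a := by exact_mod_cast (Finset.mem_Icc.1 ha).1
        have hb0 : (0 : ℝ) < b := by exact_mod_cast (Finset.mem_Icc.1 hb).1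
        have hr0 : 0 < √((t : ℝ) * u) := Real.sqrt_pos.2 (by positivity)
        have htu := Real.sq_sqrt (by positivity : 0 ≤ (t : ℝ) * u)
        have c1 := count_le N ((b : ℝ) ^ 2 * (s * u * √(t * u))) Q (by positivity) hQ0
        have c2 := count_le N (a * (s * t * √(t * u))) Q (by positivity) hQ0
        have := mul_le_mul c1 c2 (Finset.sum_nonneg (fun j _ => by split_ifs <;> norm_num)) (by positivity)
        have this := mul_le_mul_of_nonneg_left this (by positivity : 0 ≤ 8 * ((s : ℝ) * t * u * √b))
        rw [Finset.sum_mul_sum, Finset.mul_sum] at this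
        simp_rw [Finset.mul_sum] at this
        refine le_trans (le_of_eq rfl) (this.trans (le_of_eq ?_))
        rw [← hQ2]
        have e : Q / ((b : ℝ) ^ 2 * (s * u * √(t * u))) * (Q / (a * (s * t * √(t * u)))) =
            Q ^ 2 / ((b : ℝ) ^ 2 * a * s ^ 2 * t * u * (√(t * u)) ^ 2) := by
          rw [div_mul_div_comm]; congr 1 <;> ring
        rw [e, htu]
        field_simp
    _ = 8 * B * (H * (H * (H * (H * ∑ b ∈ Finset.Icc 1 N, √(b : ℝ) / (b : ℝ) ^ 2)))) := by
        simp_rw [← Finset.mul_sum, ← Finset.sum_mul]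
        rw [hH]
    _ ≤ 8 * B * ((1 + Real.log B) * ((1 + Real.log B) * ((1 + Real.log B) * ((1 + Real.log B) * Z)))) := by
        gcongr
    _ ≤ _ := by
        have : 0 ≤ B * (1 + Real.log B) ^ 4 := by positivity
        nlinarith

/-! ### Local densities -/

/-- The pairs of torsor variables that are required to be coprime. -/
def badPairs : List (Fin 7 × Fin 7) :=
  [(0, 3), (0, 4), (0, 5), (0, 6), (1, 2), (1, 5), (1, 6), (2, 3), (2, 4), (2, 5),
    (3, 4), (3, 5), (3, 6), (4, 5), (4, 6)]

/-- The sets of torsor variables that may have a common prime factor. -/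
def admT (T : Finset (Fin 7)) : Prop := ∀ q ∈ badPairs, ¬(q.1 ∈ T ∧ q.2 ∈ T)

instance (T : Finset (Fin 7)) : Decidable (admT T) := by unfold admT; infer_instance

/-- The local factor at `p` when the set of torsor variables divisible by `p` is `T`. -/
noncomputable def theta (p : ℕ) (T : Finset (Fin 7)) : ℝ :=
  if admT T then 1 - (kap T : ℝ) / p else 0

/-- The Möbius transform of `theta`. -/
noncomputable def hloc (p : ℕ) (S : Finset (Fin 7)) : ℝ :=
  ∑ R ∈ S.powerset, (-1) ^ (S \ R).card * theta p R

/-- The expansion of `theta` over the sets of variables, with weights `v i` for divisibility; for `v i`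
the indicator of `p ∣ n i` it is Möbius inversion, for `v i = 1 / p` the density of the conditions. -/
lemma hloc_gen (p : ℕ) (v : Fin 7 → ℝ) :
    ∑ S : Finset (Fin 7), hloc p S * ∏ i ∈ S, v i =
      ∑ R : Finset (Fin 7), theta p R * ((∏ i ∈ R, v i) * ∏ i ∈ Rᶜ, (1 - v i)) := by
  have e1 : ∀ R : Finset (Fin 7), theta p R * ((∏ i ∈ R, v i) * ∏ i ∈ Rᶜ, (1 - v i)) =
      ∑ S : Finset (Fin 7), if R ⊆ S then (-1) ^ (S \ R).card * theta p R * ∏ i ∈ S, v i else 0 := by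
    intro R
    have e2 : ∏ i ∈ Rᶜ, (1 - v i) = ∑ Q ∈ Rᶜ.powerset, (-1) ^ Q.card * ∏ i ∈ Q, v i := by
      simp_rw [sub_eq_add_neg]
      rw [Finset.prod_one_add]
      refine Finset.sum_congr rfl (fun Q _ => ?_)
      rw [Finset.prod_neg]
    rw [e2, Finset.mul_sum, Finset.mul_sum, ← Finset.sum_filter]
    refine Finset.sum_nbij' (fun Q => R ∪ Q) (fun S => S \ R) ?_ ?_ ?_ ?_ ?_
    · intro Q _; simp
    · intro S _
      rw [Finset.mem_powerset]
      intro i hi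
      rw [Finset.mem_compl]
      exact (Finset.mem_sdiff.1 hi).2
    · intro Q hQ
      have hd : Disjoint R Q := by
        rw [Finset.mem_powerset] at hQ
        exact Finset.disjoint_left.2 (fun i hi hq => Finset.mem_compl.1 (hQ hq) hi)
      exact Finset.union_sdiff_cancel_left hd
    · intro S hS
      exact Finset.union_sdiff_of_subset (Finset.mem_filter.1 hS).2
    · intro Q hQ
      have hd : Disjoint R Q := by
        rw [Finset.mem_powerset] at hQ
        exact Finset.disjoint_left.2 (fun i hi hq => Finset.mem_compl.1 (hQ hq) hi)
      rw [Finset.union_sdiff_cancel_left hd, Finset.prod_union hd]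
      ring
  simp_rw [e1]
  rw [Finset.sum_comm]
  refine Finset.sum_congr rfl (fun S _ => ?_)
  rw [← Finset.sum_filter, hloc, Finset.sum_mul]
  refine Finset.sum_congr ?_ (fun R _ => rfl)
  ext R; simp

/-- `theta` as the sum of its Möbius transform. -/
lemma theta_pat (p : ℕ) (n : Fin 7 → ℕ) :
    theta p (pat p n) = ∑ S : Finset (Fin 7), hloc p S * ∏ i ∈ S, (if p ∣ n i then (1 : ℝ) else 0) := by
  rw [hloc_gen, Finset.sum_eq_single (pat p n)]
  · rw [Finset.prod_eq_one (fun i hi => if_pos (mem_pat.1 hi)), Finset.prod_eq_one, mul_one, mul_one]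
    intro i hi
    rw [Finset.mem_compl, mem_pat] at hi
    rw [if_neg hi, sub_zero]
  · intro R _ hR
    suffices (∏ i ∈ R, (if p ∣ n i then (1 : ℝ) else 0)) * ∏ i ∈ Rᶜ, (1 - if p ∣ n i then (1 : ℝ) else 0) = 0 by
      rw [this, mul_zero]
    by_contra hne
    rw [← ne_eq, mul_ne_zero_iff, Finset.prod_ne_zero_iff, Finset.prod_ne_zero_iff] at hne
    apply hR
    ext i
    rw [mem_pat]
    constructor
    · intro hi
      by_contra hp
      exact hne.1 i hi (if_neg hp)
    · intro hp
      by_contra hi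
      exact hne.2 i (Finset.mem_compl.2 hi) (by rw [if_pos hp, sub_self])
  · intro h; exact absurd (Finset.mem_univ _) h

/-- The Euler factor. -/
noncomputable def loc (p : ℕ) : ℝ := (1 - 1 / (p : ℝ)) ^ 6 * (1 + 6 / (p : ℝ) + 1 / (p : ℝ) ^ 2)

/-- The admissible sets: the empty set, the vertices and the edges of a tree on the
seven torsor variables. -/
lemma adm_list : (Finset.univ.filter admT : Finset (Finset (Fin 7))) =
    {∅, {0}, {1}, {2}, {3}, {4}, {5}, {6}, {0, 1}, {0, 2}, {1, 3}, {1, 4}, {2, 6}, {5, 6}} := by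
  decide +kernel

/-- The total local density is the Euler factor of the leading constant. -/
lemma hloc_local (p : ℕ) : ∑ S : Finset (Fin 7), hloc p S * (1 / (p : ℝ)) ^ S.card = loc p := by
  have := hloc_gen p (fun _ => 1 / (p : ℝ))
  simp only [Finset.prod_const] at this
  rw [this]
  simp_rw [theta, ite_mul, zero_mul]
  rw [← Finset.sum_filter, adm_list]
  set x := 1 / (p : ℝ) with hx
  have hk : ∀ T : Finset (Fin 7), (1 - (kap T : ℝ) / p) * (x ^ T.card * (1 - x) ^ Tᶜ.card) =
      (1 - (kap T : ℝ) * x) * (x ^ T.card * (1 - x) ^ (7 - T.card)) := by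
    intro T
    rw [Finset.card_compl, Fintype.card_fin, hx, mul_one_div]
  simp_rw [hk]
  repeat rw [Finset.sum_insert (by decide)]
  rw [Finset.sum_singleton]
  have k0 : kap ∅ = 0 := by decide
  have k1 : kap {0} = 1 := by decide
  have k2 : kap {1} = 2 := by decide
  have k3 : kap {2} = 1 := by decide
  have k4 : kap {3} = 0 := by decide
  have k5 : kap {4} = 0 := by decide
  have k6 : kap {5} = 0 := by decide
  have k7 : kap {6} = 1 := by decide
  have k8 : kap {0, 1} = 1 := by decide
  have k9 : kap {0, 2} = 1 := by decide
  have k10 : kap {1, 3} = 1 := by decide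
  have k11 : kap {1, 4} = 1 := by decide
  have k12 : kap {2, 6} = 1 := by decide
  have k13 : kap {5, 6} = 1 := by decide
  have c : ∀ i j : Fin 7, i ≠ j → ({i, j} : Finset (Fin 7)).card = 2 := fun i j h => Finset.card_pair h
  rw [c 0 1 (by decide), c 0 2 (by decide), c 1 3 (by decide), c 1 4 (by decide), c 2 6 (by decide),
    c 5 6 (by decide), k0, k1, k2, k3, k4, k5, k6, k7, k8, k9, k10, k11, k12, k13]
  simp only [Finset.card_singleton, Finset.card_empty]
  rw [loc, ← hx, show 6 / (p : ℝ) = 6 * x by rw [hx]; ring, show 1 / (p : ℝ) ^ 2 = x ^ 2 by rw [hx]; ring]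
  push_cast
  ring

lemma kap_le (T : Finset (Fin 7)) : kap T ≤ 2 := by
  rw [kap]; split_ifs <;> norm_num

lemma theta_abs (p : ℕ) (hp : p.Prime) (T : Finset (Fin 7)) : |theta p T| ≤ 1 := by
  have h2 : (2 : ℝ) ≤ p := by exact_mod_cast hp.two_le
  have hk : (kap T : ℝ) ≤ 2 := by exact_mod_cast kap_le T
  have h0 : 0 ≤ (kap T : ℝ) / p := by positivity
  have h1 : (kap T : ℝ) / p ≤ 1 := by rw [div_le_one (by positivity)]; linarith
  rw [theta]
  split_ifs
  · rw [abs_le]; constructor <;> linarith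
  · simp

lemma theta_empty (p : ℕ) : theta p ∅ = 1 := by
  rw [theta, if_pos (by decide), show kap ∅ = 0 by decide]; simp

lemma hloc_empty (p : ℕ) : hloc p ∅ = 1 := by
  simp [hloc, theta_empty]

lemma hloc_abs (p : ℕ) (hp : p.Prime) (S : Finset (Fin 7)) : |hloc p S| ≤ 128 := by
  rw [hloc]
  refine (Finset.abs_sum_le_sum_abs _ _).trans ?_
  have : ∀ R ∈ S.powerset, |(-1) ^ (S \ R).card * theta p R| ≤ 1 := by
    intro R _
    rw [abs_mul, abs_pow, abs_neg, abs_one, one_pow, one_mul]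
    exact theta_abs p hp R
  refine (Finset.sum_le_sum this).trans ?_
  rw [Finset.sum_const, nsmul_eq_mul, mul_one, Finset.card_powerset]
  have hc : S.card ≤ 7 := by simpa using Finset.card_le_univ S
  calc ((2 ^ S.card : ℕ) : ℝ) ≤ ((2 ^ 7 : ℕ) : ℝ) := by exact_mod_cast Nat.pow_le_pow_right (by norm_num) hc
    _ = 128 := by norm_num

lemma hloc_single (p : ℕ) (i : Fin 7) : |hloc p {i}| ≤ 2 / p := by
  have ha : admT {i} := by revert i; decide
  have hk : (kap {i} : ℝ) ≤ 2 := by exact_mod_cast kap_le {i}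
  have : hloc p {i} = -((kap {i} : ℝ) / p) := by
    have hpw : ({i} : Finset (Fin 7)).powerset = {∅, {i}} := by
      ext R; simp [Finset.subset_singleton_iff]
    rw [hloc, hpw, Finset.sum_pair (Finset.singleton_ne_empty i).symm]
    rw [theta_empty, theta, if_pos ha]
    simp only [Finset.sdiff_empty, Finset.card_singleton, sdiff_self, Finset.bot_eq_empty,
      Finset.card_empty]
    ring
  rw [this, abs_neg, abs_of_nonneg (by positivity)]
  gcongr

/-- The local factor of the error term. -/
lemma hloc_sum (p : ℕ) (hp : p.Prime) :
    ∑ S : Finset (Fin 7), |hloc p S| * ((p : ℝ) ^ (-(3 / 4) : ℝ)) ^ S.card ≤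
      1 + 16384 * (p : ℝ) ^ (-(3 / 2) : ℝ) := by
  have hp1 : (1 : ℝ) ≤ p := by exact_mod_cast hp.one_lt.le
  have hp0 : (0 : ℝ) < p := by linarith
  set y := (p : ℝ) ^ (-(3 / 4) : ℝ) with hy
  have hy0 : 0 ≤ y := by positivity
  have hy1 : y ≤ 1 := Real.rpow_le_one_of_one_le_of_nonpos hp1 (by norm_num)
  have hy2 : (p : ℝ) ^ (-(3 / 2) : ℝ) = y ^ 2 := by
    rw [hy, ← Real.rpow_natCast, ← Real.rpow_mul hp0.le]; norm_num
  have hpy : 1 / (p : ℝ) ≤ y := by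
    rw [hy, one_div, ← Real.rpow_neg_one]
    exact Real.rpow_le_rpow_of_exponent_le hp1 (by norm_num)
  rw [hy2, ← Finset.add_sum_erase _ _ (Finset.mem_univ ∅), hloc_empty]
  have : ∀ S ∈ Finset.univ.erase (∅ : Finset (Fin 7)), |hloc p S| * y ^ S.card ≤ 128 * y ^ 2 := by
    intro S hS
    have hne := (Finset.mem_erase.1 hS).1
    have hc : 1 ≤ S.card := Finset.one_le_card.2 (Finset.nonempty_iff_ne_empty.2 hne)
    rcases hc.eq_or_lt with h1 | h2
    · obtain ⟨i, rfl⟩ := Finset.card_eq_one.1 h1.symm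
      rw [Finset.card_singleton, pow_one]
      have := hloc_single p i
      have h3 : |hloc p {i}| ≤ 2 * y := by
        refine this.trans ?_
        rw [show 2 / (p : ℝ) = 2 * (1 / p) by ring]; linarith
      nlinarith
    · exact mul_le_mul (hloc_abs p hp S) (pow_le_pow_of_le_one hy0 hy1 h2) (by positivity) (by norm_num)
  have h := Finset.sum_le_sum this
  rw [Finset.sum_const, Finset.card_erase_of_mem (Finset.mem_univ _), Finset.card_univ,
    Fintype.card_finset, Fintype.card_fin] at h
  norm_num at h ⊢
  nlinarith [sq_nonneg y]

/-! ### Möbius expansion and the main term -/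

/-- The primes up to `N`. -/
def Pr (N : ℕ) : Finset ℕ := (Finset.Icc 1 N).filter Nat.Prime

lemma Pr_prime {N p : ℕ} (hp : p ∈ Pr N) : p.Prime := (Finset.mem_filter.1 hp).2

lemma mem_Pr_of_dvd {N p m : ℕ} (hp : p.Prime) (h1 : 1 ≤ m) (h2 : m ≤ N) (h : p ∣ m) : p ∈ Pr N :=
  Finset.mem_filter.2 ⟨Finset.mem_Icc.2 ⟨hp.one_lt.le, (Nat.le_of_dvd h1 h).trans h2⟩, hp⟩

lemma coprime_cast_iff {N a b : ℕ} (ha : 1 ≤ a ∧ a ≤ N) :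
    IsCoprime (a : ℤ) (b : ℤ) ↔ ∀ p ∈ Pr N, ¬(p ∣ a ∧ p ∣ b) := by
  rw [Nat.isCoprime_iff_coprime]
  constructor
  · rintro h p hp ⟨h1, h2⟩
    exact Nat.not_coprime_of_dvd_of_dvd (Pr_prime hp).one_lt h1 h2 h
  · intro h
    refine Nat.coprime_of_dvd (fun p hp h1 h2 => h p (mem_Pr_of_dvd hp ha.1 ha.2 h1) ⟨h1, h2⟩)

lemma copN_iff {N : ℕ} {n : Fin 7 → ℕ} (hn : n ∈ box N) :
    CopN n ↔ ∀ p ∈ Pr N, admT (pat p n) := by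
  rw [mem_box] at hn
  have h : (∀ p ∈ Pr N, admT (pat p n)) ↔
      ∀ q ∈ badPairs, IsCoprime (n q.1 : ℤ) (n q.2 : ℤ) := by
    constructor
    · intro h q hq
      rw [coprime_cast_iff (hn q.1)]
      intro p hp h2
      exact h p hp q hq (by rw [mem_pat, mem_pat]; exact h2)
    · intro h p hp q hq h2
      rw [mem_pat, mem_pat] at h2
      exact (coprime_cast_iff (hn q.1)).1 (h q hq) p hp h2
  rw [h, CopN, Cop7]
  simp only [badPairs, List.forall_mem_cons, List.not_mem_nil, false_imp_iff, implies_true, and_true]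
  tauto

open Classical in
lemma main_summand (B : ℝ) {n : Fin 7 → ℕ} (hn : n ∈ box ⌊B⌋₊) :
    (if Adm B n then phi2 (X3 n / B) (X2 n / B) / (∏ i, (n i : ℝ)) *
        ∏ p ∈ Pr ⌊B⌋₊, (1 - (kap (pat p n) : ℝ) / p) else 0) =
      Fw B n / (∏ i, (n i : ℝ)) * ∏ p ∈ Pr ⌊B⌋₊, theta p (pat p n) := by
  rw [Adm, Fw]
  by_cases hc : CopN n
  · have h2 := (copN_iff hn).1 hc
    have : ∏ p ∈ Pr ⌊B⌋₊, theta p (pat p n) = ∏ p ∈ Pr ⌊B⌋₊, (1 - (kap (pat p n) : ℝ) / p) :=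
      Finset.prod_congr rfl (fun p hp => by rw [theta, if_pos (h2 p hp)])
    rw [this]
    simp only [hc, true_and]
    split_ifs <;> simp
  · have h2 := hc
    rw [copN_iff hn] at h2
    push Not at h2
    obtain ⟨p, hp, hpa⟩ := h2
    have h0 : theta p (pat p n) = 0 := by rw [theta, if_neg hpa]
    have h1 : ∏ p ∈ Pr ⌊B⌋₊, theta p (pat p n) = 0 := Finset.prod_eq_zero hp h0
    rw [h1]
    simp [hc]

lemma prod_expand (P : Finset ℕ) (f : ℕ → Finset (Fin 7) → ℝ) :
    ∏ p ∈ P, ∑ S, f p S = ∑ c : P → Finset (Fin 7), ∏ p : P, f p (c p) := by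
  rw [← Finset.prod_coe_sort P (fun p => ∑ S, f p S), Finset.prod_univ_sum, Fintype.piFinset_univ]

/-- The moduli attached to a choice `c` of a set of variables at each prime: the `i`-th one is the
product of the primes `p` with `i ∈ c p`. -/
def dc {P : Finset ℕ} (c : P → Finset (Fin 7)) (i : Fin 7) : ℕ :=
  ∏ p : P, if i ∈ c p then (p : ℕ) else 1

lemma dc_dvd {P : Finset ℕ} (hP : ∀ p ∈ P, p.Prime) (c : P → Finset (Fin 7)) (n : Fin 7 → ℕ) :
    (∀ p : P, ∀ i ∈ c p, (p : ℕ) ∣ n i) ↔ ∀ i, dc c i ∣ n i := by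
  constructor
  · intro h i
    rw [dc]
    refine Finset.prod_dvd_of_isRelPrime ?_ ?_
    · intro p _ q _ hpq
      rw [Function.onFun, ← Nat.coprime_iff_isRelPrime]
      split_ifs
      · exact (Nat.coprime_primes (hP p p.2) (hP q q.2)).2 (fun h => hpq (Subtype.ext h))
      all_goals simp
    · intro p _
      split_ifs with hi
      · exact h p i hi
      · exact one_dvd _
  · intro h p i hi
    refine dvd_trans ?_ (h i)
    have := Finset.dvd_prod_of_mem (fun p : P => if i ∈ c p then (p : ℕ) else 1) (Finset.mem_univ p)
    rw [if_pos hi] at this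
    exact this

lemma dc_pos {P : Finset ℕ} (hP : ∀ p ∈ P, p.Prime) (c : P → Finset (Fin 7)) (i : Fin 7) :
    1 ≤ dc c i := by
  rw [dc, Nat.succ_le_iff]
  refine Finset.prod_pos (fun p _ => ?_)
  split_ifs
  · exact (hP p p.2).pos
  · norm_num

lemma dc_prod {P : Finset ℕ} (c : P → Finset (Fin 7)) :
    ∏ i, (dc c i : ℝ) = ∏ p : P, (p : ℝ) ^ (c p).card := by
  simp_rw [dc]
  push_cast
  rw [Finset.prod_comm]
  refine Finset.prod_congr rfl (fun p _ => ?_)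
  rw [Finset.prod_ite_mem, Finset.univ_inter, Finset.prod_const]

lemma ind_prod {P : Finset ℕ} (hP : ∀ p ∈ P, p.Prime) (c : P → Finset (Fin 7)) (n : Fin 7 → ℕ) :
    ∏ p : P, ∏ i ∈ c p, (if (p : ℕ) ∣ n i then (1 : ℝ) else 0) =
      if ∀ i, dc c i ∣ n i then 1 else 0 := by
  split_ifs with h
  · rw [← dc_dvd hP] at h
    exact Finset.prod_eq_one (fun p _ => Finset.prod_eq_one (fun i hi => if_pos (h p i hi)))
  · rw [← dc_dvd hP] at h
    push Not at h
    obtain ⟨p, i, hi, hpi⟩ := h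
    exact Finset.prod_eq_zero (Finset.mem_univ p) (Finset.prod_eq_zero hi (if_neg hpi))

/-- Summation over the vectors divisible by `d`. -/
lemma sum_multiples (B : ℝ) (d : Fin 7 → ℕ) (hd : ∀ i, 1 ≤ d i) :
    ∑ n ∈ box ⌊B⌋₊, Fw B n / (∏ i, (n i : ℝ)) * (if ∀ i, d i ∣ n i then 1 else 0) =
      SD B d / ∏ i, (d i : ℝ) := by
  have e1 : SD B d / ∏ i, (d i : ℝ) =
      ∑ m ∈ (box ⌊B⌋₊).filter (fun m => ∀ i, d i * m i ≤ ⌊B⌋₊),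
        Fw B (fun i => d i * m i) / ∏ i, ((d i * m i : ℕ) : ℝ) := by
    rw [SD, Finset.sum_div, Finset.sum_filter]
    refine Finset.sum_congr rfl (fun m hm => ?_)
    rw [mem_box] at hm
    split_ifs with h
    · push_cast
      rw [Finset.prod_mul_distrib, div_div, mul_comm (∏ i, (m i : ℝ))]
    · have : Fw B (fun i => d i * m i) = 0 := by
        rw [Fw, if_neg]
        rintro ⟨h1, h3⟩
        exact h (fun i => le_of_X B (fun i => d i * m i) (fun i => Nat.mul_pos (hd i) (hm i).1) h1 h3 i)
      rw [this, zero_div, zero_div]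
  rw [e1]
  simp_rw [mul_ite, mul_one, mul_zero]
  rw [← Finset.sum_filter]
  refine Finset.sum_nbij' (fun n i => n i / d i) (fun m i => d i * m i) ?_ ?_ ?_ ?_ ?_
  · intro n hn
    rw [Finset.mem_filter, mem_box] at hn
    rw [Finset.mem_filter, mem_box]
    refine ⟨fun i => ⟨?_, (Nat.div_le_self _ _).trans (hn.1 i).2⟩, fun i => ?_⟩
    · exact Nat.div_pos (Nat.le_of_dvd (hn.1 i).1 (hn.2 i)) (hd i)
    · rw [Nat.mul_div_cancel' (hn.2 i)]; exact (hn.1 i).2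
  · intro m hm
    rw [Finset.mem_filter, mem_box] at hm
    rw [Finset.mem_filter, mem_box]
    exact ⟨fun i => ⟨Nat.mul_pos (hd i) (hm.1 i).1, hm.2 i⟩, fun i => dvd_mul_right _ _⟩
  · intro n hn
    rw [Finset.mem_filter] at hn
    funext i
    exact Nat.mul_div_cancel' (hn.2 i)
  · intro m _
    funext i
    exact Nat.mul_div_cancel_left _ (hd i)
  · intro n hn
    rw [Finset.mem_filter] at hn
    have : (fun i => d i * (n i / d i)) = n := funext (fun i => Nat.mul_div_cancel' (hn.2 i))
    rw [this]
    have h2 : ∀ i, d i * (n i / d i) = n i := fun i => Nat.mul_div_cancel' (hn.2 i)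
    simp_rw [h2]

/-- The main term, as a sum over the torsor variables. -/
noncomputable def MT (B : ℝ) : ℝ :=
  ∑ n ∈ box ⌊B⌋₊, Fw B n / (∏ i, (n i : ℝ)) * ∏ p ∈ Pr ⌊B⌋₊, theta p (pat p n)

/-- Expanding the product of local factors into divisibility conditions `d i ∣ n i`. -/
lemma MT_expand (B : ℝ) : MT B = ∑ c : Pr ⌊B⌋₊ → Finset (Fin 7),
    (∏ p : Pr ⌊B⌋₊, hloc p (c p)) * (SD B (dc c) / ∏ i, (dc c i : ℝ)) := by
  have hP : ∀ p ∈ Pr ⌊B⌋₊, p.Prime := fun p hp => Pr_prime hp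
  have : ∀ n, ∏ p ∈ Pr ⌊B⌋₊, theta p (pat p n) =
      ∑ c : Pr ⌊B⌋₊ → Finset (Fin 7), (∏ p : Pr ⌊B⌋₊, hloc p (c p)) *
        if ∀ i, dc c i ∣ n i then 1 else 0 := by
    intro n
    simp_rw [theta_pat]
    rw [prod_expand]
    refine Finset.sum_congr rfl (fun c _ => ?_)
    rw [Finset.prod_mul_distrib, ind_prod hP]
  rw [MT]
  simp_rw [this, Finset.mul_sum]
  rw [Finset.sum_comm]
  refine Finset.sum_congr rfl (fun c _ => ?_)
  rw [← sum_multiples B (dc c) (dc_pos hP c), Finset.mul_sum]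
  refine Finset.sum_congr rfl (fun n _ => ?_)
  ring

lemma log_bound (x : ℝ) (hx : 1 ≤ x) : (1 + Real.log x) / x ≤ 5 * x ^ (-(3 / 4) : ℝ) := by
  have hx0 : 0 < x := by linarith
  have h1 := Real.log_le_rpow_div hx0.le (show (0 : ℝ) < 1 / 4 by norm_num)
  have h2 : (1 : ℝ) ≤ x ^ (1 / 4 : ℝ) := Real.one_le_rpow hx (by norm_num)
  have h3 : x ^ (-(3 / 4) : ℝ) = x ^ (1 / 4 : ℝ) / x := by
    rw [show (-(3 / 4) : ℝ) = 1 / 4 - 1 by norm_num, Real.rpow_sub_one hx0.ne']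
  rw [h3, ← mul_div_assoc]
  gcongr
  linarith

lemma prod_bound : ∃ C : ℝ, 0 < C ∧ ∀ N : ℕ,
    ∏ p ∈ Pr N, (1 + 16384 * (p : ℝ) ^ (-(3 / 2) : ℝ)) ≤ C := by
  have hs : Summable (fun n : ℕ => 16384 * (n : ℝ) ^ (-(3 / 2) : ℝ)) :=
    (Real.summable_nat_rpow.2 (by norm_num)).mul_left _
  refine ⟨Real.exp (∑' n : ℕ, 16384 * (n : ℝ) ^ (-(3 / 2) : ℝ)), Real.exp_pos _, fun N => ?_⟩
  calc ∏ p ∈ Pr N, (1 + 16384 * (p : ℝ) ^ (-(3 / 2) : ℝ))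
      ≤ ∏ p ∈ Pr N, Real.exp (16384 * (p : ℝ) ^ (-(3 / 2) : ℝ)) := by
        refine Finset.prod_le_prod (fun p _ => by positivity) (fun p _ => ?_)
        rw [add_comm]; exact Real.add_one_le_exp _
    _ = Real.exp (∑ p ∈ Pr N, 16384 * (p : ℝ) ^ (-(3 / 2) : ℝ)) := (Real.exp_sum _ _).symm
    _ ≤ _ := Real.exp_le_exp.2 (hs.sum_le_tsum _ (fun p _ => by positivity))

/-- Asymptotic evaluation of the main term, with a truncated Euler product. -/
lemma MT_asymp : ∃ K : ℝ, 0 < K ∧ ∀ B : ℝ, 1 ≤ B →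
    |MT B - Wc * (Real.log B ^ 5 / 4320) * ∏ p ∈ Pr ⌊B⌋₊, loc p| ≤ K * (1 + Real.log B) ^ 4 := by
  obtain ⟨K, hK, h⟩ := SD_asymp
  obtain ⟨C, hC, hC'⟩ := prod_bound
  refine ⟨K * 5 * C, by positivity, fun B hB => ?_⟩
  have hL := Real.log_nonneg hB
  have hP : ∀ p ∈ Pr ⌊B⌋₊, p.Prime := fun p hp => Pr_prime hp
  have e1 : ∏ p ∈ Pr ⌊B⌋₊, loc p = ∑ c : Pr ⌊B⌋₊ → Finset (Fin 7),
      (∏ p : Pr ⌊B⌋₊, hloc p (c p)) / ∏ i, (dc c i : ℝ) := by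
    simp_rw [← hloc_local]
    rw [prod_expand]
    refine Finset.sum_congr rfl (fun c _ => ?_)
    rw [Finset.prod_mul_distrib, dc_prod, div_eq_mul_inv, ← Finset.prod_inv_distrib]
    simp_rw [one_div, inv_pow]
  rw [MT_expand, e1, Finset.mul_sum, ← Finset.sum_sub_distrib]
  refine (Finset.abs_sum_le_sum_abs _ _).trans ?_
  have key : ∀ c : Pr ⌊B⌋₊ → Finset (Fin 7),
      |(∏ p : Pr ⌊B⌋₊, hloc p (c p)) * (SD B (dc c) / ∏ i, (dc c i : ℝ)) -
        Wc * (Real.log B ^ 5 / 4320) * ((∏ p : Pr ⌊B⌋₊, hloc p (c p)) / ∏ i, (dc c i : ℝ))| ≤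
      K * 5 * (1 + Real.log B) ^ 4 *
        ∏ p : Pr ⌊B⌋₊, (|hloc p (c p)| * (((p : ℕ) : ℝ) ^ (-(3 / 4) : ℝ)) ^ (c p).card) := by
    intro c
    have hd := dc_pos hP c
    have hD : (1 : ℝ) ≤ ∏ i, (dc c i : ℝ) := by
      have : 0 < ∏ i, dc c i := Finset.prod_pos (fun i _ => hd i)
      exact_mod_cast this
    have hpow : (∏ i, (dc c i : ℝ)) ^ (-(3 / 4) : ℝ) =
        ∏ p : Pr ⌊B⌋₊, (((p : ℕ) : ℝ) ^ (-(3 / 4) : ℝ)) ^ (c p).card := by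
      rw [dc_prod, ← Real.finsetProd_rpow _ _ (fun p _ => by positivity)]
      refine Finset.prod_congr rfl (fun p _ => ?_)
      rw [← Real.rpow_natCast, ← Real.rpow_natCast, ← Real.rpow_mul (by positivity),
        ← Real.rpow_mul (by positivity), mul_comm]
    rw [Finset.prod_mul_distrib, ← hpow, ← Finset.abs_prod]
    set H := ∏ p : Pr ⌊B⌋₊, hloc p (c p)
    set D := ∏ i, (dc c i : ℝ)
    have h1 := h B (dc c) hB hd
    have h2 := log_bound D hD
    have e : H * (SD B (dc c) / D) - Wc * (Real.log B ^ 5 / 4320) * (H / D) =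
        H * ((SD B (dc c) - Wc * (Real.log B ^ 5 / 4320)) / D) := by ring
    rw [e, abs_mul, abs_div, abs_of_pos (show 0 < D by linarith)]
    calc |H| * (|SD B (dc c) - Wc * (Real.log B ^ 5 / 4320)| / D)
        ≤ |H| * (K * (1 + Real.log B) ^ 4 * (1 + Real.log D) / D) := by gcongr
      _ = |H| * (K * (1 + Real.log B) ^ 4 * ((1 + Real.log D) / D)) := by ring
      _ ≤ |H| * (K * (1 + Real.log B) ^ 4 * (5 * D ^ (-(3 / 4) : ℝ))) := by gcongr
      _ = _ := by ring
  refine (Finset.sum_le_sum (fun c _ => key c)).trans ?_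
  rw [← Finset.mul_sum, ← prod_expand (Pr ⌊B⌋₊) (fun p S => |hloc p S| * ((p : ℝ) ^ (-(3 / 4) : ℝ)) ^ S.card)]
  have h3 : ∏ p ∈ Pr ⌊B⌋₊, ∑ S, |hloc p S| * ((p : ℝ) ^ (-(3 / 4) : ℝ)) ^ S.card ≤ C := by
    refine le_trans ?_ (hC' ⌊B⌋₊)
    exact Finset.prod_le_prod (fun p _ => Finset.sum_nonneg (fun S _ => by positivity))
      (fun p hp => hloc_sum p (hP p hp))
  calc _ ≤ K * 5 * (1 + Real.log B) ^ 4 * C := by gcongr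
    _ = _ := by ring

/-! ### The Euler product -/

/-- The count in terms of the main term. -/
lemma NUH_MT : ∃ K : ℝ, 0 < K ∧ ∀ B : ℝ, 1 ≤ B →
    |(NUH B : ℝ) - 2 * B * MT B| ≤ K * B * (1 + Real.log B) ^ 4 := by
  classical
  obtain ⟨K, hK, h⟩ := error_sum
  refine ⟨4 * K, by positivity, fun B hB => ?_⟩
  have hB0 : 0 < B := by linarith
  have hE := h B (Pr ⌊B⌋₊) hB (fun p hp => Pr_prime hp)
  have e1 : ((TorSet B).ncard : ℝ) - B * MT B = ∑ n ∈ box ⌊B⌋₊,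
      if Adm B n then (({y : ℤ | GoodY n y ∧ HtY B n y}).ncard : ℝ) -
        B * phi2 (X3 n / B) (X2 n / B) / (∏ i, (n i : ℝ)) *
          ∏ p ∈ Pr ⌊B⌋₊, (1 - (kap (pat p n) : ℝ) / p) else 0 := by
    rw [ncard_TorSet, MT, Finset.mul_sum, ← Finset.sum_sub_distrib]
    refine Finset.sum_congr rfl (fun n hn => ?_)
    rw [← main_summand B hn]
    split_ifs
    · ring
    · ring
  have e2 : |((TorSet B).ncard : ℝ) - B * MT B| ≤ 2 * (K * B * (1 + Real.log B) ^ 4) := by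
    rw [e1]
    refine (Finset.abs_sum_le_sum_abs _ _).trans ?_
    refine le_trans ?_ (mul_le_mul_of_nonneg_left hE (by norm_num : (0 : ℝ) ≤ 2))
    rw [Finset.mul_sum]
    refine Finset.sum_le_sum (fun n hn => ?_)
    rw [mem_box] at hn
    split_ifs with ha
    · exact count_y B hB0 n (fun i => (hn i).1) ha.1 _ (fun p hp => Pr_prime hp)
        (fun p hp i hd => mem_Pr_of_dvd hp (hn i).1 (hn i).2 hd)
    · simp
  have e3 : (NUH B : ℝ) - 2 * B * MT B = 2 * (((TorSet B).ncard : ℝ) - B * MT B) := by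
    rw [NUH_eq]; push_cast; ring
  rw [e3, abs_mul, abs_two]
  linarith

lemma loc_bounds (p : ℕ) (hp : p.Prime) :
    0 ≤ loc p ∧ loc p ≤ 1 ∧ 1 - 36 * ((p : ℝ) ^ 2)⁻¹ ≤ loc p := by
  have h2 : (2 : ℝ) ≤ p := by exact_mod_cast hp.two_le
  have hp0 : (0 : ℝ) < p := by linarith
  rw [loc]
  set x := 1 / (p : ℝ) with hx
  have hx0 : 0 ≤ x := by positivity
  have hx1 : x ≤ 1 := by rw [hx, div_le_one hp0]; linarith
  rw [show 6 / (p : ℝ) = 6 * x by rw [hx]; ring, show 1 / (p : ℝ) ^ 2 = x ^ 2 by rw [hx]; ring,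
    show ((p : ℝ) ^ 2)⁻¹ = x ^ 2 by rw [hx]; ring]
  have h1 : 0 ≤ (1 - x) ^ 6 := by positivity
  have h3 : 0 ≤ (1 - x) ^ 6 * (1 + 6 * x + x ^ 2) := by positivity
  refine ⟨h3, ?_, ?_⟩
  · have h4 : 1 + 6 * x + x ^ 2 ≤ (1 + x) ^ 6 := by
      have : 0 ≤ 14 * x ^ 2 + 20 * x ^ 3 + 15 * x ^ 4 + 6 * x ^ 5 + x ^ 6 := by positivity
      nlinarith
    calc (1 - x) ^ 6 * (1 + 6 * x + x ^ 2) ≤ (1 - x) ^ 6 * (1 + x) ^ 6 := by gcongr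
      _ = (1 - x ^ 2) ^ 6 := by ring
      _ ≤ 1 := pow_le_one₀ (by nlinarith) (by nlinarith)
  · rcases le_or_gt (6 * x) 1 with h6 | h6
    · have hb : 1 - 6 * x ≤ (1 - x) ^ 6 := by
        have := one_add_mul_le_pow (a := -x) (by linarith) 6
        push_cast at this
        linarith [this, show (1 + -x) ^ 6 = (1 - x) ^ 6 by ring]
      calc 1 - 36 * x ^ 2 = (1 - 6 * x) * (1 + 6 * x) := by ring
        _ ≤ (1 - 6 * x) * (1 + 6 * x + x ^ 2) := by
            apply mul_le_mul_of_nonneg_left _ (by linarith); nlinarith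
        _ ≤ _ := by gcongr
    · nlinarith

/-- The Euler factors, extended by `1` to all natural numbers. -/
noncomputable def locN (n : ℕ) : ℝ := if n.Prime then loc n else 1

lemma locN_bounds (n : ℕ) : 0 ≤ locN n ∧ locN n ≤ 1 ∧ 1 - 36 * ((n : ℝ) ^ 2)⁻¹ ≤ locN n := by
  rw [locN]
  split_ifs with h
  · exact loc_bounds n h
  · refine ⟨zero_le_one, le_rfl, ?_⟩
    have : 0 ≤ ((n : ℝ) ^ 2)⁻¹ := by positivity
    linarith

lemma Pr_prod (N : ℕ) : ∏ p ∈ Pr N, loc p = ∏ n ∈ Finset.Icc 1 N, locN n := by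
  rw [Pr, Finset.prod_filter]; rfl

lemma locN_tprod : ∏' p : {p : ℕ // p.Prime}, loc p.1 = ∏' n, locN n := by
  rw [← Function.Injective.tprod_eq (f := locN) (g := fun p : {p : ℕ // p.Prime} => p.1)
    Subtype.val_injective]
  · refine tprod_congr (fun p => ?_)
    rw [locN, if_pos p.2]
  · intro n hn
    rw [Function.mem_mulSupport] at hn
    by_contra hcon
    apply hn
    rw [locN, if_neg]
    intro hp
    exact hcon ⟨⟨n, hp⟩, rfl⟩

lemma locN_tendsto : Filter.Tendsto (fun N => ∏ n ∈ Finset.Icc 1 N, locN n) Filter.atTop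
    (nhds (∏' n, locN n)) := by
  have hs : Summable (fun n : ℕ => ‖locN n - 1‖) := by
    have h2 : Summable (fun n : ℕ => 36 * ((n : ℝ) ^ 2)⁻¹) :=
      (Real.summable_nat_pow_inv.2 (by norm_num)).mul_left _
    refine Summable.of_nonneg_of_le (fun n => norm_nonneg _) (fun n => ?_) h2
    obtain ⟨h0, h1, h3⟩ := locN_bounds n
    rw [Real.norm_eq_abs, abs_of_nonpos (by linarith)]; linarith
  have hm : Multipliable locN := by
    have := multipliable_one_add_of_summable hs
    simpa using this
  have h := (hm.hasProd.tendsto_prod_nat).comp (Filter.tendsto_add_atTop_nat 1)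
  refine h.congr (fun N => ?_)
  rw [Function.comp, Finset.range_eq_Ico, Finset.prod_eq_prod_Ico_succ_bot (by omega)]
  have : locN 0 = 1 := by rw [locN, if_neg (by norm_num)]
  rw [this, one_mul]
  rfl

lemma one_sub_prod_le (s : Finset ℕ) (f : ℕ → ℝ) (h0 : ∀ n, 0 ≤ f n) (h1 : ∀ n, f n ≤ 1) :
    1 - ∑ n ∈ s, (1 - f n) ≤ ∏ n ∈ s, f n := by
  classical
  induction s using Finset.induction_on with
  | empty => simp
  | insert a s ha ih =>
    rw [Finset.sum_insert ha, Finset.prod_insert ha]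
    have hp : ∏ n ∈ s, f n ≤ 1 := Finset.prod_le_one (fun n _ => h0 n) (fun n _ => h1 n)
    nlinarith [h0 a, h1 a]

/-- Truncation of the Euler product. -/
lemma euler_tail (N : ℕ) (hN : 1 ≤ N) :
    |∏ p ∈ Pr N, loc p - ∏' p : {p : ℕ // p.Prime}, loc p.1| ≤ 36 / N := by
  rw [locN_tprod, Pr_prod]
  have ht : Filter.Tendsto (fun M => |∏ n ∈ Finset.Icc 1 N, locN n - ∏ n ∈ Finset.Icc 1 M, locN n|)
      Filter.atTop (nhds |∏ n ∈ Finset.Icc 1 N, locN n - ∏' n, locN n|) :=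
    (tendsto_const_nhds.sub locN_tendsto).abs
  refine le_of_tendsto ht ?_
  filter_upwards [Filter.eventually_ge_atTop N] with M hM
  have hsplit : ∏ n ∈ Finset.Icc 1 M, locN n =
      (∏ n ∈ Finset.Icc 1 N, locN n) * ∏ n ∈ Finset.Ioc N M, locN n := by
    rw [← Finset.prod_union]
    · congr 1
      ext n; simp only [Finset.mem_union, Finset.mem_Icc, Finset.mem_Ioc]; omega
    · rw [Finset.disjoint_left]
      intro n h1 h2
      rw [Finset.mem_Icc] at h1
      rw [Finset.mem_Ioc] at h2
      omega
  have a0 : 0 ≤ ∏ n ∈ Finset.Icc 1 N, locN n := Finset.prod_nonneg (fun n _ => (locN_bounds n).1)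
  have a1 : ∏ n ∈ Finset.Icc 1 N, locN n ≤ 1 :=
    Finset.prod_le_one (fun n _ => (locN_bounds n).1) (fun n _ => (locN_bounds n).2.1)
  have b1 : ∏ n ∈ Finset.Ioc N M, locN n ≤ 1 :=
    Finset.prod_le_one (fun n _ => (locN_bounds n).1) (fun n _ => (locN_bounds n).2.1)
  have b2 : 1 - ∏ n ∈ Finset.Ioc N M, locN n ≤ 36 / N := by
    have h1 := one_sub_prod_le (Finset.Ioc N M) locN (fun n => (locN_bounds n).1)
      (fun n => (locN_bounds n).2.1)
    have h2 : ∑ n ∈ Finset.Ioc N M, (1 - locN n) ≤ ∑ n ∈ Finset.Ioc N M, 36 * ((n : ℝ) ^ 2)⁻¹ :=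
      Finset.sum_le_sum (fun n _ => by linarith [(locN_bounds n).2.2])
    have h3 := sum_Ioc_inv_sq_le_sub (α := ℝ) (k := N) (n := M) (by omega) hM
    rw [← Finset.mul_sum] at h2
    have h4 : (0 : ℝ) ≤ (M : ℝ)⁻¹ := by positivity
    rw [div_eq_mul_inv]
    linarith
  rw [hsplit, abs_of_nonneg (by nlinarith)]
  nlinarith

/-- The asymptotic formula with the constant `Wc`. -/
lemma NUH_Wc : ∃ K : ℝ, 0 < K ∧ ∀ B : ℝ, 1 ≤ B →
    |(NUH B : ℝ) - 2 * B * (Wc * (Real.log B ^ 5 / 4320) *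
      ∏' p : {p : ℕ // p.Prime}, loc p.1)| ≤ K * B * (1 + Real.log B) ^ 4 := by
  obtain ⟨K₁, hK₁, h₁⟩ := NUH_MT
  obtain ⟨K₂, hK₂, h₂⟩ := MT_asymp
  refine ⟨K₁ + 2 * K₂ + Wc, by linarith [Wc_nonneg], fun B hB => ?_⟩
  have hB0 : 0 < B := by linarith
  have hL := Real.log_nonneg hB
  have g1 := h₁ B hB
  have g2 := h₂ B hB
  have hN : 1 ≤ ⌊B⌋₊ := Nat.le_floor (by exact_mod_cast hB)
  have g3 := euler_tail ⌊B⌋₊ hN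
  set T := ∏' p : {p : ℕ // p.Prime}, loc p.1
  set Q := ∏ p ∈ Pr ⌊B⌋₊, loc p
  set L := Real.log B with hLdef
  have hLB : L ≤ B := by
    have := Real.log_le_sub_one_of_pos hB0
    linarith
  have hfl : B ≤ 2 * (⌊B⌋₊ : ℝ) := by
    have := Nat.lt_floor_add_one B
    have h1 : (1 : ℝ) ≤ ⌊B⌋₊ := by exact_mod_cast hN
    linarith
  have g4 : |Q - T| ≤ 72 / B := by
    refine g3.trans ?_
    rw [div_le_div_iff₀ (by exact_mod_cast hN) hB0]
    linarith
  have g5 : |2 * B * (Wc * (L ^ 5 / 4320) * (Q - T))| ≤ Wc * B * (1 + L) ^ 4 := by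
    have hW := Wc_nonneg
    rw [abs_mul, abs_mul (Wc * (L ^ 5 / 4320)), abs_of_nonneg (by positivity : 0 ≤ 2 * B),
      abs_of_nonneg (by positivity : 0 ≤ Wc * (L ^ 5 / 4320))]
    calc 2 * B * (Wc * (L ^ 5 / 4320) * |Q - T|) ≤ 2 * B * (Wc * (L ^ 5 / 4320) * (72 / B)) := by
          gcongr
      _ = Wc * (L * L ^ 4) * (144 / 4320) := by field_simp; ring
      _ ≤ Wc * (B * (1 + L) ^ 4) * 1 := by
          gcongr
          · linarith
          · norm_num
      _ = _ := by ring
  have e : (NUH B : ℝ) - 2 * B * (Wc * (L ^ 5 / 4320) * T) =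
      ((NUH B : ℝ) - 2 * B * MT B) + 2 * B * (MT B - Wc * (L ^ 5 / 4320) * Q) +
        2 * B * (Wc * (L ^ 5 / 4320) * (Q - T)) := by ring
  rw [e]
  refine (abs_add_three _ _ _).trans ?_
  have g6 : |2 * B * (MT B - Wc * (L ^ 5 / 4320) * Q)| ≤ 2 * B * (K₂ * (1 + L) ^ 4) := by
    rw [abs_mul, abs_of_nonneg (by positivity : 0 ≤ 2 * B)]
    gcongr
  linarith

/-! ### The archimedean density -/

lemma lintegral_fin3 (F : (Fin 3 → ℝ) → ENNReal) (hF : Measurable F) :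
    ∫⁻ x, F x = ∫⁻ a : ℝ, ∫⁻ b : ℝ, ∫⁻ c : ℝ, F ![c, a, b] := by
  have h1 := (volume_preserving_piFinSuccAbove (fun _ : Fin 3 => ℝ) 0).symm
  have h2 := (volume_preserving_finTwoArrow ℝ).symm
  have hm : Measurable (fun z : (ℝ × ℝ) × ℝ => F ![z.2, z.1.1, z.1.2]) := by
    refine hF.comp (measurable_pi_lambda _ (fun i => ?_))
    fin_cases i
    · exact measurable_snd
    · exact measurable_fst.fst
    · exact measurable_fst.snd
  rw [← h1.lintegral_comp_emb (MeasurableEquiv.measurableEmbedding _) F, Measure.volume_eq_prod,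
    lintegral_prod_symm' (fun z => F ((MeasurableEquiv.piFinSuccAbove (fun _ : Fin 3 => ℝ) 0).symm z))
      (hF.comp (MeasurableEquiv.measurable _)),
    ← h2.lintegral_comp_emb (MeasurableEquiv.measurableEmbedding _), Measure.volume_eq_prod]
  have e : ∀ (z : ℝ × ℝ) (c : ℝ),
      F ((MeasurableEquiv.piFinSuccAbove (fun _ : Fin 3 => ℝ) 0).symm
        (c, MeasurableEquiv.finTwoArrow.symm z)) = F ![c, z.1, z.2] := by
    intro z c
    congr 1
    funext i
    fin_cases i <;> rfl
  simp_rw [e]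
  rw [lintegral_prod _ hm.lintegral_prod_right'.aemeasurable]

lemma lintegral_scale (g : ℝ → ENNReal) (c : ℝ) (hc : c ≠ 0) :
    ∫⁻ x in (fun t => c * t) '' Set.Ioc 0 1, g x =
      ∫⁻ t in Set.Ioc (0 : ℝ) 1, ENNReal.ofReal |c| * g (c * t) := by
  refine lintegral_image_eq_lintegral_abs_deriv_mul measurableSet_Ioc (f' := fun _ => c) (fun x _ => ?_) ?_ g
  · have := ((hasDerivAt_id x).const_mul c).hasDerivWithinAt (s := Set.Ioc 0 1)
    simpa using this
  · exact fun x _ y _ h => mul_left_cancel₀ hc h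

lemma lintegral_square (g : ℝ → ENNReal) :
    ∫⁻ x in Set.Ioc (0 : ℝ) 1, g x =
      ∫⁻ t in Set.Ioc (0 : ℝ) 1, ENNReal.ofReal |2 * t| * g (t ^ 2) := by
  have himg : (fun t : ℝ => t ^ 2) '' Set.Ioc 0 1 = Set.Ioc 0 1 := by
    ext x
    constructor
    · rintro ⟨t, ⟨h0, h1⟩, rfl⟩
      exact ⟨by positivity, by dsimp only; nlinarith⟩
    · rintro ⟨h0, h1⟩
      exact ⟨√x, ⟨Real.sqrt_pos.2 h0, Real.sqrt_le_one.2 h1⟩, Real.sq_sqrt h0.le⟩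
  conv_lhs => rw [← himg]
  refine lintegral_image_eq_lintegral_abs_deriv_mul measurableSet_Ioc (f' := fun t => 2 * t) (fun x _ => ?_) ?_ g
  · have := (hasDerivAt_pow 2 x).hasDerivWithinAt (s := Set.Ioc 0 1)
    simpa using this
  · intro x hx y hy h
    exact (sq_eq_sq₀ hx.1.le hy.1.le).1 h

lemma phi2_measurable : Measurable (fun z : ℝ × ℝ => phi2 z.1 z.2) := by
  have hs : MeasurableSet {w : (ℝ × ℝ) × ℝ | |w.2| ≤ 1 ∧ |w.2 * (w.2 + w.1.1)| ≤ w.1.2} := by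
    rw [Set.ofPred_and]
    exact (measurableSet_le (by fun_prop) (by fun_prop)).inter
      (measurableSet_le (by fun_prop) (by fun_prop))
  exact (measurable_measure_prodMk_left (ν := (volume : Measure ℝ)) hs).ennreal_toReal

/-- The integrand of `ω_∞`, extended by zero. -/
noncomputable def omF (x : Fin 3 → ℝ) : ENNReal :=
  omegaSet.indicator (fun x => ENNReal.ofReal ((x 1 * |x 2|)⁻¹)) x

lemma omegaSet_meas : MeasurableSet omegaSet := by
  rw [omegaSet]
  simp only [Set.ofPred_and]
  repeat' apply MeasurableSet.inter
  all_goals exact measurableSet_le (by fun_prop) (by fun_prop)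

lemma omF_meas : Measurable omF := by
  refine Measurable.indicator ?_ omegaSet_meas
  fun_prop

lemma omegaInf_eq : omegaInf = (∫⁻ x, omF x).toReal := by
  rw [omegaInf, integral_eq_lintegral_of_nonneg_ae]
  · congr 1
    exact (lintegral_indicator omegaSet_meas _).symm
  · refine (ae_restrict_iff' omegaSet_meas).2 (Filter.Eventually.of_forall (fun x hx => ?_))
    have := hx.1
    simp only [Pi.zero_apply]
    positivity
  · exact Measurable.aestronglyMeasurable (by fun_prop)

/-- The integral over `x₀`. -/
lemma omF_inner (a b : ℝ) (ha : 0 < a) :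
    ∫⁻ c, omF ![c, a, b] = if a ≤ 1 ∧ b ^ 2 ≤ a then
      ENNReal.ofReal (phi2 (b ^ 2 / a) |b| / (a * |b|)) else 0 := by
  split_ifs with h
  · have hb : |b| ≤ 1 := by
      rw [← sq_le_one_iff_abs_le_one]; linarith [h.1, h.2]
    have hO : MeasurableSet (Om 1 (b ^ 2 / a) |b|) := by
      rw [Om, Set.ofPred_and]
      exact (measurableSet_le (by fun_prop) (by fun_prop)).inter
        (measurableSet_le (by fun_prop) (by fun_prop))
    have e : ∀ c, omF ![c, a, b] =
        (Om 1 (b ^ 2 / a) |b|).indicator (fun _ => ENNReal.ofReal ((a * |b|)⁻¹)) c := by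
      intro c
      have hiff : ![c, a, b] ∈ omegaSet ↔ c ∈ Om 1 (b ^ 2 / a) |b| := by
        have e1 : c ^ 2 * a + c * b ^ 2 = a * (c * (c + b ^ 2 / a)) := by field_simp
        simp only [omegaSet, Om, Set.mem_ofPred_eq, Matrix.cons_val]
        rw [e1, abs_mul, abs_of_pos ha, mul_le_mul_iff_right₀ ha]
        constructor
        · rintro ⟨-, -, h3, -, -, h6⟩; exact ⟨h3, h6⟩
        · rintro ⟨h3, h6⟩; exact ⟨ha.le, h.1, h3, hb, h.2, h6⟩
      rw [omF]
      by_cases hc : c ∈ Om 1 (b ^ 2 / a) |b|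
      · rw [Set.indicator_of_mem hc, Set.indicator_of_mem (hiff.2 hc)]
        simp
      · rw [Set.indicator_of_notMem hc, Set.indicator_of_notMem (fun h => hc (hiff.1 h))]
    simp_rw [e]
    rw [lintegral_indicator hO, setLIntegral_const, phi2, div_eq_inv_mul _ (a * |b|),
      ENNReal.ofReal_mul (by positivity), ENNReal.ofReal_toReal (vol_Om_ne_top _ _ _)]
  · rw [lintegral_eq_zero_iff (by
      refine omF_meas.comp (measurable_pi_lambda _ (fun i => ?_))
      fin_cases i
      · exact measurable_id
      · exact measurable_const
      · exact measurable_const)]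
    refine Filter.Eventually.of_forall (fun c => ?_)
    refine Set.indicator_of_notMem (fun hc => h ?_) _
    simp only [omegaSet, Set.mem_ofPred_eq, Matrix.cons_val] at hc
    exact ⟨hc.2.1, hc.2.2.2.2.1⟩

lemma omF_inner_nonpos (a b : ℝ) (ha : a ≤ 0) : ∫⁻ c, omF ![c, a, b] = 0 := by
  have : ∀ c, omF ![c, a, b] = 0 := by
    intro c
    rw [omF]
    by_cases hc : ![c, a, b] ∈ omegaSet
    · have h0 : 0 ≤ a := hc.1
      have : a = 0 := le_antisymm ha h0
      rw [Set.indicator_of_mem hc]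
      simp [this]
    · rw [Set.indicator_of_notMem hc]
  simp [this]

/-- The integral over `x₀` and `x₂`, for `x₁ = a`; the factor `2` accounts for the sign of `x₂`. -/
lemma omF_inner2 (a : ℝ) (ha : 0 < a) (ha1 : a ≤ 1) :
    ∫⁻ b, ∫⁻ c, omF ![c, a, b] =
      2 * ∫⁻ t in Set.Ioc (0 : ℝ) 1, ENNReal.ofReal (ph √a t / (a * t)) := by
  set g : ℝ → ENNReal := fun b => ENNReal.ofReal (phi2 (b ^ 2 / a) |b| / (a * |b|)) with hg
  set r := √a with hr
  have hr0 : 0 < r := Real.sqrt_pos.2 ha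
  have hrr : r ^ 2 = a := Real.sq_sqrt ha.le
  set s₁ := (fun t : ℝ => r * t) '' Set.Ioc 0 1
  set s₂ := (fun t : ℝ => (-r) * t) '' Set.Ioc 0 1
  have m₁ : MeasurableSet s₁ := by
    have : s₁ = Set.Ioc 0 r := by
      ext x
      constructor
      · rintro ⟨t, ⟨h0, h1⟩, rfl⟩
        exact ⟨by positivity, by dsimp only; nlinarith⟩
      · rintro ⟨h0, h1⟩
        exact ⟨x / r, ⟨by positivity, by rw [div_le_one hr0]; exact h1⟩, by field_simp⟩
    rw [this]; exact measurableSet_Ioc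
  have m₂ : MeasurableSet s₂ := by
    have : s₂ = Set.Ico (-r) 0 := by
      ext x
      constructor
      · rintro ⟨t, ⟨h0, h1⟩, rfl⟩
        exact ⟨by dsimp only; nlinarith, by dsimp only; nlinarith⟩
      · rintro ⟨h0, h1⟩
        refine ⟨-x / r, ⟨div_pos (by linarith) hr0, by rw [div_le_one hr0]; linarith⟩, by field_simp⟩
    rw [this]; exact measurableSet_Ico
  have hdis : Disjoint s₁ s₂ := by
    rw [Set.disjoint_left]
    rintro x ⟨t, ht, rfl⟩ ⟨u, hu, h⟩
    have h1 := mul_pos hr0 ht.1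
    have h2 := mul_pos hr0 hu.1
    dsimp only at h
    linarith
  have e1 : ∀ b, ∫⁻ c, omF ![c, a, b] = (s₁ ∪ s₂).indicator g b := by
    intro b
    rw [omF_inner a b ha]
    by_cases hb : b ∈ s₁ ∪ s₂
    · rw [Set.indicator_of_mem hb, if_pos]
      refine ⟨ha1, ?_⟩
      rcases hb with ⟨t, ht, rfl⟩ | ⟨t, ht, rfl⟩
      · dsimp only; rw [mul_pow, hrr]; exact mul_le_of_le_one_right ha.le (pow_le_one₀ ht.1.le ht.2)
      · dsimp only; rw [mul_pow, neg_sq, hrr]; exact mul_le_of_le_one_right ha.le (pow_le_one₀ ht.1.le ht.2)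
    · rw [Set.indicator_of_notMem hb]
      split_ifs with h
      · have hb0 : b = 0 := by
          by_contra hne
          apply hb
          have habs : |b| ≤ r := Real.abs_le_sqrt h.2
          rcases lt_or_gt_of_ne hne with hn | hp
          · right
            rw [abs_of_neg hn] at habs
            exact ⟨-b / r, ⟨div_pos (by linarith) hr0, by rw [div_le_one hr0]; linarith⟩, by field_simp⟩
          · left
            rw [abs_of_pos hp] at habs
            exact ⟨b / r, ⟨by positivity, by rw [div_le_one hr0]; exact habs⟩, by field_simp⟩
        simp [hb0]
      · rfl
  simp_rw [e1]
  rw [lintegral_indicator (m₁.union m₂), lintegral_union m₂ hdis, lintegral_scale g r hr0.ne',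
    lintegral_scale g (-r) (by linarith), two_mul]
  have key : ∀ t ∈ Set.Ioc (0 : ℝ) 1, ∀ ε : ℝ, |ε| = r →
      ENNReal.ofReal |ε| * g (ε * t) = ENNReal.ofReal (ph r t / (a * t)) := by
    intro t ht ε hε
    have h2 : (ε * t) ^ 2 / a = t ^ 2 := by
      rw [mul_pow, ← sq_abs ε, hε, hrr]; field_simp
    have h3 : |ε * t| = r * t := by rw [abs_mul, hε, abs_of_pos ht.1]
    rw [hg]
    dsimp only
    rw [h2, h3, hε, ← ENNReal.ofReal_mul hr0.le, ph]
    congr 1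
    have := ht.1.ne'
    field_simp
  congr 1
  · exact setLIntegral_congr_fun measurableSet_Ioc (fun t ht => key t ht r (abs_of_pos hr0))
  · exact setLIntegral_congr_fun measurableSet_Ioc
      (fun t ht => key t ht (-r) (by rw [abs_neg, abs_of_pos hr0]))

set_option maxHeartbeats 1000000 in
/-- Tonelli, integrating over `x₀` first, and the substitution `x₁ = σ²`, `x₂ = ± σ τ`. -/
lemma omF_total : ∫⁻ x, omF x = ENNReal.ofReal (4 * Wc) := by
  have hI := measurableSet_Ioc (a := (0 : ℝ)) (b := 1)
  rw [lintegral_fin3 _ omF_meas]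
  have e1 : ∀ a, ∫⁻ b, ∫⁻ c, omF ![c, a, b] = (Set.Ioc (0 : ℝ) 1).indicator
      (fun a => 2 * ∫⁻ t in Set.Ioc (0 : ℝ) 1, ENNReal.ofReal (ph √a t / (a * t))) a := by
    intro a
    by_cases h : a ∈ Set.Ioc (0 : ℝ) 1
    · rw [Set.indicator_of_mem h, omF_inner2 a h.1 h.2]
    · rw [Set.indicator_of_notMem h]
      rcases le_or_gt a 0 with h0 | h0
      · simp [omF_inner_nonpos a _ h0]
      · have : ¬ a ≤ 1 := fun h1 => h ⟨h0, h1⟩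
        simp [omF_inner a _ h0, this]
  simp_rw [e1]
  rw [lintegral_indicator hI, lintegral_square]
  have hph : Measurable (fun z : ℝ × ℝ => ph z.1 z.2) :=
    phi2_measurable.comp (by fun_prop : Measurable (fun z : ℝ × ℝ => (z.2 ^ 2, z.1 * z.2)))
  have hm : Measurable (Function.uncurry (fun s t : ℝ => ENNReal.ofReal (ph s t / (s * t)))) :=
    (hph.div (by fun_prop)).ennreal_ofReal
  have e2 : ∀ s ∈ Set.Ioc (0 : ℝ) 1,
      ENNReal.ofReal |2 * s| * (2 * ∫⁻ t in Set.Ioc (0 : ℝ) 1, ENNReal.ofReal (ph √(s ^ 2) t / (s ^ 2 * t))) =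
      4 * ∫⁻ t in Set.Ioc (0 : ℝ) 1, ENNReal.ofReal (ph s t / (s * t)) := by
    intro s hs
    rw [Real.sqrt_sq hs.1.le, abs_of_pos (by linarith [hs.1])]
    have e3 : ∀ t : ℝ, ENNReal.ofReal (ph s t / (s * t)) =
        ENNReal.ofReal s * ENNReal.ofReal (ph s t / (s ^ 2 * t)) := by
      intro t
      rw [← ENNReal.ofReal_mul hs.1.le]
      congr 1
      have := hs.1.ne'
      rcases eq_or_ne t 0 with rfl | ht
      · simp
      · field_simp
    simp_rw [e3]
    rw [lintegral_const_mul' _ _ ENNReal.ofReal_ne_top, ENNReal.ofReal_mul (by norm_num)]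
    rw [show ENNReal.ofReal 2 = 2 by norm_num]
    ring
  rw [setLIntegral_congr_fun hI e2, lintegral_const_mul' _ _ (by norm_num),
    lintegral_lintegral_swap hm.aemeasurable]
  have e4 : ∀ t ∈ Set.Ioc (0 : ℝ) 1,
      ∫⁻ s in Set.Ioc (0 : ℝ) 1, ENNReal.ofReal (ph s t / (s * t)) = ENNReal.ofReal (Phi t / t) := by
    intro t ht
    have h1 := ((phq_int t ht.1.le).div_const t).1
    have h2 : Phi t / t = ∫ s in Set.Ioc (0 : ℝ) 1, ph s t / s / t := by
      rw [Phi, intervalIntegral.integral_of_le zero_le_one, integral_div]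
    rw [h2, ofReal_integral_eq_lintegral_ofReal h1]
    · simp_rw [div_div]
    · exact (ae_restrict_iff' hI).2 (Filter.Eventually.of_forall (fun s hs =>
        div_nonneg (phq_nonneg t s hs.1 hs.2) ht.1.le))
  rw [setLIntegral_congr_fun hI e4, ENNReal.ofReal_mul (by norm_num), Wc,
    intervalIntegral.integral_of_le zero_le_one, ofReal_integral_eq_lintegral_ofReal Phiq_int.1]
  · norm_num
  · exact (ae_restrict_iff' hI).2 (Filter.Eventually.of_forall (fun s hs =>
      div_nonneg (Phi_nonneg s) hs.1.le))

lemma omegaInf_Wc : omegaInf = 4 * Wc := by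
  have hW : 0 ≤ Wc := by
    rw [Wc, intervalIntegral.integral_of_le zero_le_one]
    exact setIntegral_nonneg measurableSet_Ioc (fun t ht => div_nonneg (Phi_nonneg t) ht.1.le)
  rw [omegaInf_eq, omF_total, ENNReal.toReal_ofReal (by linarith)]

/-! ### The asymptotic formula -/

/-- Manin's conjecture for the quartic del Pezzo surface of type `A₃ + A₁`:
`N(B) = (1/8640) (∏_p (1-1/p)⁶(1 + 6/p + 1/p²)) ω_∞ B (log B)⁵
        + O(B (log B)⁴ (log log B)²)`. -/
theorem manin_quartic_A3A1 :
    ∃ K : ℝ, 0 < K ∧ ∀ B : ℝ, 3 ≤ B →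
      |(NUH B : ℝ) -
          (1 / 8640) * (∏' p : {p : ℕ // p.Prime},
            (1 - 1 / (p.1 : ℝ)) ^ 6 * (1 + 6 / (p.1 : ℝ) + 1 / (p.1 : ℝ) ^ 2)) *
            omegaInf * B * Real.log B ^ 5| ≤
        K * B * Real.log B ^ 4 * Real.log (Real.log B) ^ 2 := by
  obtain ⟨K, hK, h⟩ := NUH_Wc
  -- `log 3 > 1`, so `log log B` is bounded below by a positive constant for `B ≥ 3`.
  have h3 : 1 < Real.log 3 := by
    rw [Real.lt_log_iff_exp_lt (by norm_num)]
    exact Real.exp_one_lt_d9.trans (by norm_num)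
  have hc : 0 < Real.log (Real.log 3) := Real.log_pos h3
  refine ⟨16 * K / Real.log (Real.log 3) ^ 2, by positivity, fun B hB => ?_⟩
  have hL : Real.log 3 ≤ Real.log B := Real.log_le_log (by norm_num) hB
  have hLL : Real.log (Real.log 3) ≤ Real.log (Real.log B) := Real.log_le_log (by linarith) hL
  have hm := h B (by linarith)
  have hT : (∏' p : {p : ℕ // p.Prime},
      (1 - 1 / (p.1 : ℝ)) ^ 6 * (1 + 6 / (p.1 : ℝ) + 1 / (p.1 : ℝ) ^ 2)) =
      ∏' p : {p : ℕ // p.Prime}, loc p.1 := rfl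
  rw [hT, omegaInf_Wc]
  set T := ∏' p : {p : ℕ // p.Prime}, loc p.1
  rw [show 1 / 8640 * T * (4 * Wc) * B * Real.log B ^ 5 =
    2 * B * (Wc * (Real.log B ^ 5 / 4320) * T) by ring]
  refine hm.trans ?_
  have hB0 : 0 < B := by linarith
  have hL0 : 0 < Real.log B := by linarith
  calc K * B * (1 + Real.log B) ^ 4 ≤ K * B * (2 * Real.log B) ^ 4 := by
        gcongr; linarith
    _ = 16 * K / Real.log (Real.log 3) ^ 2 * B * Real.log B ^ 4 * Real.log (Real.log 3) ^ 2 := by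
        field_simp; norm_num
    _ ≤ _ := by gcongr
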